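/- arXiv:1210.3488 — 2 statements merged into one kernel-verified Lean document; each statement's English description precedes it below -/
import Mathlib

section
/- Let G = [A M; N B] and G' = [A' M'; N' B'] be generalized matrix algebras over a commutative ring R with 1/2 ∈ R, and let l : G → G' be a Lie isomorphism. Suppose that (1) every commuting R-linear map on A' is proper, or every commuting R-linear map on B' is proper; (2) π_{A'}(Z(G')) = Z(A') ≠ A' and π_{B'}(Z(G')) = Z(B') ≠ B'; (3) at least one of A, B is noncommutative; and (4) M' is loyal. Then l = m + n, where m : G → G' is an injective algebra homomorphism or the negative of an injective algebra anti-homomorphism, and n : G → Z(G') is an R-linear map with n([x, y]) = 0 for all x, y ∈ G. Moreover, if Z(G') = R·1, then m is surjective. -/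
/-- A realization of the `R`-algebra `G` as a generalized matrix algebra
`[A M; N B]` arising from a Morita context `(A, B, M, N, Φ, Ψ)`:
`G` decomposes `R`-linearly as `A ⊕ M ⊕ N ⊕ B` (via the injections `ιA, ιM, ιN, ιB`
and the projections `pA, pM, pN, pB`), and multiplication in `G` follows the
matrix-like multiplication rules.  The bimodule actions of `A` and `B` on `M` and `N`
and the pairings `Φ : M ⊗ N → A`, `Ψ : N ⊗ M → B` are recovered from the
multiplication of `G`; the requirement that the corresponding products land in the
appropriate corner is expressed by the `mul_*` fields.  The standing assumption that
`M` is faithful as a left `A`-module and as a right `B`-module is included. -/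
structure GMA (R A B M N G : Type*) [CommRing R]
    [Ring A] [Algebra R A] [Ring B] [Algebra R B]
    [AddCommGroup M] [Module R M] [AddCommGroup N] [Module R N]
    [Ring G] [Algebra R G] where
  ιA : A →ₗ[R] G
  ιB : B →ₗ[R] G
  ιM : M →ₗ[R] G
  ιN : N →ₗ[R] G
  pA : G →ₗ[R] A
  pB : G →ₗ[R] B
  pM : G →ₗ[R] M
  pN : G →ₗ[R] N
  decomp : ∀ g : G, g = ιA (pA g) + ιM (pM g) + ιN (pN g) + ιB (pB g)
  pA_ιA : ∀ a, pA (ιA a) = a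
  pA_ιM : ∀ m, pA (ιM m) = 0
  pA_ιN : ∀ n, pA (ιN n) = 0
  pA_ιB : ∀ b, pA (ιB b) = 0
  pM_ιA : ∀ a, pM (ιA a) = 0
  pM_ιM : ∀ m, pM (ιM m) = m
  pM_ιN : ∀ n, pM (ιN n) = 0
  pM_ιB : ∀ b, pM (ιB b) = 0
  pN_ιA : ∀ a, pN (ιA a) = 0
  pN_ιM : ∀ m, pN (ιM m) = 0
  pN_ιN : ∀ n, pN (ιN n) = n
  pN_ιB : ∀ b, pN (ιB b) = 0
  pB_ιA : ∀ a, pB (ιA a) = 0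
  pB_ιM : ∀ m, pB (ιM m) = 0
  pB_ιN : ∀ n, pB (ιN n) = 0
  pB_ιB : ∀ b, pB (ιB b) = b
  one_def : (1 : G) = ιA 1 + ιB 1
  mul_AA : ∀ a a', ιA a * ιA a' = ιA (a * a')
  mul_BB : ∀ b b', ιB b * ιB b' = ιB (b * b')
  mul_AM : ∀ a m, ιA a * ιM m ∈ LinearMap.range ιM
  mul_MB : ∀ m b, ιM m * ιB b ∈ LinearMap.range ιM
  mul_BN : ∀ b n, ιB b * ιN n ∈ LinearMap.range ιN
  mul_NA : ∀ n a, ιN n * ιA a ∈ LinearMap.range ιN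
  mul_MN : ∀ m n, ιM m * ιN n ∈ LinearMap.range ιA
  mul_NM : ∀ n m, ιN n * ιM m ∈ LinearMap.range ιB
  mul_AB : ∀ a b, ιA a * ιB b = 0
  mul_BA : ∀ b a, ιB b * ιA a = 0
  mul_AN : ∀ a n, ιA a * ιN n = 0
  mul_NB : ∀ n b, ιN n * ιB b = 0
  mul_MA : ∀ m a, ιM m * ιA a = 0
  mul_BM : ∀ b m, ιB b * ιM m = 0
  mul_MM : ∀ m m', ιM m * ιM m' = 0
  mul_NN : ∀ n n', ιN n * ιN n' = 0
  faithful_left : ∀ a : A, (∀ m : M, ιA a * ιM m = 0) → a = 0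
  faithful_right : ∀ b : B, (∀ m : M, ιM m * ιB b = 0) → b = 0


namespace LieGMA

section basics
variable {P : Type*} [Ring P]

def Cor (i j x : P) : Prop := i * x = x ∧ x * j = x

structure Loy (e f : P) : Prop where
  ee : e * e = e
  ff : f * f = f
  ef : e * f = 0
  fe : f * e = 0
  sum : e + f = 1
  loyal : ∀ a b, Cor e e a → Cor f f b → (∀ m, Cor e f m → a * m * b = 0) → a = 0 ∨ b = 0
  cenA : ∀ a, Cor e e a → (∀ x, Cor e e x → a * x = x * a) → ∃ z ∈ Subring.center P, e * z = a
  cenB : ∀ b, Cor f f b → (∀ x, Cor f f x → b * x = x * b) → ∃ z ∈ Subring.center P, f * z = b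
  ncA : ∃ a a', Cor e e a ∧ Cor e e a' ∧ a * a' - a' * a ≠ 0
  ncB : ∃ b b', Cor f f b ∧ Cor f f b' ∧ b * b' - b' * b ≠ 0

theorem Cor.mul {i j k x y : P} (hx : Cor i j x) (hy : Cor j k y) : Cor i k (x * y) :=
  ⟨by rw [← mul_assoc, hx.1], by rw [mul_assoc, hy.2]⟩
theorem Cor.add {i j x y : P} (hx : Cor i j x) (hy : Cor i j y) : Cor i j (x + y) :=
  ⟨by rw [mul_add, hx.1, hy.1], by rw [add_mul, hx.2, hy.2]⟩
theorem Cor.sub {i j x y : P} (hx : Cor i j x) (hy : Cor i j y) : Cor i j (x - y) :=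
  ⟨by rw [mul_sub, hx.1, hy.1], by rw [sub_mul, hx.2, hy.2]⟩
theorem Cor.neg {i j x : P} (hx : Cor i j x) : Cor i j (-x) :=
  ⟨by rw [mul_neg, hx.1], by rw [neg_mul, hx.2]⟩
theorem Cor.zmul {i j x z : P} (hz : z ∈ Subring.center P) (hx : Cor i j x) : Cor i j (z * x) :=
  ⟨by rw [← mul_assoc, Subring.mem_center_iff.1 hz, mul_assoc, hx.1], by rw [mul_assoc, hx.2]⟩
theorem Cor.left0 {i i' j x : P} (h : i' * i = 0) (hx : Cor i j x) : i' * x = 0 := by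
  rw [← hx.1, ← mul_assoc, h, zero_mul]
theorem Cor.right0 {i j j' x : P} (h : j * j' = 0) (hx : Cor i j x) : x * j' = 0 := by
  rw [← hx.2, mul_assoc, h, mul_zero]
theorem Cor.mul0 {i j j' k x y : P} (h : j * j' = 0) (hx : Cor i j x) (hy : Cor j' k y) :
    x * y = 0 := by
  rw [← hx.2, mul_assoc, hy.left0 h, mul_zero]
theorem Cor.mk {i j : P} (hi : i * i = i) (hj : j * j = j) (x : P) : Cor i j (i * x * j) :=
  ⟨by rw [← mul_assoc, ← mul_assoc, hi], by rw [mul_assoc, hj]⟩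

theorem zcomm {z : P} (hz : z ∈ Subring.center P) (x : P) : x * z = z * x :=
  Subring.mem_center_iff.1 hz x

theorem zlcomm {z : P} (hz : z ∈ Subring.center P) (x y : P) : x * (z * y) = z * (x * y) := by
  rw [← mul_assoc, zcomm hz, mul_assoc]

variable {e f : P}

namespace Loy
variable (H : Loy e f)
include H

theorem ce : Cor e e e := ⟨H.ee, H.ee⟩
theorem cf : Cor f f f := ⟨H.ff, H.ff⟩

theorem f_ne : f ≠ 0 := by
  obtain ⟨b, b', hb, hb', hne⟩ := H.ncB
  rintro rfl
  apply hne
  rw [← hb.1, ← hb'.1]; simp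
theorem e_ne : e ≠ 0 := by
  obtain ⟨b, b', hb, hb', hne⟩ := H.ncA
  rintro rfl
  apply hne
  rw [← hb.1, ← hb'.1]; simp

theorem faithL {a : P} (ha : Cor e e a) (h : ∀ m, Cor e f m → a * m = 0) : a = 0 := by
  rcases H.loyal a f ha H.cf (fun m hm => by rw [h m hm, zero_mul]) with h | h
  · exact h
  · exact absurd h H.f_ne
theorem faithR {b : P} (hb : Cor f f b) (h : ∀ m, Cor e f m → m * b = 0) : b = 0 := by
  rcases H.loyal e b H.ce hb (fun m hm => by rw [hm.1, h m hm]) with h | h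
  · exact absurd h H.e_ne
  · exact h

theorem split (x : P) : x = e * x * e + e * x * f + f * x * e + f * x * f := by
  have : x = (e + f) * x * (e + f) := by rw [H.sum]; simp
  conv_lhs => rw [this]
  noncomm_ring

theorem splitd {x : P} (hx : e * x = x * e) : x = e * x * e + f * x * f := by
  have h1 : e * x * f = 0 := by rw [hx, mul_assoc, H.ef, mul_zero]
  have h2 : f * x * e = 0 := by rw [mul_assoc, ← hx, ← mul_assoc, H.fe, zero_mul]
  have := H.split x
  rw [h1, h2] at this
  simpa using this

theorem zM0 {z : P} (hz : z ∈ Subring.center P) (h : ∀ m, Cor e f m → z * m = 0) : z = 0 := by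
  have h1 : z * e = 0 := H.faithL (H.ce.zmul hz) (fun m hm => by rw [mul_assoc, hm.1, h m hm])
  have h2 : z * f = 0 := H.faithR (H.cf.zmul hz) (fun m hm => by
    rw [zlcomm hz, hm.2, h m hm])
  rw [← mul_one z, ← H.sum, mul_add, h1, h2, add_zero]

theorem tfA {z a : P} (hz : z ∈ Subring.center P) (ha : Cor e e a) (h : z * a = 0) :
    z = 0 ∨ a = 0 := by
  rcases H.loyal a (z * f) ha (H.cf.zmul hz) (fun m hm => by
    rw [zlcomm hz, mul_assoc, hm.2, ← mul_assoc, h, zero_mul]) with h | h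
  · exact Or.inr h
  · left
    apply H.zM0 hz
    intro m hm
    rw [← hm.2, ← zlcomm hz, h, mul_zero]

theorem tfB {z b : P} (hz : z ∈ Subring.center P) (hb : Cor f f b) (h : z * b = 0) :
    z = 0 ∨ b = 0 := by
  rcases H.loyal (z * e) b (H.ce.zmul hz) hb (fun m hm => by
    rw [mul_assoc z, hm.1, ← zcomm hz, mul_assoc, h, mul_zero]) with h | h
  · left
    apply H.zM0 hz
    intro m hm
    rw [← hm.1, ← mul_assoc, h, zero_mul]
  · exact Or.inr h

theorem zdom {z w : P} (hz : z ∈ Subring.center P) (hw : w ∈ Subring.center P) (h : z * w = 0) :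
    z = 0 ∨ w = 0 := by
  rcases H.tfA hz (H.ce.zmul hw) (by rw [← mul_assoc, h, zero_mul]) with h | h
  · exact Or.inl h
  · rcases H.tfA hw H.ce h with h | h
    · exact Or.inr h
    · exact absurd h H.e_ne

theorem zcA {z : P} (hz : z ∈ Subring.center P)
    (h : ∀ a a', Cor e e a → Cor e e a' → z * (a * a' - a' * a) = 0) : z = 0 := by
  obtain ⟨a, a', ha, ha', hne⟩ := H.ncA
  exact (H.tfA hz ((ha.mul ha').sub (ha'.mul ha)) (h a a' ha ha')).resolve_right hne

theorem zcB {z : P} (hz : z ∈ Subring.center P)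
    (h : ∀ a a', Cor f f a → Cor f f a' → z * (a * a' - a' * a) = 0) : z = 0 := by
  obtain ⟨a, a', ha, ha', hne⟩ := H.ncB
  exact (H.tfB hz ((ha.mul ha').sub (ha'.mul ha)) (h a a' ha ha')).resolve_right hne

theorem comA {b : P} (hb : Cor f f b) (h : ∀ a a' : P, Cor e e a → Cor e e a' → ∀ m, Cor e f m →
    (a * a' - a' * a) * m * b = 0) : b = 0 := by
  obtain ⟨a, a', ha, ha', hne⟩ := H.ncA
  exact (H.loyal _ b ((ha.mul ha').sub (ha'.mul ha)) hb (h a a' ha ha')).resolve_left hne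

theorem comB {a : P} (ha : Cor e e a) (h : ∀ b b' : P, Cor f f b → Cor f f b' → ∀ m, Cor e f m →
    a * m * (b * b' - b' * b) = 0) : a = 0 := by
  obtain ⟨b, b', hb, hb', hne⟩ := H.ncB
  exact (H.loyal a _ ha ((hb.mul hb').sub (hb'.mul hb)) (h b b' hb hb')).resolve_right hne

/-- z e central implies z = 0 -/
theorem ze0 {z : P} (hz : z ∈ Subring.center P) (h : z * e ∈ Subring.center P) : z = 0 := by
  apply H.zM0 hz
  intro m hm
  have := zcomm h m
  rw [zlcomm hz, hm.right0 H.fe, mul_assoc, hm.1] at this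
  simpa using this.symm

theorem L1 {D : P} (hD : e * D = D * e) (hB : ∀ b, Cor f f b → D * b = b * D) :
    ∃ z ∈ Subring.center P, ∃ α, Cor e e α ∧ D = z + α := by
  obtain ⟨z, hz, h⟩ := H.cenB (f * D * f) (Cor.mk H.ff H.ff D) (fun x hx => by
    rw [mul_assoc, mul_assoc, hx.1, hB x hx, ← mul_assoc, ← mul_assoc, ← mul_assoc, hx.1, hx.2,
      ← hB x hx, mul_assoc, hx.2])
  refine ⟨z, hz, e * (D - z) * e, Cor.mk H.ee H.ee _, ?_⟩
  have h1 : z = e * z * e + f * z * f := H.splitd (zcomm hz e)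
  have h2 : f * z * f = f * D * f := by rw [h, mul_assoc, H.ff]
  have := H.splitd hD
  calc D = _ := this
    _ = (e * z * e + f * z * f) + e * (D - z) * e := by rw [h2]; noncomm_ring
    _ = _ := by rw [← h1]

theorem L2 {D : P} (hD : e * D = D * e) (hA : ∀ b, Cor e e b → D * b = b * D) :
    ∃ z ∈ Subring.center P, ∃ α, Cor f f α ∧ D = z + α := by
  obtain ⟨z, hz, h⟩ := H.cenA (e * D * e) (Cor.mk H.ee H.ee D) (fun x hx => by
    rw [mul_assoc, mul_assoc, hx.1, hA x hx, ← mul_assoc, ← mul_assoc, ← mul_assoc, hx.1, hx.2,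
      ← hA x hx, mul_assoc, hx.2])
  refine ⟨z, hz, f * (D - z) * f, Cor.mk H.ff H.ff _, ?_⟩
  have h1 : z = e * z * e + f * z * f := H.splitd (zcomm hz e)
  have h2 : e * z * e = e * D * e := by rw [h, mul_assoc, H.ee]
  have := H.splitd hD
  calc D = _ := this
    _ = (e * z * e + f * z * f) + f * (D - z) * f := by rw [h2]; noncomm_ring
    _ = _ := by rw [← h1]

theorem L3 {D : P} (hD : e * D = D * e) (hA : ∀ b, Cor e e b → D * b = b * D)
    (hB : ∀ b, Cor f f b → D * b = b * D) :
    ∃ z ∈ Subring.center P, ∃ w ∈ Subring.center P, D = z + w * e := by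
  obtain ⟨z, hz, α, hα, rfl⟩ := H.L1 hD hB
  obtain ⟨w, hw, h⟩ := H.cenA α hα (fun x hx => by
    have := hA x hx
    rw [add_mul, mul_add, zcomm hz] at this
    exact add_left_cancel this)
  exact ⟨z, hz, w, hw, by rw [← h, zcomm hw]⟩

theorem T0 {β : P → P} (hβ : ∀ m, Cor e f m → Cor f f (β m))
    (h : ∀ y z, Cor e f y → Cor e f z → z * β y + y * β z = 0) :
    ∀ m, Cor e f m → β m = 0 := by
  intro z hz
  have key : ∀ a y, Cor e e a → Cor e f y → y * β (a * z) = a * y * β z := by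
    intro a y ha hy
    have h1 := h y (a * z) hy (ha.mul hz)
    have h2 := congrArg (a * ·) (h y z hy hz)
    simp only [mul_add, mul_zero, ← mul_assoc] at h1 h2
    rw [← sub_eq_zero]
    calc _ = (a * z * β y + y * β (a * z)) - (a * z * β y + a * y * β z) := by abel
      _ = 0 := by rw [h1, h2, sub_zero]
  apply H.comA (hβ z hz)
  intro a a' ha ha' m hm
  have h1 := key a (a' * m) ha (ha'.mul hm)
  have h2 := key a m ha hm
  rw [mul_assoc a', h2] at h1
  rw [sub_mul, sub_mul, sub_eq_zero, mul_assoc a a', ← h1, mul_assoc, mul_assoc, mul_assoc]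

theorem T0' {β : P → P} (hβ : ∀ m, Cor e f m → Cor e e (β m))
    (h : ∀ y z, Cor e f y → Cor e f z → β y * z + β z * y = 0) :
    ∀ m, Cor e f m → β m = 0 := by
  intro z hz
  have key : ∀ a y, Cor f f a → Cor e f y → β (z * a) * y = β z * y * a := by
    intro a y ha hy
    have h1 := h y (z * a) hy (hz.mul ha)
    have h2 := congrArg (· * a) (h y z hy hz)
    simp only [add_mul, zero_mul, ← mul_assoc] at h1 h2
    rw [← sub_eq_zero]
    calc _ = (β y * z * a + β (z * a) * y) - (β y * z * a + β z * y * a) := by abel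
      _ = 0 := by rw [h1, h2, sub_zero]
  apply H.comB (hβ z hz)
  intro a a' ha ha' m hm
  have h1 := key a' (m * a) ha' (hm.mul ha)
  have h2 := key a' m ha' hm
  rw [← mul_assoc, h2] at h1
  rw [mul_sub, sub_eq_zero, ← mul_assoc, ← mul_assoc, h1, ← mul_assoc]

end Loy
end basics

section trace
variable {R P : Type*} [CommRing R] [Invertible (2 : R)] [Ring P] [Algebra R P]

set_option linter.unusedSectionVars false

theorem br_add (x y z : P) : ⁅x, y + z⁆ = ⁅x, y⁆ + ⁅x, z⁆ := by simp only [Ring.lie_def]; noncomm_ring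
theorem br_sub (x y z : P) : ⁅x, y - z⁆ = ⁅x, y⁆ - ⁅x, z⁆ := by simp only [Ring.lie_def]; noncomm_ring
theorem add_br (x y z : P) : ⁅x + y, z⁆ = ⁅x, z⁆ + ⁅y, z⁆ := by simp only [Ring.lie_def]; noncomm_ring
theorem sub_br (x y z : P) : ⁅x - y, z⁆ = ⁅x, z⁆ - ⁅y, z⁆ := by simp only [Ring.lie_def]; noncomm_ring
theorem br_iff {x y : P} : ⁅x, y⁆ = 0 ↔ x * y = y * x := by rw [Ring.lie_def, sub_eq_zero]
theorem br_br (x y z : P) : ⁅⁅x, y⁆, z⁆ = ⁅x, ⁅y, z⁆⁆ - ⁅y, ⁅x, z⁆⁆ := by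
  simp only [Ring.lie_def]; noncomm_ring
theorem br_zero (x : P) : ⁅x, (0 : P)⁆ = 0 := by simp [Ring.lie_def]

theorem zlie {z : P} (hz : z ∈ Subring.center P) (x : P) : ⁅z, x⁆ = 0 := by
  rw [Ring.lie_def, zcomm hz, sub_self]

theorem mem_of_lie {z : P} (h : ∀ x : P, ⁅z, x⁆ = 0) : z ∈ Subring.center P := by
  rw [Subring.mem_center_iff]
  intro g
  have := h g
  rw [Ring.lie_def, sub_eq_zero] at this
  exact this.symm

theorem two0 (R : Type*) {P : Type*} [CommRing R] [Invertible (2 : R)] [Ring P] [Algebra R P]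
    {x : P} (h : x + x = 0) : x = 0 := by
  have : (⅟2 : R) • ((2 : R) • x) = 0 := by rw [two_smul, h, smul_zero]
  rwa [smul_smul, invOf_mul_self, one_smul] at this

theorem half_add (R : Type*) {P : Type*} [CommRing R] [Invertible (2 : R)] [Ring P] [Algebra R P]
    (x : P) : (⅟2 : R) • x + (⅟2 : R) • x = x := by
  rw [← add_smul]
  have : (⅟2 : R) + ⅟2 = 1 := by rw [← two_mul, mul_invOf_self]
  rw [this, one_smul]

theorem smul_mem_c (r : R) {x : P} (h : x ∈ Subring.center P) : r • x ∈ Subring.center P := by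
  rw [Subring.mem_center_iff] at *
  intro g
  rw [mul_smul_comm, smul_mul_assoc, h g]

structure CT (q : P →ₗ[R] P →ₗ[R] P) : Prop where
  symm : ∀ x y, q x y = q y x
  com : ∀ x, ⁅q x x, x⁆ = 0

theorem CT.lin2 {q : P →ₗ[R] P →ₗ[R] P} (hq : CT q) (x y : P) :
    ⁅q x x, y⁆ + (⁅q x y, x⁆ + ⁅q x y, x⁆) = 0 := by
  apply two0 R
  have h1 := hq.com (x + y)
  have h2 := hq.com (x - y)
  have hx := hq.com x
  have hy := hq.com y
  simp only [map_add, map_sub, LinearMap.add_apply, LinearMap.sub_apply, add_br, br_add, sub_br,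
    br_sub, hq.symm y x] at h1 h2
  calc _ = (⁅q x x, x⁆ + ⁅q x y, x⁆ + (⁅q x y, x⁆ + ⁅q y y, x⁆) +
      (⁅q x x, y⁆ + ⁅q x y, y⁆ + (⁅q x y, y⁆ + ⁅q y y, y⁆))) -
      (⁅q x x, x⁆ - ⁅q x y, x⁆ - (⁅q x y, x⁆ - ⁅q y y, x⁆) -
      (⁅q x x, y⁆ - ⁅q x y, y⁆ - (⁅q x y, y⁆ - ⁅q y y, y⁆))) - (⁅q y y, y⁆ + ⁅q y y, y⁆) := by abel
    _ = 0 := by rw [h1, h2, hy]; simp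

theorem CT.cyc {q : P →ₗ[R] P →ₗ[R] P} (hq : CT q) (x y z : P) :
    ⁅q x y, z⁆ + ⁅q y z, x⁆ + ⁅q x z, y⁆ = 0 := by
  apply two0 R
  have h1 := hq.lin2 (x + y) z
  have h2 := hq.lin2 x z
  have h3 := hq.lin2 y z
  simp only [map_add, LinearMap.add_apply, add_br, br_add, hq.symm y x] at h1
  calc _ = _ - (⁅q x x, z⁆ + (⁅q x z, x⁆ + ⁅q x z, x⁆)) - (⁅q y y, z⁆ + (⁅q y z, y⁆ + ⁅q y z, y⁆)) := ?_
    _ = 0 - 0 - 0 := congrArg₂ _ (congrArg₂ _ h1 h2) h3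
    _ = 0 := by simp
  abel

def qsub (q : P →ₗ[R] P →ₗ[R] P) (c : P) (μ : P →ₗ[R] P) : P →ₗ[R] P →ₗ[R] P :=
  LinearMap.mk₂ R (fun x y => q x y - (c * (x * y + y * x) + (μ x * y + μ y * x)))
    (by intros; simp only [map_add, LinearMap.add_apply]; noncomm_ring)
    (by intros; simp only [map_smul, LinearMap.smul_apply, mul_smul_comm, smul_mul_assoc, smul_sub, smul_add, mul_add])
    (by intros; simp only [map_add]; noncomm_ring)
    (by intros; simp only [map_smul, mul_smul_comm, smul_mul_assoc, smul_sub, smul_add, mul_add])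

theorem qsub_apply (q : P →ₗ[R] P →ₗ[R] P) (c : P) (μ : P →ₗ[R] P) (x y : P) :
    qsub q c μ x y = q x y - (c * (x * y + y * x) + (μ x * y + μ y * x)) := rfl

theorem CT.sub {q : P →ₗ[R] P →ₗ[R] P} (hq : CT q) {c : P} (hc : c ∈ Subring.center P)
    {μ : P →ₗ[R] P} (hμ : ∀ x, μ x ∈ Subring.center P) : CT (qsub q c μ) where
  symm x y := by
    rw [qsub_apply, qsub_apply, hq.symm x y, add_comm (x * y), add_comm (μ x * y)]
  com x := by
    have := hq.com x
    rw [qsub_apply, sub_br, this, Ring.lie_def]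
    simp only [mul_add, add_mul, zlcomm hc, zlcomm (hμ x), mul_assoc]
    abel

def Good (q : P →ₗ[R] P →ₗ[R] P) : Prop :=
  ∃ c ∈ Subring.center P, ∃ μ : P →ₗ[R] P, (∀ x, μ x ∈ Subring.center P) ∧
    ∀ x y, qsub q c μ x y ∈ Subring.center P

theorem Good.of_sub {q : P →ₗ[R] P →ₗ[R] P} {c : P} (hc : c ∈ Subring.center P)
    {μ : P →ₗ[R] P} (hμ : ∀ x, μ x ∈ Subring.center P) (h : Good (qsub q c μ)) : Good q := by
  obtain ⟨c', hc', μ', hμ', h⟩ := h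
  refine ⟨c + c', add_mem hc hc', μ + μ', fun x => add_mem (hμ x) (hμ' x), fun x y => ?_⟩
  have := h x y
  rw [qsub_apply, qsub_apply] at this
  rw [qsub_apply]
  convert this using 1
  simp only [LinearMap.add_apply]
  noncomm_ring

def cl (i j : P) : P →ₗ[R] P where
  toFun x := i * x * j
  map_add' := by intros; noncomm_ring
  map_smul' := by intros; simp

omit [Invertible (2 : R)] in
theorem cl_apply (i j x : P) : cl (R := R) i j x = i * x * j := rfl

def PropA (R : Type*) {P : Type*} [CommRing R] [Ring P] [Algebra R P] (e : P) : Prop :=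
  ∀ F : P →ₗ[R] P, (∀ a, Cor e e a → Cor e e (F a)) → (∀ a, Cor e e a → F a * a = a * F a) →
    ∃ z ∈ Subring.center P, ∀ a, Cor e e a → ∀ x, Cor e e x →
      (F a - z * a) * x = x * (F a - z * a)

variable {e f : P}

namespace Loy
variable (H : Loy e f)
include H

theorem MB (y : P) {b : P} (hb : Cor f f b) : e * ⁅y, b⁆ * f = e * y * f * b := by
  rw [Ring.lie_def, mul_sub, sub_mul, ← mul_assoc e b, hb.left0 H.ef, mul_assoc _ _ f, mul_assoc y,
    hb.2, mul_assoc _ f b, hb.1, ← mul_assoc]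
  simp
theorem MA (y : P) {a : P} (ha : Cor e e a) : e * ⁅y, a⁆ * f = -(a * (e * y * f)) := by
  rw [Ring.lie_def, mul_sub, sub_mul, ← mul_assoc e a, ha.1, mul_assoc e (y * a), mul_assoc y,
    ha.right0 H.ef, ← mul_assoc a, ← mul_assoc a, ha.2]
  simp
theorem MM (y : P) {m : P} (hm : Cor e f m) : e * ⁅y, m⁆ * f = e * y * e * m - m * (f * y * f) := by
  rw [Ring.lie_def, mul_sub, sub_mul, ← mul_assoc e m, hm.1, mul_assoc e (y * m), mul_assoc y,
    hm.2, mul_assoc _ e m, hm.1, ← mul_assoc m, ← mul_assoc m, hm.2, mul_assoc e]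
theorem MN (y : P) {n : P} (hn : Cor f e n) : e * ⁅y, n⁆ * f = 0 := by
  rw [Ring.lie_def, mul_sub, sub_mul, ← mul_assoc e n, hn.left0 H.ef, mul_assoc e (y * n), mul_assoc y,
    hn.right0 H.ef]
  simp
theorem Mf (y : P) : e * ⁅y, f⁆ * f = e * y * f := by
  rw [H.MB y H.cf, mul_assoc _ f, H.ff]
theorem Me (y : P) : e * ⁅y, e⁆ * f = - (e * y * f) := by
  rw [H.MA y H.ce, ← mul_assoc, ← mul_assoc, H.ee]
theorem lie_f (y : P) : ⁅y, f⁆ = - ⁅y, e⁆ := by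
  have : f = 1 - e := by rw [← H.sum]; abel
  rw [this, Ring.lie_def, Ring.lie_def]; noncomm_ring

/-- double commutator with e -/
theorem dbl {y d : P} (hd : ⁅d, e⁆ = 0) (h : ⁅y, e⁆ = d) : d = 0 := by
  rw [Ring.lie_def] at h
  have h1 : e * d * e = 0 := by
    rw [← h, mul_sub, sub_mul, ← mul_assoc, ← mul_assoc, H.ee, mul_assoc _ e e, H.ee, sub_self]
  have h2 : d = e * d + d * e := by
    have k1 : e * d + d * e - d = 0 := by
      rw [← h]
      have : y = (e * y + y * e) + (y - e * y - y * e) := by abel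
      have he := H.ee
      simp only [mul_sub, sub_mul, ← mul_assoc, he]
      simp only [mul_assoc, he]
      abel
    exact (sub_eq_zero.1 k1).symm
  rw [Ring.lie_def, sub_eq_zero] at hd
  have h3 : e * d = 0 := by rw [← h1, mul_assoc, hd, ← mul_assoc, H.ee]
  rw [h2, hd, h3, add_zero]

theorem lie_e_A {y : P} (hy : ⁅y, e⁆ = 0) {a : P} (ha : Cor e e a ∨ Cor f f a) : ⁅⁅y, a⁆, e⁆ = 0 := by
  have : ⁅a, e⁆ = 0 := by
    rcases ha with ha | ha
    · rw [Ring.lie_def, ha.1, ha.2, sub_self]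
    · rw [Ring.lie_def, ha.left0 H.ef, ha.right0 H.fe, sub_self]
  rw [br_br, this, hy, br_zero, br_zero, sub_zero]

theorem mkLin (F : P →ₗ[R] P) (h : ∀ x, ∃ w ∈ Subring.center P, F x - w * e ∈ Subring.center P) :
    ∃ μ : P →ₗ[R] P, (∀ x, μ x ∈ Subring.center P) ∧ ∀ x, F x - μ x * e ∈ Subring.center P := by
  choose g hg hg' using h
  refine ⟨⟨⟨g, ?_⟩, ?_⟩, hg, hg'⟩
  · intro x y
    rw [← sub_eq_zero]
    apply H.ze0 (sub_mem (hg _) (add_mem (hg _) (hg _)))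
    have := sub_mem (add_mem (hg' x) (hg' y)) (hg' (x + y))
    convert this using 1
    rw [map_add]; noncomm_ring
  · intro r x
    simp only [RingHom.id_apply]
    rw [← sub_eq_zero]
    apply H.ze0 (sub_mem (hg _) (smul_mem_c r (hg _)))
    have := sub_mem (smul_mem_c r (hg' x)) (hg' (r • x))
    convert this using 1
    rw [map_smul, smul_sub, sub_mul, smul_mul_assoc]; noncomm_ring


theorem brA {D α m : P} (hα : Cor e e α) (hD : D - α ∈ Subring.center P) (hm : Cor e f m) :
    ⁅D, m⁆ = α * m := by
  have h1 : D = (D - α) + α := by abel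
  rw [h1, add_br, zlie hD, Ring.lie_def, hm.mul0 H.fe hα]; simp

theorem brB {D α m : P} (hα : Cor f f α) (hD : D - α ∈ Subring.center P) (hm : Cor e f m) :
    ⁅D, m⁆ = -(m * α) := by
  have h1 : D = (D - α) + α := by abel
  rw [h1, add_br, zlie hD, Ring.lie_def, hα.mul0 H.fe hm]; simp

theorem corM {m : P} (hm : Cor e f m) : e * m * f = m := by rw [hm.1, hm.2]

theorem lf0 {y : P} (h : ⁅y, e⁆ = 0) : ⁅y, f⁆ = 0 := by rw [H.lie_f, h, neg_zero]
theorem le0 {y : P} (h : ⁅y, f⁆ = 0) : ⁅y, e⁆ = 0 := by rw [H.lie_f, neg_eq_zero] at h; exact h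

theorem dM0 {y : P} (h : ⁅y, e⁆ = 0) : e * y * f = 0 := by
  rw [br_iff] at h
  rw [← h, mul_assoc, H.ef, mul_zero]

theorem sepAB {x y a b : P} (hx : ⁅x, e⁆ = 0) (hy : ⁅y, e⁆ = 0) (ha : Cor e e a) (hb : Cor f f b)
    (h : ⁅x, a⁆ + ⁅y, b⁆ = 0) : ⁅x, a⁆ = 0 ∧ ⁅y, b⁆ = 0 := by
  have h1 : e * ⁅x, a⁆ = ⁅x, a⁆ := by
    rw [br_iff] at hx
    rw [Ring.lie_def, mul_sub, ← mul_assoc, ← mul_assoc, ← hx, ha.1, mul_assoc, ha.1]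
  have h2 : e * ⁅y, b⁆ = 0 := by
    rw [br_iff] at hy
    rw [Ring.lie_def, mul_sub, ← mul_assoc, ← mul_assoc, ← hy, hb.left0 H.ef, mul_assoc,
      hb.left0 H.ef]; simp
  have h3 := congrArg (e * ·) h
  simp only [mul_add, h1, h2, mul_zero, add_zero] at h3
  rw [h3, zero_add] at h
  exact ⟨h3, h⟩

theorem ind {K : AddSubgroup P} {F : P →ₗ[R] P} (hA : ∀ a, Cor e e a → F a ∈ K)
    (hM : ∀ a, Cor e f a → F a ∈ K) (hN : ∀ a, Cor f e a → F a ∈ K)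
    (hB : ∀ a, Cor f f a → F a ∈ K) (x : P) : F x ∈ K := by
  rw [H.split x]
  simp only [map_add]
  exact add_mem (add_mem (add_mem (hA _ (Cor.mk H.ee H.ee x)) (hM _ (Cor.mk H.ee H.ff x)))
    (hN _ (Cor.mk H.ff H.ee x))) (hB _ (Cor.mk H.ff H.ff x))

theorem S4 {q : P →ₗ[R] P →ₗ[R] P} (hq : CT q)
    (hAA : ∀ a a', Cor e e a → Cor e e a' → q a a' ∈ Subring.center P)
    (hAB : ∀ a b, Cor e e a → Cor f f b → q a b ∈ Subring.center P)
    (hBB : ∀ b b', Cor f f b → Cor f f b' → q b b' ∈ Subring.center P)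
    (he : ∀ x, q e x ∈ Subring.center P) (x y : P) : q x y ∈ Subring.center P := by
  have hdiag : ∀ y z, ⁅q y z, e⁆ = 0 := by
    intro y z
    have := hq.cyc e y z
    rw [zlie (he y), zlie (he z)] at this
    simpa using this
  have hab : ∀ x a b, Cor e e a → Cor f f b → ⁅q b x, a⁆ = 0 ∧ ⁅q a x, b⁆ = 0 := by
    intro x a b ha hb
    have := hq.cyc a b x
    rw [zlie (hAB a b ha hb), zero_add] at this
    exact H.sepAB (hdiag _ _) (hdiag _ _) ha hb this
  have hAL : ∀ a, Cor e e a → ∀ x, ∃ α, Cor e e α ∧ q a x - α ∈ Subring.center P := by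
    intro a ha x
    obtain ⟨z, hz, α, hα, h⟩ := H.L1 (br_iff.1 (hdiag a x)).symm
      (fun b hb => br_iff.1 (hab x a b ha hb).2)
    exact ⟨α, hα, by rw [h]; simpa using hz⟩
  have hBL : ∀ b, Cor f f b → ∀ x, ∃ α, Cor f f α ∧ q b x - α ∈ Subring.center P := by
    intro b hb x
    obtain ⟨z, hz, α, hα, h⟩ := H.L2 (br_iff.1 (hdiag b x)).symm
      (fun a ha => br_iff.1 (hab x a b ha hb).1)
    exact ⟨α, hα, by rw [h]; simpa using hz⟩
  have hAM : ∀ a, Cor e e a → ∀ m, Cor e f m → q a m ∈ Subring.center P := by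
    intro a ha m hm
    choose α hα h using hAL a ha
    have h0 := H.T0' (β := α) (fun m _ => hα m) (fun y z hy hz => by
      have := congrArg (fun t => e * t * f) (hq.cyc a y z)
      simp only [mul_add, add_mul] at this
      rw [H.brA (hα _) (h _) hz, H.brA (hα _) (h _) hy, H.MA _ ha, H.dM0 (hdiag _ _),
        H.corM ((hα _).mul hz), H.corM ((hα _).mul hy)] at this
      simpa using this)
    have := h m
    rwa [h0 m hm, sub_zero] at this
  have hAN : ∀ a, Cor e e a → ∀ m, Cor f e m → q a m ∈ Subring.center P := by
    intro a ha n hn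
    obtain ⟨α, hα, h⟩ := hAL a ha n
    have h0 := H.faithL hα (fun m hm => by
      have := congrArg (fun t => e * t * f) (hq.cyc a m n)
      simp only [mul_add, add_mul] at this
      rw [zlie (hAM a ha m hm), H.brA hα h hm, H.MA _ ha, H.dM0 (hdiag _ _),
        H.corM (hα.mul hm)] at this
      simpa using this)
    rwa [h0, sub_zero] at h
  have hBM : ∀ a, Cor f f a → ∀ m, Cor e f m → q a m ∈ Subring.center P := by
    intro a ha m hm
    choose α hα h using hBL a ha
    have h0 := H.T0 (β := α) (fun m _ => hα m) (fun y z hy hz => by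
      have := congrArg (fun t => e * t * f) (hq.cyc a y z)
      simp only [mul_add, add_mul] at this
      rw [H.brB (hα _) (h _) hz, H.brB (hα _) (h _) hy, H.MB _ ha, H.dM0 (hdiag _ _),
        mul_neg, neg_mul, mul_neg, neg_mul,
        H.corM (hz.mul (hα _)), H.corM (hy.mul (hα _))] at this
      rw [← neg_eq_zero, neg_add]
      simpa using this)
    have := h m
    rwa [h0 m hm, sub_zero] at this
  have hBN : ∀ a, Cor f f a → ∀ m, Cor f e m → q a m ∈ Subring.center P := by
    intro a ha n hn
    obtain ⟨α, hα, h⟩ := hBL a ha n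
    have h0 := H.faithR hα (fun m hm => by
      have := congrArg (fun t => e * t * f) (hq.cyc a m n)
      simp only [mul_add, add_mul] at this
      rw [zlie (hBM a ha m hm), H.brB hα h hm, H.MB _ ha, H.dM0 (hdiag _ _), mul_neg, neg_mul,
        H.corM (hm.mul hα)] at this
      simpa using this)
    rwa [h0, sub_zero] at h
  have hAX : ∀ a, Cor e e a → ∀ x, q a x ∈ Subring.center P := fun a ha x =>
    H.ind (K := (Subring.center P).toAddSubgroup) (F := q a) (hAA a · ha) (hAM a ha) (hAN a ha)
      (hAB a · ha) x
  have hBX : ∀ a, Cor f f a → ∀ x, q a x ∈ Subring.center P := fun a ha x =>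
    H.ind (K := (Subring.center P).toAddSubgroup) (F := q a)
      (fun a' ha' => by rw [hq.symm]; exact hAB a' a ha' ha) (hBM a ha) (hBN a ha)
      (hBB a · ha) x
  have hcA : ∀ y z a, Cor e e a → ⁅q y z, a⁆ = 0 := by
    intro y z a ha
    have := hq.cyc a y z
    rw [zlie (hAX a ha y), zlie (hAX a ha z)] at this
    simpa using this
  have hcB : ∀ y z a, Cor f f a → ⁅q y z, a⁆ = 0 := by
    intro y z a ha
    have := hq.cyc a y z
    rw [zlie (hBX a ha y), zlie (hBX a ha z)] at this
    simpa using this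
  have hw : ∀ y z, ∃ w ∈ Subring.center P, q y z - w * e ∈ Subring.center P := by
    intro y z
    obtain ⟨c, hc, w, hw, h⟩ := H.L3 (br_iff.1 (hdiag y z)).symm (fun a ha => br_iff.1 (hcA y z a ha))
      (fun a ha => br_iff.1 (hcB y z a ha))
    exact ⟨w, hw, by rw [h]; simpa using hc⟩
  choose w hw h using hw
  have hbr : ∀ y z m, Cor e f m → ⁅q y z, m⁆ = w y z * m := by
    intro y z m hm
    rw [H.brA (H.ce.zmul (hw y z)) (h y z) hm, mul_assoc, hm.1]
  have hw0 : ∀ y z, w y z = 0 → q y z ∈ Subring.center P := by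
    intro y z h0
    have := h y z
    rwa [h0, zero_mul, sub_zero] at this
  have hmn : ∀ m n, Cor e f m → Cor f e n → q m n ∈ Subring.center P := by
    intro m n hm hn
    have h0 := H.T0' (β := fun m => w m n * e) (fun m _ => H.ce.zmul (hw m n)) (fun y z hy hz => by
      have := congrArg (fun t => e * t * f) (hq.cyc y z n)
      simp only [mul_add, add_mul] at this
      rw [H.MN _ hn, hbr _ _ _ hy, hbr _ _ _ hz, H.corM (hy.zmul (hw _ _)),
        H.corM (hz.zmul (hw _ _))] at this
      rw [mul_assoc, mul_assoc, hy.1, hz.1, add_comm]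
      simpa using this)
    have := h m n
    simpa [h0 m hm] using this
  have hnn : ∀ m n, Cor f e m → Cor f e n → q m n ∈ Subring.center P := by
    intro m n hm hn
    apply hw0
    apply H.zM0 (hw _ _)
    intro k hk
    have := congrArg (fun t => e * t * f) (hq.cyc m n k)
    simp only [mul_add, add_mul] at this
    rw [H.MN _ hn, H.MN _ hm, hbr _ _ _ hk, H.corM (hk.zmul (hw _ _))] at this
    simpa using this
  have hmm : ∀ m n, Cor e f m → Cor e f n → q m n ∈ Subring.center P := by
    intro x y hx hy
    apply hw0
    have cy : ∀ x y z, Cor e f x → Cor e f y → Cor e f z →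
        w x y * z + w y z * x + w x z * y = 0 := by
      intro x y z hx hy hz
      have := hq.cyc x y z
      rwa [hbr _ _ _ hz, hbr _ _ _ hx, hbr _ _ _ hy] at this
    have key : ∀ b, Cor f f b → w x y * b = w (x * b) y * f := by
      intro b hb
      have h0 := H.T0 (β := fun y => w (x * b) y * f - w x y * b)
        (fun m _ => (H.cf.zmul (hw _ _)).sub (hb.zmul (hw _ _))) (fun y z hy hz => by
          have k1 := cy x y z hx hy hz
          have k2 := cy (x * b) y z (hx.mul hb) hy hz
          have k3 := congrArg (· * b) k1
          simp only [add_mul, zero_mul, mul_assoc] at k3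
          simp only [mul_sub, zlcomm (hw _ _), hz.2, hy.2]
          calc _ = (w (x * b) y * z + w y z * (x * b) + w (x * b) z * y) -
              (w x y * (z * b) + (w y z * (x * b)) + w x z * (y * b)) := by abel
            _ = 0 := by rw [k2, k3, sub_zero])
      exact (sub_eq_zero.1 (h0 y hy)).symm
    apply H.zcB (hw _ _)
    intro b b' hb hb'
    rw [mul_sub, sub_eq_zero, ← mul_assoc, key b hb, ← zlcomm (hw _ _), key b hb, zlcomm (hw _ _),
      hb'.2, mul_assoc, hb'.1]
  have hM : ∀ m, Cor e f m → ∀ x, q m x ∈ Subring.center P := fun a ha x =>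
    H.ind (K := (Subring.center P).toAddSubgroup) (F := q a)
      (fun a' ha' => by rw [hq.symm]; exact hAX a' ha' a) (hmm a · ha) (hmn a · ha)
      (fun a' ha' => by rw [hq.symm]; exact hBX a' ha' a) x
  have hN : ∀ m, Cor f e m → ∀ x, q m x ∈ Subring.center P := fun a ha x =>
    H.ind (K := (Subring.center P).toAddSubgroup) (F := q a)
      (fun a' ha' => by rw [hq.symm]; exact hAX a' ha' a)
      (fun a' ha' => by rw [hq.symm]; exact hM a' ha' a) (hnn a · ha)
      (fun a' ha' => by rw [hq.symm]; exact hBX a' ha' a) x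
  rw [hq.symm]
  exact H.ind (K := (Subring.center P).toAddSubgroup) (F := q y)
      (fun a' ha' => by rw [hq.symm]; exact hAX a' ha' y)
      (fun a' ha' => by rw [hq.symm]; exact hM a' ha' y)
      (fun a' ha' => by rw [hq.symm]; exact hN a' ha' y)
      (fun a' ha' => by rw [hq.symm]; exact hBX a' ha' y) x

theorem S3 {q : P →ₗ[R] P →ₗ[R] P} (hq : CT q)
    (hAB : ∀ a b, Cor e e a → Cor f f b → q a b ∈ Subring.center P)
    (hMa : ∀ a m, Cor e e a → Cor e f m → e * q a m * f = 0)
    (hMb : ∀ b m, Cor f f b → Cor e f m → e * q b m * f = 0) : Good q := by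
  have hAA : ∀ a a', Cor e e a → Cor e e a' → q a a' ∈ Subring.center P := by
    intro a a' ha ha'
    have hB : ∀ b, Cor f f b → ⁅q a a', b⁆ = 0 := by
      intro b hb
      have := hq.cyc a a' b
      rw [zlie (hAB a b ha hb), zlie (hAB a' b ha' hb)] at this
      simpa using this
    obtain ⟨z, hz, α, hα, h⟩ := H.L1 (br_iff.1 (H.le0 (hB f H.cf))).symm (fun b hb => br_iff.1 (hB b hb))
    have h' : q a a' - α ∈ Subring.center P := by rw [h]; simpa using hz
    have h0 := H.faithL hα (fun m hm => by
      have := congrArg (fun t => e * t * f) (hq.cyc a a' m)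
      simp only [mul_add, add_mul] at this
      rw [H.brA hα h' hm, H.MA _ ha, H.MA _ ha', hMa a m ha hm, hMa a' m ha' hm,
        H.corM (hα.mul hm)] at this
      simpa using this)
    rwa [h0, sub_zero] at h'
  have hBB : ∀ a a', Cor f f a → Cor f f a' → q a a' ∈ Subring.center P := by
    intro a a' ha ha'
    have hB : ∀ b, Cor e e b → ⁅q a a', b⁆ = 0 := by
      intro b hb
      have := hq.cyc b a a'
      rw [zlie (hAB b a hb ha), zlie (hAB b a' hb ha')] at this
      simpa using this
    obtain ⟨z, hz, α, hα, h⟩ := H.L2 (br_iff.1 ((hB e H.ce))).symm (fun b hb => br_iff.1 (hB b hb))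
    have h' : q a a' - α ∈ Subring.center P := by rw [h]; simpa using hz
    have h0 := H.faithR hα (fun m hm => by
      have := congrArg (fun t => e * t * f) (hq.cyc a a' m)
      simp only [mul_add, add_mul] at this
      rw [H.brB hα h' hm, H.MB _ ha, H.MB _ ha', hMb a m ha hm, hMb a' m ha' hm, mul_neg, neg_mul,
        H.corM (hm.mul hα)] at this
      simpa using this)
    rwa [h0, sub_zero] at h'
  have hex : ∀ x, ⁅q e x, e⁆ = 0 := by
    intro x
    have := hq.lin2 e x
    rw [zlie (hAA e e H.ce H.ce), zero_add] at this
    exact two0 R this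
  have hfx : ∀ x, ⁅q f x, e⁆ = 0 := by
    intro x
    have := hq.lin2 f x
    rw [zlie (hBB f f H.cf H.cf), zero_add] at this
    exact H.le0 (two0 R this)
  have hA : ∀ x a, Cor e e a → ⁅q e x, a⁆ = 0 := by
    intro x a ha
    have := hq.cyc e a x
    rw [zlie (hAA e a H.ce ha), zero_add] at this
    have h1 := H.dbl (y := - q a x) (H.lie_e_A (hex x) (Or.inl ha)) (by
      rw [← sub_eq_zero, ← neg_eq_zero, ← this]
      simp only [Ring.lie_def]; noncomm_ring)
    exact h1
  have hBe : ∀ x b, Cor f f b → ⁅q b x, e⁆ = 0 := by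
    intro x b hb
    have := hq.cyc f b x
    rw [zlie (hBB f b H.cf hb), zero_add, H.lie_f] at this
    have h1 := H.dbl (y := q b x) (H.lie_e_A (hfx x) (Or.inr hb)) (by
      rw [← sub_eq_zero, ← neg_eq_zero, ← this]
      abel)
    rw [h1, add_zero, neg_eq_zero] at this
    exact this
  have hB : ∀ x b, Cor f f b → ⁅q e x, b⁆ = 0 := by
    intro x b hb
    have := hq.cyc e b x
    rw [zlie (hAB e b H.ce hb), hBe x b hb] at this
    simpa using this
  obtain ⟨μ, hμ, hμ'⟩ := H.mkLin (q e) (fun x => by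
    obtain ⟨c, hc, w, hw, h⟩ := H.L3 (br_iff.1 (hex x)).symm (fun a ha => br_iff.1 (hA x a ha))
      (fun a ha => br_iff.1 (hB x a ha))
    exact ⟨w, hw, by rw [h]; simpa using hc⟩)
  have hμ0 : ∀ x, q e x ∈ Subring.center P → μ x = 0 := by
    intro x hx
    apply H.ze0 (hμ x)
    have := sub_mem hx (hμ' x)
    simpa using this
  have hμA := fun a ha => hμ0 a (hAA e a H.ce ha)
  have hμB := fun a ha => hμ0 a (hAB e a H.ce ha)
  apply Good.of_sub (zero_mem _) hμ
  refine ⟨0, zero_mem _, 0, fun x => zero_mem _, fun x y => ?_⟩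
  rw [qsub_apply]
  simp only [zero_mul, LinearMap.zero_apply, add_zero, sub_zero]
  apply H.S4 (hq.sub (zero_mem _) hμ)
  · intro a b ha hb
    rw [qsub_apply, hμA a ha, hμA b hb]; simpa using hAA a b ha hb
  · intro a b ha hb
    rw [qsub_apply, hμA a ha, hμB b hb]; simpa using hAB a b ha hb
  · intro a b ha hb
    rw [qsub_apply, hμB a ha, hμB b hb]; simpa using hBB a b ha hb
  · intro x
    rw [qsub_apply, hμA e H.ce]; simpa using hμ' x

theorem S2 {q : P →ₗ[R] P →ₗ[R] P} (hq : CT q)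
    (hAB : ∀ a b, Cor e e a → Cor f f b → q a b ∈ Subring.center P) : Good q := by
  have hee := hq.com e
  have hA : ∀ a, Cor e e a → ⁅q e e, a⁆ = 0 := by
    intro a ha
    have := hq.lin2 e a
    exact H.dbl (y := - q e a - q e a) (H.lie_e_A hee (Or.inl ha)) (by
      rw [← sub_eq_zero, ← neg_eq_zero, ← this]
      simp only [Ring.lie_def]; noncomm_ring)
  have hB : ∀ a, Cor f f a → ⁅q e e, a⁆ = 0 := by
    intro a ha
    have := hq.lin2 e a
    rw [zlie (hAB e a H.ce ha)] at this
    simpa using this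
  obtain ⟨z, hz, c, hc, h⟩ := H.L3 (br_iff.1 hee).symm (fun a ha => br_iff.1 (hA a ha))
      (fun a ha => br_iff.1 (hB a ha))
  have h' : q e e - c * e ∈ Subring.center P := by rw [h]; simpa using hz
  have h1 : ∀ m, Cor e f m → c * m = e * q e m * f + e * q e m * f := by
    intro m hm
    have := congrArg (fun t => e * t * f) (hq.lin2 e m)
    simp only [mul_add, add_mul] at this
    rw [H.brA (H.ce.zmul hc) h' hm, H.Me, mul_assoc c, hm.1, H.corM (hm.zmul hc)] at this
    rw [← sub_eq_zero]
    rw [mul_zero, zero_mul] at this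
    rw [← this]; abel
  have h2 : ∀ a m, Cor e e a → Cor e f m → e * q a m * f = a * (e * q m f * f) := by
    intro a m ha hm
    have := congrArg (fun t => e * t * f) (hq.cyc a m f)
    simp only [mul_add, add_mul] at this
    rw [zlie (hAB a f ha H.cf), H.Mf, H.MA _ ha] at this
    rw [← sub_eq_zero, sub_eq_add_neg]; simpa using this
  have h3 : ∀ a m, Cor e e a → Cor e f m → e * q a m * f = a * (e * q e m * f) := by
    intro a m ha hm
    rw [h2 a m ha hm, h2 e m H.ce hm, ← mul_assoc a e, ha.2]
  have h4 : ∀ b m, Cor f f b → Cor e f m → e * q b m * f = e * q e m * f * b := by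
    intro b m hb hm
    have := congrArg (fun t => e * t * f) (hq.cyc e m b)
    simp only [mul_add, add_mul] at this
    rw [zlie (hAB e b H.ce hb), H.Me, H.MB _ hb] at this
    rw [hq.symm b m, eq_comm, ← sub_eq_zero, sub_eq_add_neg]; simpa using this
  have h5 : ∀ m, Cor e f m → e * q e m * f = (⅟2 : R) • (c * m) := by
    intro m hm
    rw [h1 m hm, smul_add, half_add]
  have hc2 := smul_mem_c (⅟2 : R) hc
  apply Good.of_sub (c := (⅟2 : R) • c) (μ := 0) hc2 (fun x => zero_mem _)
  apply H.S3 (hq.sub hc2 (fun x => zero_mem _))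
  · intro a b ha hb
    rw [qsub_apply, ha.mul0 H.ef hb, hb.mul0 H.fe ha]; simpa using hAB a b ha hb
  · intro a m ha hm
    rw [qsub_apply, hm.mul0 H.fe ha, mul_sub, sub_mul, h3 a m ha hm, h5 m hm]
    simp only [LinearMap.zero_apply, zero_mul, add_zero]
    rw [H.corM ((ha.mul hm).zmul hc2), mul_smul_comm, smul_mul_assoc, zlcomm hc, sub_self]
  · intro a m ha hm
    rw [qsub_apply, ha.mul0 H.fe hm, mul_sub, sub_mul, h4 a m ha hm, h5 m hm]
    simp only [LinearMap.zero_apply, zero_mul, add_zero, zero_add]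
    rw [H.corM ((hm.mul ha).zmul hc2), smul_mul_assoc, smul_mul_assoc, mul_assoc, sub_self]

theorem S1 {q : P →ₗ[R] P →ₗ[R] P} (hq : CT q) (hp : PropA R e) : Good q := by
  have hff := H.le0 (hq.com f)
  have hfd : ∀ d, (Cor e e d ∨ Cor f f d) → ⁅q f d, e⁆ = 0 := by
    intro d hd
    have := hq.lin2 f d
    rw [H.lie_f] at this
    have h1 := H.dbl (y := q f d + q f d) (H.lie_e_A hff hd) (by
      rw [← sub_eq_zero, ← neg_eq_zero, ← this]
      simp only [Ring.lie_def]; noncomm_ring)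
    rw [h1, zero_add, ← neg_add, neg_eq_zero] at this
    exact two0 R this
  have hdg : ∀ a b, Cor e e a → Cor f f b → ⁅q a b, e⁆ = 0 := by
    intro a b ha hb
    have := hq.cyc a b f
    have h1 := H.dbl (y := q a b) (d := ⁅q b f, a⁆ + ⁅q a f, b⁆) (by
      rw [add_br, hq.symm b f, hq.symm a f, H.lie_e_A (hfd b (Or.inr hb)) (Or.inl ha),
        H.lie_e_A (hfd a (Or.inl ha)) (Or.inr hb), add_zero]) (by
      rw [H.lie_f] at this
      rw [← sub_eq_zero, ← neg_eq_zero, ← this]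
      abel)
    rw [add_assoc, h1, add_zero] at this
    exact H.le0 this
  have hcA : ∀ a b, Cor e e a → Cor f f b → ⁅q a b, a⁆ = 0 := by
    intro a b ha hb
    have := congrArg (fun t => e * t) (hq.lin2 a b)
    have h1 : e * ⁅q a b, a⁆ = ⁅q a b, a⁆ := by
      have hx := br_iff.1 (hdg a b ha hb)
      rw [Ring.lie_def, mul_sub, ← mul_assoc, ← mul_assoc, ← hx, ha.1, mul_assoc, ha.1]
    have h2 : ⁅q a b, a⁆ * e = ⁅q a b, a⁆ := by
      have hx := br_iff.1 (hdg a b ha hb)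
      rw [Ring.lie_def, sub_mul, mul_assoc, mul_assoc, hx, ha.2, ← mul_assoc, ha.2]
    have h3 : e * ⁅q a a, b⁆ * e = 0 := by
      rw [Ring.lie_def, mul_sub, sub_mul, ← mul_assoc e b, hb.left0 H.ef, mul_assoc, mul_assoc,
        hb.right0 H.fe]
      simp
    have := congrArg (fun t => t * e) this
    simp only [mul_add, add_mul, h1, h2, h3] at this
    simp only [zero_add, mul_zero, zero_mul] at this
    exact two0 R this
  have hcB : ∀ a b, Cor e e a → Cor f f b → ⁅q a b, b⁆ = 0 := by
    intro b a hb ha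
    rw [hq.symm]
    have hxf := H.lf0 (hdg b a hb ha)
    rw [hq.symm] at hxf
    have := congrArg (fun t => f * t) (hq.lin2 a b)
    have h1 : f * ⁅q a b, a⁆ = ⁅q a b, a⁆ := by
      have hx := br_iff.1 hxf
      rw [Ring.lie_def, mul_sub, ← mul_assoc, ← mul_assoc, ← hx, ha.1, mul_assoc, ha.1]
    have h2 : ⁅q a b, a⁆ * f = ⁅q a b, a⁆ := by
      have hx := br_iff.1 hxf
      rw [Ring.lie_def, sub_mul, mul_assoc, mul_assoc, hx, ha.2, ← mul_assoc, ha.2]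
    have h3 : f * ⁅q a a, b⁆ * f = 0 := by
      rw [Ring.lie_def, mul_sub, sub_mul, ← mul_assoc f b, hb.left0 H.fe, mul_assoc, mul_assoc,
        hb.right0 H.ef]
      simp
    have := congrArg (fun t => t * f) this
    simp only [mul_add, add_mul, h1, h2, h3] at this
    simp only [zero_add, mul_zero, zero_mul] at this
    exact two0 R this
  have hst : ∀ b, Cor f f b → ∃ θ, θ ∈ Subring.center P ∧ ∀ a, Cor e e a → ∃ ψ, Cor f f ψ ∧
      q a b - (θ * a + ψ) ∈ Subring.center P := by
    intro b hb
    obtain ⟨θ, hθ, h⟩ := hp ((cl e e).comp (q.flip b)) (fun a ha => Cor.mk H.ee H.ee _)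
      (fun a ha => by
        have h1 := br_iff.1 (hcA a b ha hb)
        show e * q a b * e * a = a * (e * q a b * e)
        rw [mul_assoc, ha.1, mul_assoc, h1, ← mul_assoc, ha.1, ← mul_assoc, ← mul_assoc, ha.2,
          ← h1, mul_assoc, ha.2])
    refine ⟨θ, hθ, fun a ha => ?_⟩
    have h' := h a ha
    rw [LinearMap.comp_apply, LinearMap.flip_apply, cl_apply] at h'
    obtain ⟨η, hη, h2⟩ := H.cenA _ ((Cor.mk H.ee H.ee (q a b)).sub (ha.zmul hθ)) h'
    refine ⟨f * (q a b - η) * f, Cor.mk H.ff H.ff _, ?_⟩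
    have h3 := H.splitd (br_iff.1 (hdg a b ha hb)).symm
    have h4 := H.splitd (zcomm hη e)
    have h5 : e * η * e = e * q a b * e - θ * a := by
      rw [h2, sub_mul, mul_assoc _ e e, H.ee, mul_assoc θ, ha.2]
    have h6 : q a b - (θ * a + f * (q a b - η) * f) = η := by
      calc _ = (e * q a b * e + f * q a b * f) - (θ * a + f * (q a b - η) * f) := by rw [← h3]
        _ = (e * q a b * e - θ * a) + f * η * f := by noncomm_ring
        _ = e * η * e + f * η * f := by rw [h5]
        _ = η := h4.symm
    rw [h6]; exact hη
  choose! θ hθ hst using hst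
  choose! ψ hψ hst using hst
  have key : ∀ a b, Cor e e a → Cor f f b → ψ b a = ψ f a * b := by
    intro a b ha hb
    have hE : ∀ a m b, Cor e e a → Cor e f m → Cor f f b → e * q a m * f * b - a * (e * q m b * f) +
        (θ b * a * m - m * ψ b a) = 0 := by
      intro a m b ha hm hb
      have := congrArg (fun t => e * t * f) (hq.cyc a m b)
      simp only [mul_add, add_mul] at this
      have h1 : ⁅q a b, m⁆ = θ b * a * m - m * ψ b a := by
        have : q a b = (q a b - (θ b * a + ψ b a)) + (θ b * a + ψ b a) := by abel
        rw [this, add_br, zlie (hst b hb a ha), Ring.lie_def, mul_add, add_mul,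
          (hψ b hb a ha).mul0 H.fe hm, hm.mul0 H.fe (ha.zmul (hθ b hb))]
        simp
      rw [h1, H.MB _ hb, H.MA _ ha, H.corM (((ha.zmul (hθ b hb)).mul hm).sub (hm.mul (hψ b hb a ha)))]
        at this
      rw [sub_eq_add_neg]; simpa using this
    have hE2 : ∀ a m, Cor e e a → Cor e f m →
        m * (ψ f a * b - ψ b a) + a * m * (ψ b e - ψ f e * b) = 0 := by
      intro a m ha hm
      have k1 := hE a m b ha hm hb
      have k2 := congrArg (· * b) (hE a m f ha hm H.cf)
      have k3 := congrArg (a * ·) (hE e m b H.ce hm hb)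
      have k4 := congrArg (a * · * b) (hE e m f H.ce hm H.cf)
      have u1 : ∀ x, e * x * f * f = e * x * f := fun x => by rw [mul_assoc _ f, H.ff]
      have u2 : ∀ x, e * (e * x * f) = e * x * f := fun x => by
        rw [← mul_assoc, ← mul_assoc, H.ee]
      simp only [u1, u2, mul_assoc (θ _) e, hm.1] at k2 k3 k4
      simp only [mul_sub, mul_add, sub_mul, add_mul, mul_zero, zero_mul] at k1 k2 k3 k4
      simp only [mul_assoc, zlcomm (hθ b hb) a, zlcomm (hθ f H.cf) a] at k1 k2 k3 k4
      simp only [mul_sub, mul_assoc]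
      have : ∀ p1 p2 p3 p4 : P, p1 = 0 → p2 = 0 → p3 = 0 → p4 = 0 → p1 - p2 - p3 + p4 = 0 := by
        intro p1 p2 p3 p4 h1 h2 h3 h4; rw [h1, h2, h3, h4]; simp
      rw [← this _ _ _ _ k1 k2 k3 k4]
      abel
    have hγ : ψ b e - ψ f e * b = 0 := by
      apply H.comA ((hψ b hb e H.ce).sub ((hψ f H.cf e H.ce).mul hb))
      intro a a' ha ha' m hm
      have k1 := hE2 a (a' * m) ha (ha'.mul hm)
      have k2 := congrArg (a' * ·) (hE2 a m ha hm)
      have : ∀ p1 p2 : P, p1 = 0 → p2 = 0 → p1 - p2 = 0 := by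
        intro p1 p2 h1 h2; rw [h1, h2]; simp
      simp only [mul_zero] at k2
      rw [← this _ _ k1 k2]
      noncomm_ring
    have := H.faithR (((hψ f H.cf a ha).mul hb).sub (hψ b hb a ha)) (fun m hm => by
      have := hE2 a m ha hm
      rwa [hγ, mul_zero, add_zero] at this)
    exact (sub_eq_zero.1 this).symm
  have hκ : ∀ a, Cor e e a → ∃ κ ∈ Subring.center P, ∀ b, Cor f f b →
      q a b - (θ b * a + κ * b) ∈ Subring.center P := by
    intro a ha
    have hcom : ∀ b, Cor f f b → ψ f a * b * b = b * (ψ f a * b) := by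
      intro b hb
      rw [← key a b ha hb]
      rw [← br_iff]
      have : ψ b a = q a b - (q a b - (θ b * a + ψ b a)) - θ b * a := by abel
      rw [this, sub_br, sub_br, hcB a b ha hb, zlie (hst b hb a ha), Ring.lie_def,
        (ha.zmul (hθ b hb)).mul0 H.ef hb, hb.mul0 H.fe (ha.zmul (hθ b hb))]
      simp
    have hk := hψ f H.cf a ha
    obtain ⟨κ, hκ, h⟩ := H.cenB _ hk (fun b hb => by
      have k1 := hcom (b + f) (hb.add H.cf)
      have k2 := hcom b hb
      have hkf : ψ f a * b * f = ψ f a * b := by rw [mul_assoc, hb.2]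
      simp only [mul_add, add_mul, hb.1, hb.2, hk.1, hk.2, k2, H.ff, hkf] at k1
      rw [← mul_assoc f, hk.1] at k1
      rw [← sub_eq_zero] at k1 ⊢
      rw [← k1]; abel)
    refine ⟨κ, hκ, fun b hb => ?_⟩
    have := hst b hb a ha
    rw [key a b ha hb, ← h, zcomm hκ, mul_assoc, hb.1] at this
    exact this
  choose! κ hκ hfin using hκ
  obtain ⟨μ1, hμ1, h1⟩ := H.mkLin ((q.flip f - LinearMap.mulLeft R (θ f)).comp (cl e e)) (fun x => by
    have hx := Cor.mk H.ee H.ee x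
    refine ⟨- κ (e * x * e), neg_mem (hκ _ hx), ?_⟩
    have := add_mem (hfin _ hx f H.cf) (hκ _ hx)
    convert this using 1
    simp only [LinearMap.comp_apply, LinearMap.sub_apply, LinearMap.flip_apply, cl_apply,
      LinearMap.mulLeft_apply]
    have : κ (e * x * e) = κ (e * x * e) * e + κ (e * x * e) * f := by
      rw [← mul_add, H.sum, mul_one]
    conv_rhs => rw [add_comm]; lhs; rw [this]
    noncomm_ring)
  have hμ1' : ∀ a, Cor e e a → μ1 a = - κ a := by
    intro a ha
    rw [← sub_eq_zero]
    apply H.ze0 (sub_mem (hμ1 _) (neg_mem (hκ _ ha)))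
    have := sub_mem (add_mem (hfin _ ha f H.cf) (hκ _ ha)) (h1 a)
    convert this using 1
    simp only [LinearMap.comp_apply, LinearMap.sub_apply, LinearMap.flip_apply, cl_apply,
      LinearMap.mulLeft_apply, ha.1, ha.2]
    have : κ a = κ a * e + κ a * f := by
      rw [← mul_add, H.sum, mul_one]
    conv_rhs => lhs; rw [add_comm]; lhs; rw [this]
    noncomm_ring
  obtain ⟨μ2, hμ2, h2⟩ := H.mkLin ((q e - LinearMap.mulLeft R (κ e)).comp (cl f f)) (fun x => by
    have hx := Cor.mk H.ff H.ff x
    refine ⟨θ (f * x * f), (hθ _ hx), ?_⟩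
    have := hfin _ H.ce _ hx
    convert this using 1
    simp only [LinearMap.comp_apply, LinearMap.sub_apply, cl_apply,
      LinearMap.mulLeft_apply]
    abel)
  have hμ2' : ∀ a, Cor f f a → μ2 a = θ a := by
    intro a ha
    rw [← sub_eq_zero]
    apply H.ze0 (sub_mem (hμ2 _) ((hθ _ ha)))
    have := sub_mem (hfin _ H.ce _ ha) (h2 a)
    convert this using 1
    simp only [LinearMap.comp_apply, LinearMap.sub_apply, cl_apply,
      LinearMap.mulLeft_apply, ha.1, ha.2]
    noncomm_ring
  have hμ : ∀ x, (μ2.comp (cl f f) - μ1.comp (cl e e)) x ∈ Subring.center P :=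
    fun x => sub_mem (hμ2 _) (hμ1 _)
  apply Good.of_sub (zero_mem _) hμ
  apply H.S2 (hq.sub (zero_mem _) hμ)
  intro a b ha hb
  have := hfin a ha b hb
  rw [qsub_apply]
  simp only [LinearMap.comp_apply, LinearMap.sub_apply, cl_apply, ha.1, ha.2, hb.1, hb.2,
    ha.left0 H.fe, hb.left0 H.ef, zero_mul, map_zero, hμ1' a ha, hμ2' b hb]
  convert this using 1
  noncomm_ring

end Loy
end trace

section opp
open MulOpposite
variable {R P : Type*} [CommRing R] [Ring P] [Algebra R P]

theorem cor_op {i j : P} {x : Pᵐᵒᵖ} : Cor (op i) (op j) x ↔ Cor j i (unop x) := by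
  unfold Cor
  constructor
  · rintro ⟨h1, h2⟩
    exact ⟨congrArg unop h2, congrArg unop h1⟩
  · rintro ⟨h1, h2⟩
    exact ⟨unop_injective h2, unop_injective h1⟩

theorem cen_op {z : Pᵐᵒᵖ} : z ∈ Subring.center Pᵐᵒᵖ ↔ unop z ∈ Subring.center P := by
  rw [Subring.mem_center_iff, Subring.mem_center_iff]
  constructor
  · intro h g
    exact (congrArg unop (h (op g))).symm
  · intro h g
    exact unop_injective (h (unop g)).symm

theorem Loy.op {e f : P} (H : Loy e f) : Loy (op f) (op e) where
  ee := unop_injective H.ff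
  ff := unop_injective H.ee
  ef := unop_injective H.ef
  fe := unop_injective H.fe
  sum := unop_injective (by simpa [add_comm] using H.sum)
  loyal := by
    intro a b ha hb h
    have := H.loyal _ _ (cor_op.1 hb) (cor_op.1 ha) (fun m hm => by
      have := h (MulOpposite.op m) (cor_op.2 hm)
      rw [mul_assoc]
      exact congrArg unop this)
    rcases this with h | h
    · exact Or.inr (unop_injective h)
    · exact Or.inl (unop_injective h)
  cenA := by
    intro a ha h
    obtain ⟨z, hz, h⟩ := H.cenB _ (cor_op.1 ha) (fun x hx =>
      (congrArg unop (h (MulOpposite.op x) (cor_op.2 hx))).symm)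
    exact ⟨MulOpposite.op z, cen_op.2 hz, unop_injective ((zcomm hz f).symm.trans h)⟩
  cenB := by
    intro a ha h
    obtain ⟨z, hz, h⟩ := H.cenA _ (cor_op.1 ha) (fun x hx =>
      (congrArg unop (h (MulOpposite.op x) (cor_op.2 hx))).symm)
    exact ⟨MulOpposite.op z, cen_op.2 hz, unop_injective ((zcomm hz e).symm.trans h)⟩
  ncA := by
    obtain ⟨a, b, ha, hb, h⟩ := H.ncB
    exact ⟨MulOpposite.op b, MulOpposite.op a, cor_op.2 hb, cor_op.2 ha,
      fun h' => h (congrArg unop h')⟩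
  ncB := by
    obtain ⟨a, b, ha, hb, h⟩ := H.ncA
    exact ⟨MulOpposite.op b, MulOpposite.op a, cor_op.2 hb, cor_op.2 ha,
      fun h' => h (congrArg unop h')⟩

theorem PropA.op {f : P} (hp : PropA R f) : PropA R (op f) := by
  intro F h1 h2
  obtain ⟨z, hz, h⟩ := hp ((opLinearEquiv R).symm.toLinearMap ∘ₗ F ∘ₗ (opLinearEquiv R).toLinearMap)
    (fun a ha => cor_op.1 (h1 _ (cor_op.2 ha)))
    (fun a ha => (congrArg unop (h2 (MulOpposite.op a) (cor_op.2 ha))).symm)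
  refine ⟨MulOpposite.op z, cen_op.2 hz, fun a ha x hx => unop_injective ?_⟩
  have := (h _ (cor_op.1 ha) _ (cor_op.1 hx)).symm
  rw [← zcomm hz] at this
  exact this

theorem Loy.S1op [Invertible (2 : R)] {e f : P} (H : Loy e f) {q : P →ₗ[R] P →ₗ[R] P} (hq : CT q)
    (hp : PropA R f) : Good q := by
  let u : Pᵐᵒᵖ →ₗ[R] P := (opLinearEquiv R).symm.toLinearMap
  let o : P →ₗ[R] Pᵐᵒᵖ := (opLinearEquiv R).toLinearMap
  have hq' : CT ((q.compl₁₂ u u).compr₂ o) := by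
    refine ⟨fun x y => ?_, fun x => ?_⟩
    · exact congrArg MulOpposite.op (hq.symm (unop x) (unop y))
    · rw [br_iff]
      have := br_iff.1 (hq.com (unop x))
      exact unop_injective this.symm
  obtain ⟨c, hc, μ, hμ, h⟩ := H.op.S1 hq' hp.op
  refine ⟨unop c, cen_op.1 hc, u ∘ₗ μ ∘ₗ o, fun x => cen_op.1 (hμ _), fun x y => ?_⟩
  have := cen_op.1 (h (MulOpposite.op x) (MulOpposite.op y))
  rw [qsub_apply] at this ⊢
  convert this using 1
  have h1 := zcomm (cen_op.1 hc)
  have h2 := fun x => zcomm (cen_op.1 (hμ x))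
  simp only [unop_sub, unop_add, unop_mul, unop_op, h1, h2]
  rw [add_comm (y * x)]
  rfl
end opp

section gma
variable {R A B M N G : Type*} [CommRing R]
    [Ring A] [Algebra R A] [Ring B] [Algebra R B]
    [AddCommGroup M] [Module R M] [AddCommGroup N] [Module R N]
    [Ring G] [Algebra R G] (h : GMA R A B M N G)

theorem g_eM (m : M) : h.ιA 1 * h.ιM m = h.ιM m := by
  have := one_mul (h.ιM m)
  rwa [h.one_def, add_mul, h.mul_BM, add_zero] at this
theorem g_Mf (m : M) : h.ιM m * h.ιB 1 = h.ιM m := by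
  have := mul_one (h.ιM m)
  rwa [h.one_def, mul_add, h.mul_MA, zero_add] at this
theorem g_fN (n : N) : h.ιB 1 * h.ιN n = h.ιN n := by
  have := one_mul (h.ιN n)
  rwa [h.one_def, add_mul, h.mul_AN, zero_add] at this
theorem g_Ne (n : N) : h.ιN n * h.ιA 1 = h.ιN n := by
  have := mul_one (h.ιN n)
  rwa [h.one_def, mul_add, h.mul_NB, add_zero] at this

theorem g_cA (a : A) : Cor (h.ιA 1) (h.ιA 1) (h.ιA a) := by
  constructor <;> rw [h.mul_AA] <;> simp
theorem g_cB (b : B) : Cor (h.ιB 1) (h.ιB 1) (h.ιB b) := by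
  constructor <;> rw [h.mul_BB] <;> simp
theorem g_cM (m : M) : Cor (h.ιA 1) (h.ιB 1) (h.ιM m) := ⟨g_eM h m, g_Mf h m⟩
theorem g_cN (m : N) : Cor (h.ιB 1) (h.ιA 1) (h.ιN m) := ⟨g_fN h m, g_Ne h m⟩

theorem g_exe (x : G) : h.ιA 1 * x * h.ιA 1 = h.ιA (h.pA x) := by
  conv_lhs => rw [h.decomp x]
  simp only [mul_add, add_mul, h.mul_AA, g_eM, h.mul_MA, h.mul_AN, h.mul_AB, zero_mul, one_mul,
    mul_one, add_zero]
theorem g_fxf (x : G) : h.ιB 1 * x * h.ιB 1 = h.ιB (h.pB x) := by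
  conv_lhs => rw [h.decomp x]
  simp only [mul_add, add_mul, h.mul_BB, g_fN, h.mul_NB, h.mul_BM, h.mul_BA, zero_mul, one_mul,
    mul_one, add_zero, zero_add]
theorem g_exf (x : G) : h.ιA 1 * x * h.ιB 1 = h.ιM (h.pM x) := by
  conv_lhs => rw [h.decomp x]
  simp only [mul_add, add_mul, h.mul_AA, g_eM, g_Mf, h.mul_AN, h.mul_AB, zero_mul, one_mul,
    mul_one, add_zero, zero_add]

theorem g_A {x : G} (hx : Cor (h.ιA 1) (h.ιA 1) x) : h.ιA (h.pA x) = x := by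
  rw [← g_exe, hx.1, hx.2]
theorem g_B {x : G} (hx : Cor (h.ιB 1) (h.ιB 1) x) : h.ιB (h.pB x) = x := by
  rw [← g_fxf, hx.1, hx.2]
theorem g_M {x : G} (hx : Cor (h.ιA 1) (h.ιB 1) x) : h.ιM (h.pM x) = x := by
  rw [← g_exf, hx.1, hx.2]

theorem g_iA {a b : A} (hh : h.ιA a = h.ιA b) : a = b := by
  rw [← h.pA_ιA a, hh, h.pA_ιA]
theorem g_iB {a b : B} (hh : h.ιB a = h.ιB b) : a = b := by
  rw [← h.pB_ιB a, hh, h.pB_ιB]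
theorem g_iM {a b : M} (hh : h.ιM a = h.ιM b) : a = b := by
  rw [← h.pM_ιM a, hh, h.pM_ιM]
theorem g_iN {a b : N} (hh : h.ιN a = h.ιN b) : a = b := by
  rw [← h.pN_ιN a, hh, h.pN_ιN]

theorem g_zA {z : G} (hz : z ∈ Subring.center G) : h.ιA 1 * z = h.ιA (h.pA z) := by
  rw [← g_exe, mul_assoc, ← zcomm hz, ← mul_assoc, h.mul_AA, one_mul]
theorem g_zB {z : G} (hz : z ∈ Subring.center G) : h.ιB 1 * z = h.ιB (h.pB z) := by
  rw [← g_fxf, mul_assoc, ← zcomm hz, ← mul_assoc, h.mul_BB, one_mul]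

theorem nc_of {A : Type*} [Ring A] (h2A' : (Subring.center A : Set A) ≠ Set.univ) :
    ∃ a a' : A, a * a' - a' * a ≠ 0 := by
  by_contra hcon
  push Not at hcon
  exact h2A' (Set.eq_univ_of_forall fun a => Subring.mem_center_iff.2 fun g =>
    sub_eq_zero.1 (hcon g a))

theorem g_loy
    (h2A : h.pA '' (Subring.center G : Set G) = (Subring.center A : Set A))
    (h2A' : (Subring.center A : Set A) ≠ Set.univ)
    (h2B : h.pB '' (Subring.center G : Set G) = (Subring.center B : Set B))
    (h2B' : (Subring.center B : Set B) ≠ Set.univ)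
    (h4 : ∀ (a : A) (b : B),
            (∀ m : M, h.ιA a * h.ιM m * h.ιB b = 0) → a = 0 ∨ b = 0) :
    Loy (h.ιA 1) (h.ιB 1) where
  ee := by rw [h.mul_AA, one_mul]
  ff := by rw [h.mul_BB, one_mul]
  ef := h.mul_AB _ _
  fe := h.mul_BA _ _
  sum := h.one_def.symm
  loyal := by
    intro a b ha hb hm
    rw [← g_A h ha, ← g_B h hb] at hm ⊢
    rcases h4 _ _ (fun m => hm _ (g_cM h m)) with h | h
    · left; rw [h, map_zero]
    · right; rw [h, map_zero]
  cenA := by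
    intro a ha hc
    have : h.pA a ∈ (Subring.center A : Set A) := by
      refine Subring.mem_center_iff.2 fun g => g_iA h ?_
      rw [← h.mul_AA, ← h.mul_AA, g_A h ha, hc _ (g_cA h g)]
    rw [← h2A] at this
    obtain ⟨z, hz, hz'⟩ := this
    exact ⟨z, hz, by rw [g_zA h hz, hz', g_A h ha]⟩
  cenB := by
    intro a ha hc
    have : h.pB a ∈ (Subring.center B : Set B) := by
      refine Subring.mem_center_iff.2 fun g => g_iB h ?_
      rw [← h.mul_BB, ← h.mul_BB, g_B h ha, hc _ (g_cB h g)]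
    rw [← h2B] at this
    obtain ⟨z, hz, hz'⟩ := this
    exact ⟨z, hz, by rw [g_zB h hz, hz', g_B h ha]⟩
  ncA := by
    obtain ⟨a, a', hh⟩ := nc_of h2A'
    refine ⟨_, _, g_cA h a, g_cA h a', fun h0 => hh (g_iA h ?_)⟩
    rw [map_sub, ← h.mul_AA, ← h.mul_AA, h0, map_zero]
  ncB := by
    obtain ⟨a, a', hh⟩ := nc_of h2B'
    refine ⟨_, _, g_cB h a, g_cB h a', fun h0 => hh (g_iB h ?_)⟩
    rw [map_sub, ← h.mul_BB, ← h.mul_BB, h0, map_zero]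

theorem g_propA
    (h2A : h.pA '' (Subring.center G : Set G) = (Subring.center A : Set A))
    (h1 : ∀ f : A →ₗ[R] A, (∀ a, f a * a = a * f a) →
            ∃ z ∈ Subring.center A, ∃ η : A →ₗ[R] A,
              (∀ a, η a ∈ Subring.center A) ∧ ∀ a, f a = z * a + η a) :
    PropA R (h.ιA 1) := by
  intro F hF hF2
  obtain ⟨z, hz, η, hη, hh⟩ := h1 (h.pA ∘ₗ F ∘ₗ h.ιA) (fun a => g_iA h (by
    simp only [LinearMap.comp_apply]
    rw [← h.mul_AA, ← h.mul_AA, g_A h (hF _ (g_cA h a)), hF2 _ (g_cA h a)]))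
  have hz' : z ∈ h.pA '' (Subring.center G : Set G) := by rw [h2A]; exact hz
  obtain ⟨w, hw, rfl⟩ := hz'
  refine ⟨w, hw, fun a ha x hx => ?_⟩
  have h3 : F a - w * a = h.ιA (η (h.pA a)) := by
    have := hh (h.pA a)
    simp only [LinearMap.comp_apply] at this
    rw [g_A h ha] at this
    rw [← g_A h (hF a ha), this, map_add, ← h.mul_AA, g_A h ha, ← g_zA h hw, zcomm hw, mul_assoc,
      ha.1]
    abel
  rw [h3, ← g_A h hx, h.mul_AA, h.mul_AA, Subring.mem_center_iff.1 (hη _)]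

theorem g_propB
    (h2B : h.pB '' (Subring.center G : Set G) = (Subring.center B : Set B))
    (h1 : ∀ f : B →ₗ[R] B, (∀ a, f a * a = a * f a) →
            ∃ z ∈ Subring.center B, ∃ η : B →ₗ[R] B,
              (∀ a, η a ∈ Subring.center B) ∧ ∀ a, f a = z * a + η a) :
    PropA R (h.ιB 1) := by
  intro F hF hF2
  obtain ⟨z, hz, η, hη, hh⟩ := h1 (h.pB ∘ₗ F ∘ₗ h.ιB) (fun a => g_iB h (by
    simp only [LinearMap.comp_apply]
    rw [← h.mul_BB, ← h.mul_BB, g_B h (hF _ (g_cB h a)), hF2 _ (g_cB h a)]))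
  have hz' : z ∈ h.pB '' (Subring.center G : Set G) := by rw [h2B]; exact hz
  obtain ⟨w, hw, rfl⟩ := hz'
  refine ⟨w, hw, fun a ha x hx => ?_⟩
  have h3 : F a - w * a = h.ιB (η (h.pB a)) := by
    have := hh (h.pB a)
    simp only [LinearMap.comp_apply] at this
    rw [g_B h ha] at this
    rw [← g_B h (hF a ha), this, map_add, ← h.mul_BB, g_B h ha, ← g_zB h hw, zcomm hw, mul_assoc,
      ha.1]
    abel
  rw [h3, ← g_B h hx, h.mul_BB, h.mul_BB, Subring.mem_center_iff.1 (hη _)]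
end gma

section main
set_option linter.unusedSectionVars false
variable {R G P : Type*} [CommRing R] [Invertible (2 : R)] [Ring G] [Algebra R G] [Ring P] [Algebra R P]
variable {e f : P}

theorem ex_mu (l : G ≃ₗ[R] P) (hL : ∀ x y : G, l (x * y - y * x) = l x * l y - l y * l x)
    (hG : ∀ q : P →ₗ[R] P →ₗ[R] P, CT q → Good q) :
    ∃ c ∈ Subring.center P, ∃ μ : G →ₗ[R] P, (∀ x, μ x ∈ Subring.center P) ∧
      ∀ x y, l (x * y + y * x) - (c * (l x * l y + l y * l x) + (μ x * l y + μ y * l x))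
        ∈ Subring.center P := by
  let s : G →ₗ[R] G →ₗ[R] G := LinearMap.mul R G + (LinearMap.mul R G).flip
  let q : P →ₗ[R] P →ₗ[R] P :=
    (s.compl₁₂ l.symm.toLinearMap l.symm.toLinearMap).compr₂ l.toLinearMap
  have hqa : ∀ x y, q x y = l (l.symm x * l.symm y + l.symm y * l.symm x) := fun x y => rfl
  have hq : CT q := by
    refine ⟨fun x y => ?_, fun x => ?_⟩
    · rw [hqa, hqa, add_comm]
    · rw [hqa, Ring.lie_def]
      conv_lhs => lhs; rhs; rw [← l.apply_symm_apply x]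
      conv_lhs => rhs; lhs; rw [← l.apply_symm_apply x]
      rw [← hL]
      convert map_zero l
      noncomm_ring
  obtain ⟨c, hc, μ, hμ, h⟩ := hG q hq
  refine ⟨c, hc, μ ∘ₗ l.toLinearMap, fun x => hμ _, fun x y => ?_⟩
  have := h (l x) (l y)
  rw [qsub_apply, hqa, l.symm_apply_apply, l.symm_apply_apply] at this
  exact this

theorem Loy.offmul (H : Loy e f) {x y : P} (hx : e * x * e = 0) (hx' : f * x * f = 0)
    (hy : e * y * e = 0) (hy' : f * y * f = 0) : e * (x * y) = (x * y) * e := by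
  have h1 : e * (x * y) * f = 0 := by
    calc _ = e * x * (e + f) * (y * f) := by rw [H.sum]; noncomm_ring
      _ = (e * x * e) * y * f + e * x * (f * y * f) := by noncomm_ring
      _ = 0 := by rw [hx, hy']; simp
  have h2 : f * (x * y) * e = 0 := by
    calc _ = f * x * (e + f) * (y * e) := by rw [H.sum]; noncomm_ring
      _ = (f * x * f) * y * e + f * x * (e * y * e) := by noncomm_ring
      _ = 0 := by rw [hx', hy]; simp
  calc e * (x * y) = e * (x * y) * (e + f) := by rw [H.sum, mul_one]
    _ = e * (x * y) * e + f * (x * y) * e := by rw [mul_add, h1, h2]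
    _ = (e + f) * (x * y) * e := by noncomm_ring
    _ = _ := by rw [H.sum, one_mul]

theorem Loy.tsq (H : Loy e f) {t w : P} (ht : t ∈ Subring.center P) (ht0 : t ≠ 0)
    (hw : t * w ∈ Subring.center P) (x : P) : ⁅w, ⁅w, x⁆⁆ = 0 := by
  have hT : ∀ x, t * ⁅w, x⁆ = 0 := by
    intro x
    have := zcomm hw x
    rw [Ring.lie_def, mul_sub, ← mul_assoc, ← this, zlcomm ht, sub_self]
  have hA : ∀ y, t * y = 0 → e * y * e = 0 := by
    intro y hy
    refine (H.tfA ht (Cor.mk H.ee H.ee y) ?_).resolve_left ht0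
    rw [← mul_assoc, ← mul_assoc, ← zcomm ht e, mul_assoc e, hy]; simp
  have hB : ∀ y, t * y = 0 → f * y * f = 0 := by
    intro y hy
    refine (H.tfB ht (Cor.mk H.ff H.ff y) ?_).resolve_left ht0
    rw [← mul_assoc, ← mul_assoc, ← zcomm ht f, mul_assoc f, hy]; simp
  obtain ⟨z, hz, h1⟩ := H.cenA (e * w * e) (Cor.mk H.ee H.ee w) (fun a ha => by
    have := hA _ (hT a)
    rw [← sub_eq_zero, ← this, Ring.lie_def, mul_assoc _ e a, ha.1, ← mul_assoc a, ← mul_assoc a,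
      ha.2, mul_sub, sub_mul, ← mul_assoc e a, ha.1, mul_assoc e w a, mul_assoc e (w * a), mul_assoc w a, ha.2])
  obtain ⟨z', hz', h2⟩ := H.cenB (f * w * f) (Cor.mk H.ff H.ff w) (fun a ha => by
    have := hB _ (hT a)
    rw [← sub_eq_zero, ← this, Ring.lie_def, mul_assoc _ f a, ha.1, ← mul_assoc a, ← mul_assoc a,
      ha.2, mul_sub, sub_mul, ← mul_assoc f a, ha.1, mul_assoc f w a, mul_assoc f (w * a), mul_assoc w a, ha.2])
  have h3 : t * (z - z') = 0 := by
    apply H.zM0 (mul_mem ht (sub_mem hz hz'))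
    intro m hm
    have := congrArg (fun y => e * y * f) (hT m)
    beta_reduce at this
    rw [zlcomm ht, mul_assoc, H.MM _ hm, ← h1, ← h2, mul_assoc e z, ← zcomm hz, ← mul_assoc e,
      hm.1, ← mul_assoc m, hm.2, zcomm hz, zcomm hz'] at this
    rw [mul_assoc, sub_mul, this]; simp
  have h4 : z = z' := by
    have := (H.zdom ht (sub_mem hz hz') h3).resolve_left ht0
    exact sub_eq_zero.1 this
  rw [← h4] at h2
  have hbr : ∀ x : P, ⁅w, x⁆ = ⁅w - z, x⁆ := by
    intro x; rw [sub_br, zlie hz, sub_zero]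
  have hu1 : e * (w - z) * e = 0 := by
    rw [mul_sub, sub_mul, ← h1, mul_assoc e z, ← zcomm hz, ← mul_assoc, H.ee, sub_self]
  have hu2 : f * (w - z) * f = 0 := by
    rw [mul_sub, sub_mul, ← h2, mul_assoc f z, ← zcomm hz, ← mul_assoc, H.ff, sub_self]
  rw [hbr, Ring.lie_def]
  have hD := hT x
  have k1 : (w - z) * ⁅w, x⁆ = 0 := by
    rw [H.splitd (H.offmul hu1 hu2 (hA _ hD) (hB _ hD)), hA, hB, add_zero] <;>
    rw [← zlcomm ht, hD, mul_zero]
  have k2 : ⁅w, x⁆ * (w - z) = 0 := by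
    rw [H.splitd (H.offmul (hA _ hD) (hB _ hD) hu1 hu2), hA, hB, add_zero] <;>
    rw [← mul_assoc, hD, zero_mul]
  rw [k1, k2, sub_zero]

theorem one_cen (l : G ≃ₗ[R] P) (hL : ∀ x y : G, l (x * y - y * x) = l x * l y - l y * l x) 
    {z : G} (hz : z ∈ Subring.center G) : l z ∈ Subring.center P := by
  rw [Subring.mem_center_iff]
  intro g
  have := hL (l.symm g) z
  rw [l.apply_symm_apply, zcomm hz, sub_self, map_zero] at this
  exact (sub_eq_zero.1 this.symm)

theorem cen_one (l : G ≃ₗ[R] P) (hL : ∀ x y : G, l (x * y - y * x) = l x * l y - l y * l x) 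
    {z : G} (hz : l z ∈ Subring.center P) : z ∈ Subring.center G := by
  rw [Subring.mem_center_iff]
  intro g
  have := hL g z
  rw [zcomm hz, sub_self] at this
  exact sub_eq_zero.1 (l.map_eq_zero_iff.1 this)

theorem Loy.c_ne (H : Loy e f) (l : G ≃ₗ[R] P)
    (hL : ∀ x y : G, l (x * y - y * x) = l x * l y - l y * l x)
    {E F : G} (EE : E * E = E) (FF : F * F = F) (EF : E * F = 0) (FE : F * E = 0) (sum : E + F = 1)
    (hF : F ∉ Subring.center G)
    (h3 : (∃ a a', Cor E E a ∧ Cor E E a' ∧ a * a' ≠ a' * a) ∨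
      (∃ a a', Cor F F a ∧ Cor F F a' ∧ a * a' ≠ a' * a))
    {μ : G →ₗ[R] P} (hμ : ∀ x, μ x ∈ Subring.center P)
    (h : ∀ x y, l (x * y + y * x) - (μ x * l y + μ y * l x) ∈ Subring.center P) : False := by
  have hl1 := one_cen l hL (one_mem _)
  have m1 : μ 1 = 2 := by
    have hm : (2 - μ 1) ∈ Subring.center P := sub_mem (by
      have := add_mem (one_mem (Subring.center P)) (one_mem (Subring.center P))
      rwa [one_add_one_eq_two] at this) (hμ 1)
    have : ∀ p, (2 - μ 1) * p ∈ Subring.center P := by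
      intro p
      have h1 := add_mem (h (l.symm p) 1) (mul_mem (hμ (l.symm p)) hl1)
      rw [mul_one, one_mul, map_add, l.apply_symm_apply] at h1
      convert h1 using 1
      rw [sub_mul, two_mul]; abel
    obtain ⟨a, a', ha, ha', hne⟩ := H.ncA
    refine (sub_eq_zero.1 ((H.tfA hm ((ha.mul ha').sub (ha'.mul ha)) ?_).resolve_right hne)).symm
    have := zcomm (this a) a'
    rw [mul_sub, ← mul_assoc, ← this, zlcomm hm, sub_self]
  have hEF : l E = l 1 - l F := by rw [← sum, map_add]; abel
  have mm : μ E = μ F := by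
    by_contra hne
    have hz : μ E - μ F ∈ Subring.center P := sub_mem (hμ _) (hμ _)
    have h1 := h E F
    rw [EF, FE, add_zero, map_zero, hEF] at h1
    have h2 := add_mem h1 (mul_mem (hμ F) hl1)
    have h3 : (μ E - μ F) * l F ∈ Subring.center P := by
      have := neg_mem h2
      convert this using 1
      noncomm_ring
    have h4 := H.tsq hz (sub_ne_zero.2 hne) h3
    apply hF
    apply mem_of_lie
    intro x
    have h5 := h4 (l (F * x - x * F))
    rw [Ring.lie_def, Ring.lie_def, ← hL, ← hL] at h5
    rw [Ring.lie_def]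
    have h6 := l.map_eq_zero_iff.1 h5
    have F2 : ∀ y, F * (F * y) = F * y := fun y => by rw [← mul_assoc, FF]
    have h7 : F * (F * (F * x - x * F) - (F * x - x * F) * F) -
      (F * (F * x - x * F) - (F * x - x * F) * F) * F = F * x - x * F := by
      simp only [mul_sub, sub_mul, mul_assoc, FF, F2]
      abel
    rw [h7] at h6
    exact h6
  have mF : μ F = 1 := by
    rw [← sum, map_add, mm, ← one_add_one_eq_two] at m1
    rw [← sub_eq_zero]
    apply two0 R
    rw [← sub_eq_zero] at m1
    rw [← m1]; abel
  have mE : μ E = 1 := by rw [mm, mF]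
  have gen : ∀ U V : G, U * V = 0 → V * U = 0 → μ V = 1 → ∀ a a', Cor U U a → Cor U U a' →
      a * a' = a' * a := by
    intro U V UV VU hV a a' ha ha'
    have k : ∀ a, Cor U U a → μ a * l V + l a ∈ Subring.center P := by
      intro a ha
      have := h a V
      rw [ha.left0 VU, ha.right0 UV, hV, one_mul, add_zero, map_zero, zero_sub] at this
      simpa using neg_mem this
    rw [← sub_eq_zero, ← l.map_eq_zero_iff, hL]
    have k1 := k a ha
    have k2 := k a' ha'
    have e1 : l a = (μ a * l V + l a) - μ a * l V := by abel
    have e2 : l a' = (μ a' * l V + l a') - μ a' * l V := by abel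
    have e3 : μ a * l V * (μ a' * l V) = μ a' * l V * (μ a * l V) := by
      rw [zlcomm (hμ a'), mul_assoc, mul_assoc, zlcomm (hμ a), zlcomm (hμ a)]
      exact zlcomm (hμ a') _ _
    rw [← Ring.lie_def, e1, e2]
    generalize μ a * l V + l a = s at k1 ⊢
    generalize μ a' * l V + l a' = s' at k2 ⊢
    rw [sub_br, zlie k1, zero_sub, br_sub, Ring.lie_def, zcomm k2, sub_self, zero_sub, neg_neg,
      br_iff, e3]
  rcases h3 with ⟨a, a', ha, ha', hne⟩ | ⟨a, a', ha, ha', hne⟩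
  · exact hne (gen E F EF FE mF a a' ha ha')
  · exact hne (gen F E FE EF mE a a' ha ha')

theorem Loy.c_sq (H : Loy e f) (l : G ≃ₗ[R] P)
    (hL : ∀ x y : G, l (x * y - y * x) = l x * l y - l y * l x)
    {c : P} (hc : c ∈ Subring.center P) (hc0 : c ≠ 0)
    {μ : G →ₗ[R] P} (hμ : ∀ x, μ x ∈ Subring.center P)
    (h : ∀ x y, l (x * y + y * x) - (c * (l x * l y + l y * l x) + (μ x * l y + μ y * l x))
        ∈ Subring.center P) : c = 1 ∨ c = -1 := by
  obtain ⟨m, hm⟩ : ∃ m : G →ₗ[R] P, ∀ x, m x = c * l x + (⅟2 : R) • μ x :=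
    ⟨LinearMap.mulLeft R c ∘ₗ l.toLinearMap + (⅟2 : R) • μ, fun x => rfl⟩
  have hhalf : ∀ x, (⅟2 : R) • μ x ∈ Subring.center P := fun x => smul_mem_c _ (hμ x)
  have hmL : ∀ x, m x - c * l x ∈ Subring.center P := by
    intro x; rw [hm, add_sub_cancel_left]; exact hhalf x
  have hJ : ∀ x y, m (x * y + y * x) - (m x * m y + m y * m x) ∈ Subring.center P := by
    intro x y
    have h1 := mul_mem hc (h x y)
    have h2 := hmL (x * y + y * x)
    have h3 := mul_mem (hhalf x) (hhalf y)
    have h4 := sub_mem (sub_mem (add_mem h1 h2) h3) h3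
    convert h4 using 1
    rw [hm x, hm y]
    have g1 := (half_add R (μ x)).symm
    have g2 := (half_add R (μ y)).symm
    have a1 := hhalf x
    have a2 := hhalf y
    generalize (⅟2 : R) • μ x = s at *
    generalize (⅟2 : R) • μ y = t at *
    rw [g1, g2]
    have b1 := zcomm a2 (c * l x)
    have b2 := zcomm a1 (c * l y)
    have b3 := zcomm a2 s
    have b4 := zlcomm hc (l x) (l y)
    have b5 := zlcomm hc (l y) (l x)
    have b6 := zlcomm hc s (l y)
    have b7 := zlcomm hc t (l x)
    simp only [mul_add, add_mul, mul_sub, mul_assoc] at b1 b2 b3 b4 b5 b6 b7 ⊢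
    simp only [b1, b2, b3, b4, b5, b6, b7]
    abel
  have hM : ∀ x y, m x * m y - m y * m x = c * (c * (l x * l y - l y * l x)) := by
    intro x y
    have : m x = c * l x + (m x - c * l x) := by abel
    have hx := hmL x
    have : m y = c * l y + (m y - c * l y) := by abel
    have hy := hmL y
    calc m x * m y - m y * m x = ⁅c * l x + (m x - c * l x), c * l y + (m y - c * l y)⁆ := by
          rw [Ring.lie_def]; congr 2 <;> abel
      _ = ⁅c * l x, c * l y⁆ := by
        rw [add_br, zlie hx, add_zero, br_add, br_iff.2 (zcomm hy _), add_zero]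
      _ = _ := by
        rw [Ring.lie_def]
        simp only [mul_sub, mul_assoc, zlcomm hc]
  have key : ∀ u v w : P, ∃ α ∈ Subring.center P, ∃ β ∈ Subring.center P,
      (c * c * c - c) * ⁅⁅u, v⁆, w⁆ + (α * u + β * v) ∈ Subring.center P := by
    intro u v w
    obtain ⟨x, rfl⟩ := l.surjective u
    obtain ⟨z, rfl⟩ := l.surjective v
    obtain ⟨y, rfl⟩ := l.surjective w
    have c1 := hJ y z
    have c2 := hJ x y
    refine ⟨2 * ((m (y * z + z * y) - (m y * m z + m z * m y)) * c), ?_,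
      - (2 * ((m (x * y + y * x) - (m x * m y + m y * m x)) * c)), ?_, ?_⟩
    · rw [two_mul]; exact add_mem (mul_mem c1 hc) (mul_mem c1 hc)
    · rw [two_mul]; exact neg_mem (add_mem (mul_mem c2 hc) (mul_mem c2 hc))
    have d1 := hJ x (y * z + z * y)
    have d2 := hJ (x * y + y * x) z
    have id1 : x * (y * z + z * y) + (y * z + z * y) * x -
      ((x * y + y * x) * z + z * (x * y + y * x)) = (x * z - z * x) * y - y * (x * z - z * x) := by
      noncomm_ring
    have d3 := hmL ((x * z - z * x) * y - y * (x * z - z * x))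
    rw [hL, hL] at d3
    have id2 : ∀ X Y Z : P, X * (Y * Z + Z * Y) + (Y * Z + Z * Y) * X -
      ((X * Y + Y * X) * Z + Z * (X * Y + Y * X)) = (X * Z - Z * X) * Y - Y * (X * Z - Z * X) := by
      intros; noncomm_ring
    have d4 := hM x z
    have d5 : (m x * m z - m z * m x) * m y - m y * (m x * m z - m z * m x) =
        c * c * c * ⁅⁅l x, l z⁆, l y⁆ := by
      rw [d4, ← Ring.lie_def]
      have : m y = c * l y + (m y - c * l y) := by abel
      rw [this, br_add, br_iff.2 (zcomm (hmL y) _), add_zero, Ring.lie_def, Ring.lie_def,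
        Ring.lie_def]
      simp only [mul_sub, mul_assoc, zlcomm hc, sub_mul]
    generalize hp : m (y * z + z * y) = p at *
    generalize hq : m (x * y + y * x) = q at *
    generalize hp' : p - (m y * m z + m z * m y) = p' at *
    generalize hq' : q - (m x * m y + m y * m x) = q' at *
    have e1 : p = p' + (m y * m z + m z * m y) := by rw [← hp']; abel
    have e2 : q = q' + (m x * m y + m y * m x) := by rw [← hq']; abel
    have d6 := sub_mem (sub_mem d1 d2) d3
    have d7 : (m (x * (y * z + z * y) + (y * z + z * y) * x) - (m x * p + p * m x) -
      (m ((x * y + y * x) * z + z * (x * y + y * x)) - (q * m z + m z * q)) -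
      (m ((x * z - z * x) * y - y * (x * z - z * x)) -
        c * ⁅⁅l x, l z⁆, l y⁆)) = -(c * c * c * ⁅⁅l x, l z⁆, l y⁆ - c * ⁅⁅l x, l z⁆, l y⁆ +
          2 * (p' * m x) - 2 * (q' * m z)) := by
      rw [← id1, map_sub, ← d5, ← id2, e1, e2]
      have f1 := zcomm c1 (m x)
      have f2 := zcomm c2 (m z)
      simp only [mul_add, add_mul, f1, f2]
      noncomm_ring
    simp only [Ring.lie_def] at d7 ⊢
    rw [d7] at d6
    have d8 := neg_mem d6
    have g1 := mul_mem c1 (hmL x)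
    have g2 := mul_mem c2 (hmL z)
    have d9 := add_mem (add_mem (sub_mem (sub_mem d8 g1) g1) g2) g2
    convert d9 using 1
    noncomm_ring
  have hcc : c * c * c - c = 0 := by
    have hz := sub_mem (mul_mem (mul_mem hc hc) hc) hc
    apply H.zcA hz
    intro a a' ha ha'
    apply H.faithL (((ha.mul ha').sub (ha'.mul ha)).zmul hz)
    intro w hw
    obtain ⟨α, hα, β, hβ, hh⟩ := key a a' w
    have h1 : e * ((c * c * c - c) * ⁅⁅a, a'⁆, w⁆ + (α * a + β * a')) * f = 0 := by
      rw [zcomm hh e, mul_assoc, H.ef, mul_zero]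
    have h2 : ⁅⁅a, a'⁆, w⁆ = (a * a' - a' * a) * w := by
      rw [Ring.lie_def a a', Ring.lie_def, hw.mul0 H.fe ((ha.mul ha').sub (ha'.mul ha)), sub_zero]
    have hd := ((ha.mul ha').sub (ha'.mul ha)).mul hw
    have k1 := (ha.zmul hα).right0 H.ef
    have k2 := (ha'.zmul hβ).right0 H.ef
    rw [h2, mul_add, mul_add, add_mul, add_mul, mul_assoc e (α * a), k1, mul_assoc e (β * a'), k2,
      mul_zero, add_zero, add_zero, (hd.zmul hz).1, (hd.zmul hz).2, ← mul_assoc] at h1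
    exact h1
  have h1 : c * ((c - 1) * (c + 1)) = 0 := by
    rw [← hcc]; noncomm_ring
  have h2 := (H.zdom hc (mul_mem (sub_mem hc (one_mem _)) (add_mem hc (one_mem _))) h1).resolve_left hc0
  rcases H.zdom (sub_mem hc (one_mem _)) (add_mem hc (one_mem _)) h2 with h | h
  · left; exact sub_eq_zero.1 h
  · right; exact eq_neg_of_add_eq_zero_left h

theorem Loy.hom1 (H : Loy e f) (l : G ≃ₗ[R] P)
    (hL : ∀ x y : G, l (x * y - y * x) = l x * l y - l y * l x)
    {μ : G →ₗ[R] P} (hμ : ∀ x, μ x ∈ Subring.center P)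
    (h : ∀ x y, l (x * y + y * x) - ((l x * l y + l y * l x) + (μ x * l y + μ y * l x))
        ∈ Subring.center P) :
    ∃ m : G →ₗ[R] P, (∀ x, l x - m x ∈ Subring.center P) ∧ ∀ x y, m (x * y) = m x * m y := by
  obtain ⟨m, hm⟩ : ∃ m : G →ₗ[R] P, ∀ x, m x = l x + (⅟2 : R) • μ x :=
    ⟨l.toLinearMap + (⅟2 : R) • μ, fun x => rfl⟩
  have hhalf : ∀ x, (⅟2 : R) • μ x ∈ Subring.center P := fun x => smul_mem_c _ (hμ x)
  have hmL : ∀ x, m x - l x ∈ Subring.center P := by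
    intro x; rw [hm, add_sub_cancel_left]; exact hhalf x
  have hM : ∀ x y, m x * m y - m y * m x = l x * l y - l y * l x := by
    intro x y
    have hx := hmL x
    have hy := hmL y
    calc m x * m y - m y * m x = ⁅l x + (m x - l x), l y + (m y - l y)⁆ := by
          rw [Ring.lie_def]; congr 2 <;> abel
      _ = ⁅l x, l y⁆ := by
        rw [add_br, zlie hx, add_zero, br_add, br_iff.2 (zcomm hy _), add_zero]
      _ = _ := rfl
  have hτ : ∀ x y, m (x * y) - m x * m y ∈ Subring.center P := by
    intro x y
    have h1 := h x y
    have h2 := hmL (x * y + y * x)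
    have h3 := mul_mem (hhalf x) (hhalf y)
    have h4 := sub_mem (sub_mem (add_mem h1 h2) h3) h3
    have h5 := hmL (x * y - y * x)
    rw [hL, ← hM] at h5
    have h6 := smul_mem_c (⅟2 : R) (add_mem h4 h5)
    convert h6 using 1
    have : ∀ A B : P, A + A = B → A = (⅟2 : R) • B := by
      intro A B hh
      rw [← hh, smul_add, half_add]
    apply this
    rw [map_add, map_sub, hm x, hm y]
    have g1 := (half_add R (μ x)).symm
    have g2 := (half_add R (μ y)).symm
    have a1 := hhalf x
    have a2 := hhalf y
    generalize (⅟2 : R) • μ x = s at *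
    generalize (⅟2 : R) • μ y = t at *
    rw [g1, g2]
    have b1 := zcomm a2 (l x)
    have b2 := zcomm a1 (l y)
    have b3 := zcomm a2 s
    simp only [mul_add, add_mul, b1, b2, b3, map_add]
    abel
  refine ⟨m, fun x => by simpa using neg_mem (hmL x), ?_⟩
  have hA : ∀ (x y : G) (p : P), (m (x * y) - m x * m y) * ⁅p, l x⁆ = 0 := by
    intro x y p
    obtain ⟨z, rfl⟩ := l.surjective p
    have t1 := hτ x y
    have t2 := hτ y z
    have t3 := hτ (x * y) z
    have t4 := hτ x (y * z)
    rw [← mul_assoc] at t4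
    have t5 : (m (x * y) - m x * m y) * m z - (m (y * z) - m y * m z) * m x ∈ Subring.center P := by
      rw [← zcomm t2]
      convert sub_mem t4 t3 using 1
      noncomm_ring
    generalize m (x * y) - m x * m y = s at *
    generalize m (y * z) - m y * m z = t at *
    have t6 := zlie t5 (m x)
    have : ⁅l z, l x⁆ = m z * m x - m x * m z := (hM z x).symm
    rw [this, ← t6, Ring.lie_def]
    simp only [mul_sub, sub_mul, mul_assoc, zlcomm t1, zlcomm t2]
    abel
  obtain ⟨a, a', ha, ha', hne⟩ := H.ncA
  have hB : ∀ x y, e * ⁅a', l x⁆ * e ≠ 0 → m (x * y) - m x * m y = 0 := by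
    intro x y hx
    refine (H.tfA (hτ x y) (Cor.mk H.ee H.ee _) ?_).resolve_right hx
    have := zlcomm (hτ x y) e (⁅a', l x⁆ * e)
    rw [mul_assoc e, ← this, ← mul_assoc _ _ e, hA]; simp
  have hC : e * ⁅a', a⁆ * e ≠ 0 := by
    have := (ha'.mul ha).sub (ha.mul ha')
    rw [Ring.lie_def, this.1, this.2]
    intro h0
    apply hne
    rw [← neg_eq_zero, ← h0]; abel
  intro x y
  by_cases hx : e * ⁅a', l x⁆ * e = 0
  · have k1 := hB (l.symm a) y (by rwa [l.apply_symm_apply])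
    have k2 := hB (x + l.symm a) y (by
      rwa [map_add, l.apply_symm_apply, br_add, mul_add, add_mul, hx, zero_add])
    rw [← sub_eq_zero]
    rw [add_mul, map_add, map_add, add_mul] at k2
    rw [← sub_eq_zero_of_eq (k2.trans k1.symm)]
    abel
  · exact sub_eq_zero.1 (hB x y hx)

open MulOpposite in
theorem Loy.homm1 (H : Loy e f) (l : G ≃ₗ[R] P)
    (hL : ∀ x y : G, l (x * y - y * x) = l x * l y - l y * l x)
    {μ : G →ₗ[R] P} (hμ : ∀ x, μ x ∈ Subring.center P)
    (h : ∀ x y, l (x * y + y * x) - (-(l x * l y + l y * l x) + (μ x * l y + μ y * l x))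
        ∈ Subring.center P) :
    ∃ m : G →ₗ[R] P, (∀ x, l x - m x ∈ Subring.center P) ∧ ∀ x y, m (x * y) = -(m y * m x) := by
  let k : G ≃ₗ[R] Pᵐᵒᵖ := (l.trans (LinearEquiv.neg R)).trans (opLinearEquiv R)
  have hk : ∀ x, k x = MulOpposite.op (- l x) := fun x => rfl
  let ν : G →ₗ[R] Pᵐᵒᵖ := (opLinearEquiv R).toLinearMap ∘ₗ μ
  have hν : ∀ x, ν x = MulOpposite.op (μ x) := fun x => rfl
  obtain ⟨m, h1, h2⟩ := H.op.hom1 k (fun x y => by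
    apply unop_injective
    simp only [hk, hL, unop_sub, unop_mul, unop_op]
    noncomm_ring) (μ := ν) (fun x => cen_op.2 (hμ x)) (fun x y => by
    rw [cen_op]
    have := neg_mem (h x y)
    convert this using 1
    simp only [hk, hν, unop_sub, unop_mul, unop_op, unop_add]
    have b1 := zcomm (hμ x) (l y)
    have b2 := zcomm (hμ y) (l x)
    simp only [neg_mul, b1, b2, map_add]
    noncomm_ring)
  refine ⟨-((opLinearEquiv R).symm.toLinearMap ∘ₗ m), fun x => ?_, fun x y => ?_⟩
  · have := neg_mem (cen_op.1 (h1 x))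
    convert this using 1
    simp [hk]
    abel
  · have := congrArg unop (h2 x y)
    rw [unop_mul] at this
    simp [this]
end main

end LieGMA

/-- **Theorem 4.3.**  Let `G = [A M; N B]` and `G' = [A' M'; N' B']` be generalized
matrix algebras over a commutative ring `R` with `1/2 ∈ R` and let `l : G → G'` be a
Lie isomorphism.  If
(1) every commuting `R`-linear map on `A'` or on `B'` is proper,
(2) `π_{A'}(Z(G')) = Z(A') ≠ A'` and `π_{B'}(Z(G')) = Z(B') ≠ B'`,
(3) at least one of `A`, `B` is noncommutative, and
(4) `M'` is loyal,
then `l = m + n`, where `m : G → G'` is an injective homomorphism or the negative of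
an injective anti-homomorphism and `n : G → Z(G')` is a linear map vanishing on each
commutator.  Moreover, if `G'` is central over `R`, then `m` is surjective. -/
theorem stmt14 (R A B M N G A' B' M' N' G' : Type*) [CommRing R]
    [Invertible (2 : R)]
    [Ring A] [Algebra R A] [Ring B] [Algebra R B]
    [AddCommGroup M] [Module R M] [AddCommGroup N] [Module R N]
    [Ring G] [Algebra R G]
    [Ring A'] [Algebra R A'] [Ring B'] [Algebra R B']
    [AddCommGroup M'] [Module R M'] [AddCommGroup N'] [Module R N']
    [Ring G'] [Algebra R G']
    (h : GMA R A B M N G) (h' : GMA R A' B' M' N' G')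
    (hMN : (∃ m : M, m ≠ 0) ∨ (∃ n : N, n ≠ 0))
    (hMN' : (∃ m : M', m ≠ 0) ∨ (∃ n : N', n ≠ 0))
    (l : G ≃ₗ[R] G')
    (hLie : ∀ x y : G, l (x * y - y * x) = l x * l y - l y * l x)
    (h1 : (∀ f : A' →ₗ[R] A', (∀ a, f a * a = a * f a) →
            ∃ z ∈ Subring.center A', ∃ η : A' →ₗ[R] A',
              (∀ a, η a ∈ Subring.center A') ∧ ∀ a, f a = z * a + η a) ∨
          (∀ f : B' →ₗ[R] B', (∀ b, f b * b = b * f b) →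
            ∃ z ∈ Subring.center B', ∃ η : B' →ₗ[R] B',
              (∀ b, η b ∈ Subring.center B') ∧ ∀ b, f b = z * b + η b))
    (h2A : h'.pA '' (Subring.center G' : Set G') = (Subring.center A' : Set A'))
    (h2A' : (Subring.center A' : Set A') ≠ Set.univ)
    (h2B : h'.pB '' (Subring.center G' : Set G') = (Subring.center B' : Set B'))
    (h2B' : (Subring.center B' : Set B') ≠ Set.univ)
    (h3 : (∃ a a' : A, a * a' ≠ a' * a) ∨ (∃ b b' : B, b * b' ≠ b' * b))
    (h4 : ∀ (a : A') (b : B'),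
            (∀ m : M', h'.ιA a * h'.ιM m * h'.ιB b = 0) → a = 0 ∨ b = 0) :
    ∃ m : G →ₗ[R] G', ∃ nm : G →ₗ[R] G',
      (∀ x : G, l x = m x + nm x) ∧
      Function.Injective m ∧
      ((∀ x y : G, m (x * y) = m x * m y) ∨ (∀ x y : G, m (x * y) = -(m y * m x))) ∧
      (∀ x : G, nm x ∈ Subring.center G') ∧
      (∀ x y : G, nm (x * y - y * x) = 0) ∧
      ((Subring.center G' : Set G') = Set.range (algebraMap R G') →
        Function.Surjective m) := by
  have H := LieGMA.g_loy h' h2A h2A' h2B h2B' h4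
  have hG : ∀ q : G' →ₗ[R] G' →ₗ[R] G', LieGMA.CT q → LieGMA.Good q := by
    intro q hq
    rcases h1 with h1 | h1
    · exact H.S1 hq (LieGMA.g_propA h' h2A h1)
    · exact H.S1op hq (LieGMA.g_propB h' h2B h1)
  obtain ⟨c, hc, μ, hμ, hμ2⟩ := LieGMA.ex_mu l hLie hG
  have hF : h.ιB 1 ∉ Subring.center G := by
    intro hF
    rcases hMN with ⟨m, hm⟩ | ⟨n, hn⟩
    · apply hm
      apply LieGMA.g_iM h
      rw [map_zero, ← LieGMA.g_Mf h m, LieGMA.zcomm hF, h.mul_BM]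
    · apply hn
      apply LieGMA.g_iN h
      rw [map_zero, ← LieGMA.g_fN h n, ← LieGMA.zcomm hF, h.mul_NB]
  have hc0 : c ≠ 0 := by
    rintro rfl
    refine H.c_ne l hLie (E := h.ιA 1) (F := h.ιB 1) (by rw [h.mul_AA, one_mul])
      (by rw [h.mul_BB, one_mul]) (h.mul_AB _ _) (h.mul_BA _ _) h.one_def.symm hF ?_ hμ
      (fun x y => by simpa using hμ2 x y)
    rcases h3 with ⟨a, a', hh⟩ | ⟨a, a', hh⟩
    · refine Or.inl ⟨_, _, LieGMA.g_cA h a, LieGMA.g_cA h a', fun h0 => hh ?_⟩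
      apply LieGMA.g_iA h
      rw [← h.mul_AA, ← h.mul_AA, h0]
    · refine Or.inr ⟨_, _, LieGMA.g_cB h a, LieGMA.g_cB h a', fun h0 => hh ?_⟩
      apply LieGMA.g_iB h
      rw [← h.mul_BB, ← h.mul_BB, h0]
  have hm : ∃ m : G →ₗ[R] G', (∀ x, l x - m x ∈ Subring.center G') ∧
      ((∀ x y : G, m (x * y) = m x * m y) ∨ (∀ x y : G, m (x * y) = -(m y * m x))) := by
    rcases H.c_sq l hLie hc hc0 hμ hμ2 with rfl | rfl
    · obtain ⟨m, k1, k2⟩ := H.hom1 l hLie hμ (fun x y => by simpa only [one_mul] using hμ2 x y)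
      exact ⟨m, k1, Or.inl k2⟩
    · obtain ⟨m, k1, k2⟩ := H.homm1 l hLie hμ (fun x y => by
        simpa only [neg_mul, one_mul] using hμ2 x y)
      exact ⟨m, k1, Or.inr k2⟩
  obtain ⟨m, k1, k2⟩ := hm
  have hker : ∀ x y, m x = 0 → m (x * y) = 0 := by
    intro x y hx
    rcases k2 with k2 | k2 <;> simp [k2, hx]
  have hkc : ∀ x, m x = 0 → x ∈ Subring.center G := by
    intro x hx
    apply LieGMA.cen_one l hLie
    have := k1 x
    rwa [hx, sub_zero] at this
  have hinj : Function.Injective m := by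
    rw [injective_iff_map_eq_zero]
    intro x hx
    have hxc := hkc x hx
    have hxm : ∀ n, x * h.ιM n = 0 := by
      intro n
      have h5 := LieGMA.zcomm (hkc _ (hker x (h.ιM n) hx)) (h.ιA 1)
      rw [LieGMA.zlcomm hxc, LieGMA.g_eM, mul_assoc, h.mul_MA, mul_zero] at h5
      exact h5
    have ha : h.pA x = 0 := h.faithful_left _ (fun n => by
      rw [← LieGMA.g_zA h hxc, mul_assoc, hxm, mul_zero])
    have hb : h.pB x = 0 := h.faithful_right _ (fun n => by
      rw [← LieGMA.g_zB h hxc, ← mul_assoc, LieGMA.g_Mf, LieGMA.zcomm hxc, hxm])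
    rw [← one_mul x, h.one_def, add_mul, LieGMA.g_zA h hxc, LieGMA.g_zB h hxc, ha, hb]
    simp
  refine ⟨m, l.toLinearMap - m, fun x => ?_, hinj, k2, k1, fun x y => ?_, fun hZ => ?_⟩
  · simp
  · have hx := k1 x
    have hy := k1 y
    have e1 : l x * l y - l y * l x = m x * m y - m y * m x := by
      have e2 : ⁅m x + (l x - m x), m y + (l y - m y)⁆ = ⁅m x, m y⁆ := by
        rw [LieGMA.add_br, LieGMA.zlie hx, add_zero, LieGMA.br_add,
          LieGMA.br_iff.2 (LieGMA.zcomm hy _), add_zero]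
      rw [add_sub_cancel, add_sub_cancel] at e2
      exact e2
    show l (x * y - y * x) - m (x * y - y * x) = 0
    rw [hLie, e1, map_sub]
    rcases k2 with k2 | k2 <;> rw [k2, k2] <;> abel
  · have h10 : (1 : G) ≠ 0 := by
      intro h0
      apply hF
      rw [← one_mul (h.ιB 1), h0, zero_mul]
      exact zero_mem _
    have hm0 : m 1 ≠ 0 := fun h0 => h10 (hinj (by rw [h0, map_zero]))
    have hm1 : m 1 ∈ Subring.center G' := by
      have := sub_mem (LieGMA.one_cen l hLie (one_mem _)) (k1 1)
      rwa [sub_sub_cancel] at this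
    have hu : ∃ u : G, m u = 1 := by
      rcases k2 with k2 | k2
      · refine ⟨1, ?_⟩
        have h5 := k2 1 1
        rw [mul_one] at h5
        refine sub_eq_zero.1 ((H.zdom hm1 (sub_mem hm1 (one_mem _)) ?_).resolve_left hm0)
        rw [mul_sub, mul_one, ← h5, sub_self]
      · refine ⟨-1, ?_⟩
        have h5 := k2 1 1
        rw [mul_one] at h5
        have := (H.zdom hm1 (add_mem hm1 (one_mem _)) (by
          rw [mul_add, mul_one, add_eq_zero_iff_neg_eq, ← h5])).resolve_left hm0
        rw [map_neg, eq_neg_of_add_eq_zero_left this, neg_neg]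
    obtain ⟨u, hu⟩ := hu
    intro p
    obtain ⟨x, rfl⟩ := l.surjective p
    have h5 : l x - m x ∈ (Subring.center G' : Set G') := k1 x
    rw [hZ] at h5
    obtain ⟨r, hr⟩ := h5
    refine ⟨x + r • u, ?_⟩
    rw [map_add, map_smul, hu, ← Algebra.algebraMap_eq_smul_one, hr]
    abel
end

section
/- Let T = [A M; O B] and T' = [A' M'; O B'] be triangular algebras over a commutative ring R with 1/2 ∈ R, and let l : T → T' be a Lie isomorphism. Suppose that (1) every commuting R-linear map on A' is proper, or every commuting R-linear map on B' is proper; (2) π_{A'}(Z(T')) = Z(A') ≠ A' and π_{B'}(Z(T')) = Z(B') ≠ B'; (3) at least one of A, B is noncommutative; and (4) M' is loyal. Then l = m + n, where m : T → T' is an injective algebra homomorphism or the negative of an injective algebra anti-homomorphism, and n : T → Z(T') is an R-linear map with n([x, y]) = 0 for all x, y ∈ T. Moreover, if Z(T') = R·1, then m is surjective. -/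
set_option linter.unusedSimpArgs false
set_option linter.unusedSectionVars false

theorem half_zero (R : Type*) {X : Type*} [CommRing R] [Invertible (2 : R)] [AddCommGroup X]
    [Module R X] {x : X} (h : x + x = 0) : x = 0 := by
  have h2 : (2 : R) • x = 0 := by rw [two_smul, h]
  have := congrArg (fun y => (⅟2 : R) • y) h2
  simpa [smul_smul] using this

structure Tri (R A C M T : Type*) [CommRing R] [Ring A] [Algebra R A] [Ring C] [Algebra R C]
    [AddCommGroup M] [Module R M] [Module A M] [Module C M]
    [AddCommGroup T] [Module R T] where
  iA : A →ₗ[R] T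
  iM : M →ₗ[R] T
  iC : C →ₗ[R] T
  pA : T →ₗ[R] A
  pM : T →ₗ[R] M
  pC : T →ₗ[R] C
  AA : ∀ a, pA (iA a) = a
  AM : ∀ m, pA (iM m) = 0
  AC : ∀ c, pA (iC c) = 0
  MA : ∀ a, pM (iA a) = 0
  MM : ∀ m, pM (iM m) = m
  MC : ∀ c, pM (iC c) = 0
  CA : ∀ a, pC (iA a) = 0
  CM : ∀ m, pC (iM m) = 0
  CC : ∀ c, pC (iC c) = c
  dec : ∀ x, x = iA (pA x) + iM (pM x) + iC (pC x)
  f : T →ₗ[R] T →ₗ[R] A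
  g : T →ₗ[R] T →ₗ[R] M
  k : T →ₗ[R] T →ₗ[R] C
  fs : ∀ x y, f x y = f y x
  gs : ∀ x y, g x y = g y x
  ks : ∀ x y, k x y = k y x
  P1A : ∀ x, f x x * pA x = pA x * f x x
  P1M : ∀ x, f x x • pM x + pC x • g x x = pA x • g x x + k x x • pM x
  P1C : ∀ x, k x x * pC x = pC x * k x x
  P3A : ∀ x y w, (f x y * pA w - pA w * f x y) + (f y w * pA x - pA x * f y w)
    + (f w x * pA y - pA y * f w x) = 0
  P3M : ∀ x y w, (f x y • pM w + pC w • g x y - pA w • g x y - k x y • pM w)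
    + (f y w • pM x + pC x • g y w - pA x • g y w - k y w • pM x)
    + (f w x • pM y + pC y • g w x - pA y • g w x - k w x • pM y) = 0
  P3C : ∀ x y w, (k x y * pC w - pC w * k x y) + (k y w * pC x - pC x * k y w)
    + (k w x * pC y - pC y * k w x) = 0
  rA : ∀ (r : R) (a : A) (m : M), (r • a) • m = r • (a • m)
  rC : ∀ (r : R) (a : C) (m : M), (r • a) • m = r • (a • m)
  com : ∀ (a : A) (c : C) (m : M), a • c • m = c • a • m
  loy : ∀ (a : A) (c : C), (∀ m : M, a • c • m = 0) → a = 0 ∨ c = 0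
  fA : ∀ a : A, (∀ m : M, a • m = 0) → a = 0
  fC : ∀ a : C, (∀ m : M, a • m = 0) → a = 0
  tAC : ∀ a ∈ Subring.center A, ∃ c ∈ Subring.center C, ∀ m : M, a • m = c • m
  tCA : ∀ c ∈ Subring.center C, ∃ a ∈ Subring.center A, ∀ m : M, a • m = c • m
  nA : ∃ a a' : A, a * a' ≠ a' * a
  nC : ∃ a a' : C, a * a' ≠ a' * a

namespace Tri
variable {R A C M T : Type*} [CommRing R] [Invertible (2 : R)] [Ring A] [Algebra R A]
  [Ring C] [Algebra R C]
    [AddCommGroup M] [Module R M] [Module A M] [Module C M]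
    [AddCommGroup T] [Module R T]

def swap (S : Tri R A C M T) : Tri R C A M T where
  iA := S.iC
  iM := S.iM
  iC := S.iA
  pA := S.pC
  pM := S.pM
  pC := S.pA
  AA := S.CC
  AM := S.CM
  AC := S.CA
  MA := S.MC
  MM := S.MM
  MC := S.MA
  CA := S.AC
  CM := S.AM
  CC := S.AA
  dec := fun x => by
    conv_lhs => rw [S.dec x]
    abel
  f := S.k
  g := S.g
  k := S.f
  fs := S.ks
  gs := S.gs
  ks := S.fs
  P1A := S.P1C
  P1M := fun x => by
    have := S.P1M x
    rw [add_comm, ← this, add_comm]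
  P1C := S.P1A
  P3A := S.P3C
  P3M := fun x y w => by
    have := S.P3M x y w
    rw [← neg_eq_zero] at this
    rw [← this]; abel
  P3C := S.P3A
  rA := S.rC
  rC := S.rA
  com := fun a c m => (S.com c a m).symm
  loy := fun a c h => (S.loy c a (fun m => by rw [S.com]; exact h m)).symm
  fA := S.fC
  fC := S.fA
  tAC := fun a ha => by
    obtain ⟨c, hc, h⟩ := S.tCA a ha
    exact ⟨c, hc, fun m => (h m).symm⟩
  tCA := fun a ha => by
    obtain ⟨c, hc, h⟩ := S.tAC a ha
    exact ⟨c, hc, fun m => (h m).symm⟩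
  nA := S.nC
  nC := S.nA

theorem extA (S : Tri R A C M T) {a b : A} (h : ∀ m : M, a • m = b • m) : a = b :=
  sub_eq_zero.1 (S.fA _ fun m => by rw [sub_smul, h, sub_self])

theorem extC (S : Tri R A C M T) {a b : C} (h : ∀ m : M, a • m = b • m) : a = b :=
  S.swap.extA h

/-- lifting -/
theorem lift (S : Tri R A C M T) {X : Type*} [AddCommGroup X] [Module R X]
    (G : X → M → M) (hadd : ∀ x y m, G (x + y) m = G x m + G y m)
    (hs : ∀ (r : R) x m, G (r • x) m = r • G x m)
    (P : A → Prop) (h : ∀ x, ∃ a : A, P a ∧ ∀ m, G x m = a • m) :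
    ∃ α : X →ₗ[R] A, (∀ x, P (α x)) ∧ ∀ x m, G x m = α x • m := by
  choose α hP hα using h
  refine ⟨{ toFun := α, map_add' := ?_, map_smul' := ?_ }, hP, hα⟩
  · intro x y
    refine S.extA fun m => ?_
    rw [add_smul, ← hα, ← hα, ← hα, hadd]
  · intro r x
    refine S.extA fun m => ?_
    rw [RingHom.id_apply, S.rA, ← hα, ← hα, hs]

theorem reg (S : Tri R A C M T) {z a : A} (hz : z ∈ Subring.center A) (ha : a ≠ 0)
    (h : z * a = 0) : z = 0 := by
  obtain ⟨c, hc, h2⟩ := S.tAC z hz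
  have := S.loy a c (fun m => by
    rw [← h2, smul_smul, Subring.mem_center_iff.1 hz, h, zero_smul])
  rcases this with h3 | h3
  · exact absurd h3 ha
  · subst h3
    exact S.fA _ fun m => by rw [h2, zero_smul]

/-- `z a` central with fixed noncommuting. -/
theorem reg2 (S : Tri R A C M T) {z a b : A} (hz : z ∈ Subring.center A) (hab : a * b ≠ b * a)
    (h : z * a ∈ Subring.center A) : z = 0 := by
  refine S.reg hz (sub_ne_zero.2 hab) ?_
  have h1 := Subring.mem_center_iff.1 h b
  have h2 := Subring.mem_center_iff.1 hz b
  rw [mul_sub, sub_eq_zero, ← mul_assoc, ← h1, ← mul_assoc, h2, mul_assoc]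

theorem L1 (S : Tri R A C M T) (u : C) (V : A → C) (h : ∀ (a : A) (m : M), a • u • m = V a • m) : u = 0 := by
  obtain ⟨a, b, hab⟩ := S.nA
  refine (S.loy (a * b - b * a) u fun m => ?_).resolve_left (sub_ne_zero.2 hab)
  rw [sub_smul, mul_smul, mul_smul, S.com b u m, h, ← S.com, ← h, sub_self]

theorem L2 (S : Tri R A C M T) (E : M →ₗ[R] A) (h : ∀ m, E m • m = 0) (m : M) : E m = 0 := by
  have hp : ∀ m n, E m • n + E n • m = 0 := by
    intro m n
    have := h (m + n)
    rw [map_add, add_smul, smul_add, smul_add, h, h] at this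
    rw [← this]; abel
  refine S.swap.L1 (E m) (fun c => E (c • m)) fun c n => ?_
  have h1 := hp n (c • m)
  have h2 := congrArg (fun x => c • x) (hp n m)
  simp only [smul_add, smul_zero] at h2
  rw [S.com] at h1
  rw [← h2] at h1
  exact (add_left_cancel h1).symm

theorem gaa (S : Tri R A C M T) (a : A) : S.g (S.iA a) (S.iA a) = 0 := by
  have h0 := S.P1M (S.iA 1)
  simp only [S.MA, S.CA, S.AA, smul_zero, zero_smul, one_smul, add_zero, zero_add] at h0
  have h1 := fun a => S.P3M (S.iA 1) (S.iA 1) (S.iA a)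
  simp only [S.MA, S.CA, S.AA, smul_zero, zero_smul, one_smul, add_zero, zero_add, zero_sub,
    sub_zero, ← h0, S.gs _ (S.iA 1)] at h1
  have h2 : ∀ a, S.g (S.iA 1) (S.iA a) = 0 := fun a => half_zero R (by
    have := h1 a
    rw [← neg_add, neg_eq_zero] at this
    exact this)
  have h3 := S.P3M (S.iA a) (S.iA a) (S.iA 1)
  simp only [S.MA, S.CA, S.AA, smul_zero, zero_smul, one_smul, add_zero, zero_add, zero_sub,
    sub_zero, S.gs _ (S.iA 1), h2, neg_zero, neg_eq_zero] at h3
  exact h3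

theorem gac (S : Tri R A C M T) (a : A) (c : C) : S.g (S.iA a) (S.iC c) = 0 := by
  have h : ∀ a, a • S.g (S.iA a) (S.iC c) = 0 := fun a => half_zero R (by
    have h3 := S.P3M (S.iA a) (S.iA a) (S.iC c)
    simp only [S.MA, S.CA, S.AA, S.MC, S.CC, S.AC, smul_zero, zero_smul, one_smul, add_zero,
      zero_add, zero_sub, gaa,
      sub_zero, S.gs (S.iC c), neg_zero] at h3
    rw [← neg_add, neg_eq_zero] at h3
    exact h3)
  have h1 := h 1
  have h2 := h (a + 1)
  rw [one_smul] at h1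
  simpa [h1, add_smul, h] using h2

theorem kaa (S : Tri R A C M T) (a b : A) : S.k (S.iA a) (S.iA b) ∈ Subring.center C := by
  rw [Subring.mem_center_iff]
  intro c
  have := S.P3C (S.iA a) (S.iA b) (S.iC c)
  simp only [S.CA, S.CC, mul_zero, zero_mul, sub_zero, add_zero, sub_eq_zero] at this
  exact this.symm

theorem s3 (S : Tri R A C M T) : ∃ α : A →ₗ[R] A,
    (∀ a m, S.g (S.iA a) (S.iM m) = α a • m) ∧ (∀ a, α a * a = a * α a) ∧
    ∀ a, ∃ κ ∈ Subring.center A, S.f (S.iA a) (S.iA a) = a * α a + a * α a + κ ∧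
      ∀ m : M, κ • m = S.k (S.iA a) (S.iA a) • m := by
  have e1 : ∀ a m, S.g (S.iA a) (S.iM m) + a • S.g (S.iA 1) (S.iM m)
      = S.f (S.iA 1) (S.iA a) • m - S.k (S.iA 1) (S.iA a) • m := by
    intro a m
    have h3 := S.P3M (S.iA 1) (S.iA a) (S.iM m)
    simp only [S.MA, S.CA, S.AA, S.MM, S.CM, S.AM, smul_zero, zero_smul, one_smul, add_zero,
      zero_add, zero_sub, S.gs (S.iM m), sub_zero] at h3
    rw [← sub_eq_zero, ← neg_eq_zero, ← h3]; abel
  have e2 : ∀ a m, S.f (S.iA a) (S.iA a) • m - S.k (S.iA a) (S.iA a) • m =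
      a • S.g (S.iA a) (S.iM m) + a • S.g (S.iA a) (S.iM m) := by
    intro a m
    have h3 := S.P3M (S.iA a) (S.iA a) (S.iM m)
    simp only [S.MA, S.CA, S.AA, S.MM, S.CM, S.AM, smul_zero, zero_smul, one_smul, add_zero,
      zero_add, zero_sub, S.gs (S.iM m), sub_zero] at h3
    rw [← sub_eq_zero, ← h3]; abel
  have ex : ∀ a, ∃ b : A, True ∧ ∀ m, S.g (S.iA a) (S.iM m) = b • m := by
    have ex1 : ∃ b : A, ∀ m, S.g (S.iA 1) (S.iM m) = b • m := by
      obtain ⟨κ, hκ, h⟩ := S.tCA _ (S.kaa 1 1)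
      refine ⟨(⅟2 : R) • (S.f (S.iA 1) (S.iA 1) - κ), fun m => ?_⟩
      rw [S.rA, sub_smul, h, e2, one_smul, smul_add, ← add_smul, invOf_two_add_invOf_two, one_smul]
    obtain ⟨b1, hb1⟩ := ex1
    intro a
    obtain ⟨κ, hκ, h⟩ := S.tCA _ (S.kaa 1 a)
    refine ⟨S.f (S.iA 1) (S.iA a) - κ - a * b1, trivial, fun m => ?_⟩
    have := e1 a m
    rw [hb1] at this
    rw [sub_smul, sub_smul, h, mul_smul, ← this]; abel
  obtain ⟨α, -, hα⟩ := S.lift (fun a m => S.g (S.iA a) (S.iM m)) (by intros; simp) (by intros; simp)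
    _ ex
  have hκ : ∀ a, ∃ κ ∈ Subring.center A, S.f (S.iA a) (S.iA a) = a * α a + a * α a + κ ∧
      ∀ m : M, κ • m = S.k (S.iA a) (S.iA a) • m := by
    intro a
    obtain ⟨κ, hκ, h⟩ := S.tCA _ (S.kaa a a)
    refine ⟨κ, hκ, S.extA fun m => ?_, h⟩
    have := e2 a m
    rw [add_smul, add_smul, h, mul_smul, ← hα, ← this]; abel
  refine ⟨α, hα, ?_, hκ⟩
  have c1 : ∀ a, α 1 * a = a * α 1 := by
    intro a
    have h3 := S.P3A (S.iA 1) (S.iA 1) (S.iA a)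
    simp only [S.AA, mul_one, one_mul, sub_self, add_zero] at h3
    obtain ⟨κ, h1, h2, -⟩ := hκ 1
    rw [h2] at h3
    have h4 := Subring.mem_center_iff.1 h1 a
    rw [← sub_eq_zero]
    apply half_zero R
    rw [← h3]
    simp only [one_mul, add_mul, mul_add, h4]; abel
  have c2 : ∀ a, a * (α a * a - a * α a) = 0 := by
    intro a
    have h3 := S.P1A (S.iA a)
    simp only [S.AA] at h3
    obtain ⟨κ, h1, h2, -⟩ := hκ a
    have h4 := Subring.mem_center_iff.1 h1 a
    rw [h2] at h3
    apply half_zero R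
    simp only [add_mul, mul_add, h4, mul_assoc] at h3
    have := add_right_cancel h3
    rw [← sub_eq_zero] at this
    simp only [mul_sub]
    rw [← this]; abel
  intro a
  have h1 := c2 a
  have h2 := c2 (a + 1)
  have h3 : α (a+1) * (a+1) - (a+1) * α (a+1) = α a * a - a * α a := by
    simp only [map_add, add_mul, mul_add, c1, mul_one, one_mul]; abel
  rw [h3, add_mul, h1, zero_add, one_mul] at h2
  exact sub_eq_zero.1 h2

theorem s4 (S : Tri R A C M T)
    (hp : ∀ f : A →ₗ[R] A, (∀ a, f a * a = a * f a) →
            ∃ z ∈ Subring.center A, ∃ η : A →ₗ[R] A,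
              (∀ a, η a ∈ Subring.center A) ∧ ∀ a, f a = z * a + η a)
    (α : A →ₗ[R] A) (β : C →ₗ[R] C)
    (hα : ∀ a m, S.g (S.iA a) (S.iM m) = α a • m) (hαc : ∀ a, α a * a = a * α a)
    (hβ : ∀ a m, S.g (S.iC a) (S.iM m) = β a • m) :
    ∃ z ∈ Subring.center A, ∃ z' ∈ Subring.center C, (∀ m : M, z • m = z' • m) ∧
    ∃ η : A →ₗ[R] A, ∃ η' : A →ₗ[R] C, ∃ τ : C →ₗ[R] A, ∃ τ' : C →ₗ[R] C,
    (∀ a, η a ∈ Subring.center A) ∧ (∀ a, η' a ∈ Subring.center C) ∧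
    (∀ a, τ a ∈ Subring.center A) ∧ (∀ a, τ' a ∈ Subring.center C) ∧
    (∀ a (m : M), η a • m = η' a • m) ∧ (∀ a (m : M), τ a • m = τ' a • m) ∧
    (∀ a, α a = z * a + η a) ∧ (∀ c, β c = z' * c + τ' c) ∧
    ∀ a c, ∃ ζ ∈ Subring.center A, ∃ ζ' ∈ Subring.center C, (∀ m : M, ζ • m = ζ' • m) ∧
      S.f (S.iA a) (S.iC c) = τ c * a + ζ ∧ S.k (S.iA a) (S.iC c) = η' a * c + ζ' := by
  obtain ⟨z, hz, η, hη, hαz⟩ := hp α hαc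
  obtain ⟨z', hz', hzz⟩ := S.tAC z hz
  obtain ⟨η', hη', hηη⟩ := S.swap.lift (fun a m => η a • m) (by intros; simp [add_smul])
    (by intros; simp [S.rA]) (fun c => c ∈ Subring.center C)
    (fun a => S.tAC (η a) (hη a))
  have hf : ∀ c, ∃ t ∈ Subring.center A, ∃ t' ∈ Subring.center C, (∀ m : M, t • m = t' • m) ∧
      β c = z' * c + t' ∧ ∀ a, ∃ ζ ∈ Subring.center A, ∃ ζ' ∈ Subring.center C,
       (∀ m : M, ζ • m = ζ' • m) ∧
      S.f (S.iA a) (S.iC c) = t * a + ζ ∧ S.k (S.iA a) (S.iC c) = η' a * c + ζ' := by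
    intro c
    obtain ⟨t, ht, ζ, hζ, hfz⟩ := hp (S.f.flip (S.iC c) ∘ₗ S.iA) (fun a => by
      simp only [LinearMap.comp_apply, LinearMap.flip_apply]
      rw [← sub_eq_zero]
      apply half_zero R
      have := S.P3A (S.iA a) (S.iA a) (S.iC c)
      simp only [S.AA, S.AC, mul_zero, zero_mul, S.fs (S.iC c), sub_zero, zero_add] at this
      exact this)
    simp only [LinearMap.comp_apply, LinearMap.flip_apply] at hfz
    obtain ⟨t', ht', htt⟩ := S.tAC t ht
    choose ζ' hζ' hζζ using fun a => S.tAC _ (hζ a)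
    have key : ∀ (a : A) (m : M), a • (β c - z' * c - t') • m =
        (ζ' a + η' a * c - S.k (S.iA a) (S.iC c)) • m := by
      intro a m
      have h3 := S.P3M (S.iA a) (S.iM m) (S.iC c)
      simp only [S.MA, S.CA, S.AA, S.MM, S.CM, S.AM, S.MC, S.AC, S.CC, smul_zero, zero_smul,
        add_zero, zero_add, zero_sub, S.gs (S.iM m), sub_zero, hα, hβ, S.gs (S.iC c) (S.iA a),
        S.fs (S.iC c) (S.iA a), S.ks (S.iC c) (S.iA a), hfz, hαz, add_smul, mul_smul, smul_add,
        hζζ, ] at h3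
      have e1 : c • z • a • m = a • z' • c • m := by
        rw [← S.com, ← S.com, ← hzz, ← mul_smul, ← mul_smul, Subring.mem_center_iff.1 hz, S.com]
      have e2 : c • η a • m = η' a • c • m := by
        rw [hηη, ← mul_smul, ← mul_smul, Subring.mem_center_iff.1 (hη' a)]
      have e3 : t • a • m = a • t' • m := by
        rw [← htt, ← mul_smul, ← mul_smul, Subring.mem_center_iff.1 ht]
      rw [e1, e2, e3] at h3
      simp only [sub_smul, add_smul, smul_sub, mul_smul]
      rw [← sub_eq_zero, ← neg_eq_zero, ← h3]; abel
    have hu := S.L1 _ _ key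
    refine ⟨t, ht, t', ht', htt, ?_, fun a => ⟨ζ a, hζ a, ζ' a, hζ' a, hζζ a, hfz a, ?_⟩⟩
    · rw [sub_sub, sub_eq_zero] at hu
      exact hu
    · refine S.extC fun m => ?_
      have := key a m
      rw [hu, zero_smul, smul_zero, sub_smul] at this
      rw [add_comm (η' a * c)]
      exact (sub_eq_zero.1 this.symm).symm
  have hτl : ∀ c : C, ∃ t : A, t ∈ Subring.center A ∧ ∀ m : M, (β c - z' * c) • m = t • m := by
    intro c
    obtain ⟨t, ht, t', ht', htt, hb, -⟩ := hf c
    refine ⟨t, ht, fun m => ?_⟩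
    rw [hb, htt]; congr 1; abel
  obtain ⟨τ, hτ, hττ⟩ := S.lift (fun (c : C) (m : M) => (β c - z' * c) • m)
    (by intros; simp only [map_add, mul_add, ← add_smul]; congr 1; abel)
    (by intros; simp only [map_smul, mul_smul_comm, ← smul_sub, S.rC])
    _ hτl
  refine ⟨z, hz, z', hz', hzz, η, η', τ, β - LinearMap.mulLeft R z', hη, hη', hτ, ?_, hηη, ?_, hαz,
    ?_, ?_⟩
  · intro c
    obtain ⟨t, ht, t', ht', htt, hb, -⟩ := hf c
    simp only [LinearMap.sub_apply, LinearMap.mulLeft_apply, hb, add_sub_cancel_left]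
    exact ht'
  · intro c m
    simp only [LinearMap.sub_apply, LinearMap.mulLeft_apply]
    exact (hττ c m).symm
  · intro c
    simp only [LinearMap.sub_apply, LinearMap.mulLeft_apply]
    abel
  · intro a c
    obtain ⟨t, ht, t', ht', htt, hb, h⟩ := hf c
    have : τ c = t := S.extA fun m => by
      rw [← hττ, htt, hb]; congr 1; abel
    rw [this]
    exact h a

theorem kam (S : Tri R A C M T) (a : A) (m : M) : S.k (S.iA a) (S.iM m) ∈ Subring.center C := by
  rw [Subring.mem_center_iff]
  intro c
  have := S.P3C (S.iA a) (S.iM m) (S.iC c)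
  simp only [S.CA, S.CC, S.CM, mul_zero, zero_mul, sub_zero, add_zero, sub_eq_zero] at this
  exact this.symm

theorem kmm (S : Tri R A C M T) (a : M) (m : M) : S.k (S.iM a) (S.iM m) ∈ Subring.center C := by
  rw [Subring.mem_center_iff]
  intro c
  have := S.P3C (S.iM a) (S.iM m) (S.iC c)
  simp only [S.CA, S.CC, S.CM, mul_zero, zero_mul, sub_zero, add_zero, sub_eq_zero] at this
  exact this.symm

theorem s5 (S : Tri R A C M T)
    (hp : ∀ f : A →ₗ[R] A, (∀ a, f a * a = a * f a) →
            ∃ z ∈ Subring.center A, ∃ η : A →ₗ[R] A,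
              (∀ a, η a ∈ Subring.center A) ∧ ∀ a, f a = z * a + η a) :
    ∃ γ : M →ₗ[R] A, (∀ m, γ m ∈ Subring.center A) ∧
      (∀ m, S.g (S.iM m) (S.iM m) = γ m • m + γ m • m) ∧
      ∀ a m, ∃ δ ∈ Subring.center A, (∀ n : M, δ • n = S.k (S.iA a) (S.iM m) • n) ∧
       S.f (S.iA a) (S.iM m) = γ m * a + δ := by
  have hf : ∀ m, ∃ t ∈ Subring.center A, ∀ a, S.f (S.iA a) (S.iM m) - t * a ∈ Subring.center A := by
    intro m
    obtain ⟨t, ht, ζ, hζ, hfz⟩ := hp (S.f.flip (S.iM m) ∘ₗ S.iA) (fun a => by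
      simp only [LinearMap.comp_apply, LinearMap.flip_apply]
      rw [← sub_eq_zero]
      apply half_zero R
      have := S.P3A (S.iA a) (S.iA a) (S.iM m)
      simp only [S.AA, S.AM, mul_zero, zero_mul, S.fs (S.iM m), sub_zero, zero_add] at this
      exact this)
    simp only [LinearMap.comp_apply, LinearMap.flip_apply] at hfz
    refine ⟨t, ht, fun a => ?_⟩
    rw [hfz, add_sub_cancel_left]
    exact hζ a
  choose γ hγ hfγ using hf
  obtain ⟨a1, a2, h12⟩ := S.nA
  have uniq : ∀ s t : A, s ∈ Subring.center A → t ∈ Subring.center A →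
      (s - t) * a1 ∈ Subring.center A → s = t := by
    intro s t hs ht h
    exact sub_eq_zero.1 (S.reg2 (sub_mem hs ht) h12 h)
  have rc : ∀ (r : R) (x : A), x ∈ Subring.center A → r • x ∈ Subring.center A := by
    intro r x hx
    rw [Subring.mem_center_iff] at hx ⊢
    intro y
    rw [mul_smul_comm, hx, smul_mul_assoc]
  let Γ : M →ₗ[R] A :=
    { toFun := γ
      map_add' := by
        intro m n
        refine uniq _ _ (hγ _) (add_mem (hγ _) (hγ _)) ?_
        have := sub_mem (add_mem (hfγ m a1) (hfγ n a1)) (hfγ (m + n) a1)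
        convert this using 1
        simp only [map_add, sub_mul, add_mul]; abel
      map_smul' := by
        intro r n
        refine uniq _ _ (hγ _) (rc _ _ (hγ _)) ?_
        have := sub_mem (rc r _ (hfγ n a1)) (hfγ (r • n) a1)
        convert this using 1
        simp only [map_smul, sub_mul, smul_sub, smul_mul_assoc, RingHom.id_apply]; abel }
  have hΓ : ∀ m, Γ m = γ m := fun m => rfl
  choose K hK hKK using fun a => S.lift (fun (m n : M) => S.k (S.iA a) (S.iM m) • n)
    (by intros; simp [add_smul]) (by intros; simp [S.rC]) (fun x => x ∈ Subring.center A)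
    (fun m => by
      obtain ⟨κ, hκ, h⟩ := S.tCA _ (S.kam a m)
      exact ⟨κ, hκ, fun n => (h n).symm⟩)
  -- d a m
  have e : ∀ a m, a • S.g (S.iM m) (S.iM m) =
      (S.f (S.iA a) (S.iM m) - K a m) • m + (S.f (S.iA a) (S.iM m) - K a m) • m := by
    intro a m
    have h3 := S.P3M (S.iM m) (S.iM m) (S.iA a)
    simp only [S.MA, S.CA, S.AA, S.MM, S.CM, S.AM, smul_zero, zero_smul,
        add_zero, zero_add, zero_sub, sub_zero, S.fs (S.iM m) (S.iA a), S.ks (S.iM m) (S.iA a),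
        hKK] at h3
    rw [← sub_eq_zero, ← neg_eq_zero, ← h3]
    simp only [sub_smul]; abel
  have d : ∀ a m, S.f (S.iA a) (S.iM m) - Γ m * a - K a m
      = a * (S.f (S.iA 1) (S.iM m) - Γ m * 1 - K 1 m) := by
    intro a m
    have := S.L2 ((S.f (S.iA a) ∘ₗ S.iM - LinearMap.mulRight R a ∘ₗ Γ - K a) -
      LinearMap.mulLeft R a ∘ₗ (S.f (S.iA 1) ∘ₗ S.iM - LinearMap.mulRight R 1 ∘ₗ Γ - K 1))
      (fun m => by
        have h1 := e 1 m
        have h2 := e a m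
        simp only [LinearMap.sub_apply, LinearMap.comp_apply, LinearMap.mulLeft_apply,
          LinearMap.mulRight_apply]
        apply half_zero R
        rw [one_smul] at h1
        rw [h1] at h2
        have h3 := Subring.mem_center_iff.1 (hγ m) a
        rw [← hΓ] at h3
        rw [← sub_eq_zero] at h2
        rw [← neg_eq_zero, ← h2]
        simp only [sub_smul, smul_sub, mul_smul, mul_sub, smul_add, mul_one, h3]
        abel) m
    simp only [LinearMap.sub_apply, LinearMap.comp_apply, LinearMap.mulLeft_apply,
          LinearMap.mulRight_apply] at this
    exact sub_eq_zero.1 this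
  have dz : ∀ m, S.f (S.iA 1) (S.iM m) - Γ m * 1 - K 1 m = 0 := by
    intro m
    have hc : ∀ a, S.f (S.iA a) (S.iM m) - Γ m * a - K a m ∈ Subring.center A :=
      fun a => sub_mem (hfγ m a) (hK a m)
    refine S.reg2 (hc 1) h12 ?_
    have := d a1 m
    rw [Subring.mem_center_iff.1 (hc 1)] at this
    rw [← this]
    exact hc a1
  refine ⟨Γ, hγ, fun m => ?_, fun a m => ⟨K a m, hK a m, fun n => (hKK a m n).symm, ?_⟩⟩
  · have h1 := e 1 m
    have h2 := dz m
    rw [one_smul] at h1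
    rw [mul_one, sub_right_comm, sub_eq_zero] at h2
    rw [h1, h2]
  · have := d a m
    rw [dz, mul_zero, sub_sub, sub_eq_zero] at this
    exact this

theorem s6 (S : Tri R A C M T) (γ : M →ₗ[R] A) (γ' : M →ₗ[R] C)
    (hγ' : ∀ m, γ' m ∈ Subring.center C) (hγγ : ∀ m (n : M), γ m • n = γ' m • n)
    (hg : ∀ m, S.g (S.iM m) (S.iM m) = γ m • m + γ m • m) (c : C) (m : M) :
    ∃ δ ∈ Subring.center C, (∀ n : M, S.f (S.iC c) (S.iM m) • n = δ • n) ∧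
       S.k (S.iC c) (S.iM m) = γ' m * c + δ := by
  obtain ⟨K, hK, hKK⟩ := S.swap.lift (fun (m n : M) => S.f (S.iC c) (S.iM m) • n)
    (by intros; simp [add_smul]) (by intros; simp [S.rA]) (fun x => x ∈ Subring.center C)
    (fun m => by
      obtain ⟨κ, hκ, h⟩ := S.swap.tCA _ (S.swap.kam c m)
      exact ⟨κ, hκ, fun n => (h n).symm⟩)
  refine ⟨K m, hK m, hKK m, ?_⟩
  have := S.swap.L2 (S.k (S.iC c) ∘ₗ S.iM - LinearMap.mulRight R c ∘ₗ γ' - K)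
      (fun m => by
        simp only [LinearMap.sub_apply, LinearMap.comp_apply,
          LinearMap.mulRight_apply]
        apply half_zero R
        have h3 := S.P3M (S.iM m) (S.iM m) (S.iC c)
        simp only [S.MC, S.CC, S.AC, S.MM, S.CM, S.AM, smul_zero, zero_smul,
          add_zero, zero_add, zero_sub, sub_zero, S.fs (S.iM m) (S.iC c), S.ks (S.iM m) (S.iC c),
          hKK, hg, hγγ, smul_add, ← mul_smul, Subring.mem_center_iff.1 (hγ' m) c] at h3
        rw [← neg_eq_zero, ← h3]
        simp only [sub_smul]; abel) m
  simp only [LinearMap.sub_apply, LinearMap.comp_apply, LinearMap.mulRight_apply] at this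
  rw [sub_sub, sub_eq_zero] at this
  exact this

theorem s7 (S : Tri R A C M T) (m : M) (n : M) :
    S.f (S.iM m) (S.iM m) • n = S.k (S.iM m) (S.iM m) • n := by
  choose K hK hKK using fun p => S.lift (fun (m n : M) => S.k (S.iM p) (S.iM m) • n)
    (by intros; simp [add_smul]) (by intros; simp [S.rC]) (fun x => x ∈ Subring.center A)
    (fun m => by
      obtain ⟨κ, hκ, h⟩ := S.tCA _ (S.kmm p m)
      exact ⟨κ, hκ, fun n => (h n).symm⟩)
  have Ks : ∀ p q, K p q = K q p := fun p q => S.extA fun n => by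
    rw [← hKK, ← hKK, S.ks]
  have e : ∀ p q, (S.f (S.iM p) (S.iM p) - K p p) • q + ((S.f (S.iM q) (S.iM p) - K q p) • p
      + (S.f (S.iM q) (S.iM p) - K q p) • p) = 0 := by
    intro p q
    have h3 := S.P3M (S.iM p) (S.iM p) (S.iM q)
    simp only [S.MM, S.CM, S.AM, smul_zero, zero_smul,
        add_zero, zero_add, zero_sub, sub_zero, S.fs (S.iM p) (S.iM q), S.ks (S.iM p) (S.iM q),
        hKK] at h3
    rw [← h3]; simp only [sub_smul]; abel
  obtain ⟨a1, a2, h12⟩ := S.nA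
  have z : ∀ p q, S.f (S.iM q) (S.iM p) - K q p = 0 := by
    intro p q
    have hc : ∀ p q, S.f (S.iM q) (S.iM p) - K q p ∈ Subring.center A :=
      fun p q => sub_mem (S.swap.kmm q p) (hK q p)
    have := S.L2 ((S.f (S.iM (a1 • q)) ∘ₗ S.iM - K (a1 • q)) -
      LinearMap.mulLeft R a1 ∘ₗ (S.f (S.iM q) ∘ₗ S.iM - K q))
      (fun p => by
        have h1 := e p (a1 • q)
        have h2 := e p q
        simp only [LinearMap.sub_apply, LinearMap.comp_apply, LinearMap.mulLeft_apply]
        apply half_zero R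
        have h3 := congrArg (fun x => a1 • x) h2
        simp only [smul_add, smul_zero, ← mul_smul, Subring.mem_center_iff.1 (hc p p) a1] at h3
        rw [← mul_smul] at h1
        have h4 := h1.trans h3.symm
        have h5 := add_left_cancel h4
        rw [← sub_eq_zero] at h5
        rw [← h5]
        simp only [sub_smul]; abel) p
    simp only [LinearMap.sub_apply, LinearMap.comp_apply, LinearMap.mulLeft_apply] at this
    rw [sub_eq_zero, Subring.mem_center_iff.1 (hc p q)] at this
    refine S.reg2 (hc p q) h12 ?_
    rw [← this]
    exact hc _ _
  rw [hKK, sub_eq_zero.1 (z m m)]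

theorem core (S : Tri R A C M T)
    (hp : ∀ f : A →ₗ[R] A, (∀ a, f a * a = a * f a) →
            ∃ z ∈ Subring.center A, ∃ η : A →ₗ[R] A,
              (∀ a, η a ∈ Subring.center A) ∧ ∀ a, f a = z * a + η a) :
    ∃ z ∈ Subring.center A, ∃ z' ∈ Subring.center C, (∀ m : M, z • m = z' • m) ∧
    ∃ μ : T →ₗ[R] A, ∃ μ' : T →ₗ[R] C,
    (∀ a, μ a ∈ Subring.center A) ∧ (∀ a, μ' a ∈ Subring.center C) ∧
    (∀ x (m : M), μ x • m = μ' x • m) ∧ ∀ x, ∃ ν ∈ Subring.center A, ∃ ν' ∈ Subring.center C,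
      (∀ m : M, ν • m = ν' • m) ∧
      S.f x x = z * S.pA x * S.pA x + μ x * S.pA x + ν ∧
      S.k x x = z' * S.pC x * S.pC x + μ' x * S.pC x + ν' ∧
      S.g x x = z • S.pA x • S.pM x + z' • S.pC x • S.pM x + μ x • S.pM x := by
  obtain ⟨α, hα, hαc, hκ⟩ := S.s3
  obtain ⟨β, hβ, hβc, hκ'⟩ := S.swap.s3
  obtain ⟨z, hz, z', hz', hzz, η, η', τ, τ', hη, hη', hτ, hτ', hηη, hττ, hαz, hβz, hac⟩ :=
    S.s4 hp α β hα hαc hβ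
  obtain ⟨γ, hγ, hgm, ham⟩ := S.s5 hp
  obtain ⟨γ', hγ', hγγ⟩ := S.swap.lift (fun m n => γ m • n) (by intros; simp [add_smul])
    (by intros; simp [S.rA]) (fun c => c ∈ Subring.center C)
    (fun m => S.tAC (γ m) (hγ m))
  have hmc := S.s6 γ γ' hγ' hγγ hgm
  refine ⟨z + z, add_mem hz hz, z' + z', add_mem hz' hz', fun m => by simp [add_smul, hzz],
    (2 : R) • (η ∘ₗ S.pA + γ ∘ₗ S.pM + τ ∘ₗ S.pC),
    (2 : R) • (η' ∘ₗ S.pA + γ' ∘ₗ S.pM + τ' ∘ₗ S.pC), ?_, ?_, ?_, ?_⟩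
  · intro x
    simp only [two_smul, LinearMap.add_apply, LinearMap.comp_apply]
    exact add_mem (add_mem (add_mem (hη _) (hγ _)) (hτ _)) (add_mem (add_mem (hη _) (hγ _)) (hτ _))
  · intro x
    simp only [two_smul, LinearMap.add_apply, LinearMap.comp_apply]
    exact add_mem (add_mem (add_mem (hη' _) (hγ' _)) (hτ' _))
      (add_mem (add_mem (hη' _) (hγ' _)) (hτ' _))
  · intro x m
    simp only [two_smul, LinearMap.add_apply, LinearMap.comp_apply, add_smul, hηη, hγγ, hττ]
  intro x
  have hx := S.dec x
  generalize ha : S.pA x = a at *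
  generalize hm : S.pM x = m at *
  generalize hc : S.pC x = c at *
  obtain ⟨κ, k1, k2, k3⟩ := hκ a
  obtain ⟨κ', l1, l2, l3⟩ := hκ' c
  obtain ⟨ζ, z1, ζ', z2, z3, z4, z5⟩ := hac a c
  obtain ⟨δ, d1, d2, d3⟩ := ham a m
  obtain ⟨ε, e1, e2, e3⟩ := hmc c m
  have m1 := S.s7 m
  change ∀ n : M, κ' • n = S.f (S.iC c) (S.iC c) • n at l3
  change S.k (S.iC c) (S.iC c) = _ at l2
  refine ⟨κ + S.f (S.iM m) (S.iM m) + S.f (S.iC c) (S.iC c) + (ζ + ζ) + (δ + δ)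
      + (S.f (S.iC c) (S.iM m) + S.f (S.iC c) (S.iM m)), ?_,
      S.k (S.iA a) (S.iA a) + S.k (S.iM m) (S.iM m) + κ' + (ζ' + ζ') +
      (S.k (S.iA a) (S.iM m) + S.k (S.iA a) (S.iM m)) + (ε + ε), ?_, ?_, ?_, ?_, ?_⟩
  · have q1 := S.swap.kmm m m
    have q2 := S.swap.kaa c c
    have q3 := S.swap.kam c m
    exact add_mem (add_mem (add_mem (add_mem (add_mem k1 q1) q2) (add_mem z1 z1)) (add_mem d1 d1))
      (add_mem q3 q3)
  · have q1 := S.kmm m m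
    have q2 := S.kaa a a
    have q3 := S.kam a m
    exact add_mem (add_mem (add_mem (add_mem (add_mem q2 q1) l1) (add_mem z2 z2)) (add_mem q3 q3))
      (add_mem e1 e1)
  · intro n
    simp only [add_smul, k3, l3, z3, d2, e2, m1]
  · rw [hx]
    simp only [map_add, LinearMap.add_apply, k2, z4, d3, S.fs (S.iC c) (S.iA a), two_smul,
      S.fs (S.iM m) (S.iA a), S.fs (S.iM m) (S.iC c), hαz, LinearMap.comp_apply, S.AA, S.AM, S.AC,
      S.MM, S.MA, S.MC, S.CC, S.CA, S.CM, map_zero, add_zero, zero_add, mul_add, add_mul,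
      ← mul_assoc, Subring.mem_center_iff.1 hz, Subring.mem_center_iff.1 (hη a)]
    abel
  · rw [hx]
    simp only [map_add, LinearMap.add_apply, l2, z5, e3, S.ks (S.iC c) (S.iA a), two_smul,
      S.ks (S.iM m) (S.iA a), S.ks (S.iM m) (S.iC c), hβz, LinearMap.comp_apply, S.AA, S.AM, S.AC,
      S.MM, S.MA, S.MC, S.CC, S.CA, S.CM, map_zero, add_zero, zero_add, mul_add, add_mul,
      ← mul_assoc, Subring.mem_center_iff.1 hz', Subring.mem_center_iff.1 (hτ' c)]
    abel
  · have g1 := S.gaa a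
    have g2 := S.swap.gaa c
    have g3 := S.gac a c
    have g4 := hβ c m
    change S.g (S.iC c) (S.iC c) = 0 at g2
    change S.g (S.iC c) (S.iM m) = _ at g4
    rw [hx]
    simp only [map_add, LinearMap.add_apply, g1, g2, g3, g4, hα, hgm, S.gs (S.iC c) (S.iA a),
      two_smul,
      S.gs (S.iM m) (S.iA a), S.gs (S.iM m) (S.iC c), hβz, LinearMap.comp_apply, S.AA, S.AM, S.AC,
      S.MM, S.MA, S.MC, S.CC, S.CA, S.CM, map_zero, add_zero, zero_add, add_smul, hαz, mul_smul,
      hττ]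
    abel

theorem core' (S : Tri R A C M T)
    (hp : ∀ f : C →ₗ[R] C, (∀ a, f a * a = a * f a) →
            ∃ z ∈ Subring.center C, ∃ η : C →ₗ[R] C,
              (∀ a, η a ∈ Subring.center C) ∧ ∀ a, f a = z * a + η a) :
    ∃ z ∈ Subring.center A, ∃ z' ∈ Subring.center C, (∀ m : M, z • m = z' • m) ∧
    ∃ μ : T →ₗ[R] A, ∃ μ' : T →ₗ[R] C,
    (∀ a, μ a ∈ Subring.center A) ∧ (∀ a, μ' a ∈ Subring.center C) ∧
    (∀ x (m : M), μ x • m = μ' x • m) ∧ ∀ x, ∃ ν ∈ Subring.center A, ∃ ν' ∈ Subring.center C,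
      (∀ m : M, ν • m = ν' • m) ∧
      S.f x x = z * S.pA x * S.pA x + μ x * S.pA x + ν ∧
      S.k x x = z' * S.pC x * S.pC x + μ' x * S.pC x + ν' ∧
      S.g x x = z • S.pA x • S.pM x + z' • S.pC x • S.pM x + μ x • S.pM x := by
  obtain ⟨z, hz, z', hz', hzz, μ, μ', h1, h2, h3, h4⟩ := S.swap.core hp
  refine ⟨z', hz', z, hz, fun m => (hzz m).symm, μ', μ, h2, h1, fun x m => (h3 x m).symm, ?_⟩
  intro x
  obtain ⟨ν, hν, ν', hν', e1, e2, e3, e4⟩ := h4 x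
  refine ⟨ν', hν', ν, hν, fun m => (e1 m).symm, e3, e2, ?_⟩
  rw [← h3]
  refine Eq.trans e4 ?_
  rw [add_comm (z • _)]
  rfl

end Tri

namespace GMA
variable {R A B M N G : Type*} [CommRing R]
    [Ring A] [Algebra R A] [Ring B] [Algebra R B]
    [AddCommGroup M] [Module R M] [AddCommGroup N] [Module R N]
    [Ring G] [Algebra R G]

def aL (h : GMA R A B M N G) (a : A) (m : M) : M := h.pM (h.ιA a * h.ιM m)
def aR (h : GMA R A B M N G) (b : B) (m : M) : M := h.pM (h.ιM m * h.ιB b)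

theorem ι_aL (h : GMA R A B M N G) (a : A) (m : M) : h.ιM (h.aL a m) = h.ιA a * h.ιM m := by
  obtain ⟨n, hn⟩ := h.mul_AM a m
  rw [aL, ← hn, h.pM_ιM]

theorem ι_aR (h : GMA R A B M N G) (b : B) (m : M) : h.ιM (h.aR b m) = h.ιM m * h.ιB b := by
  obtain ⟨n, hn⟩ := h.mul_MB m b
  rw [aR, ← hn, h.pM_ιM]

theorem ιM_inj (h : GMA R A B M N G) {m n : M} (e : h.ιM m = h.ιM n) : m = n := by
  rw [← h.pM_ιM m, e, h.pM_ιM]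

theorem one_M (h : GMA R A B M N G) (m : M) : h.ιA 1 * h.ιM m = h.ιM m := by
  have := one_mul (h.ιM m)
  rw [h.one_def, add_mul, h.mul_BM, add_zero] at this
  exact this

theorem M_one (h : GMA R A B M N G) (m : M) : h.ιM m * h.ιB 1 = h.ιM m := by
  have := mul_one (h.ιM m)
  rw [h.one_def, mul_add, h.mul_MA, zero_add] at this
  exact this

theorem dec3 (h : GMA R A B M N G) (hN : ∀ n : N, n = 0) (x : G) :
    x = h.ιA (h.pA x) + h.ιM (h.pM x) + h.ιB (h.pB x) := by
  have := h.decomp x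
  rw [hN (h.pN x), map_zero, add_zero] at this
  exact this

theorem ext3 (h : GMA R A B M N G) (hN : ∀ n : N, n = 0) {x y : G} (h1 : h.pA x = h.pA y)
    (h2 : h.pM x = h.pM y) (h3 : h.pB x = h.pB y) : x = y := by
  rw [h.dec3 hN x, h1, h2, h3, ← h.dec3 hN y]

theorem mul3 (h : GMA R A B M N G) (hN : ∀ n : N, n = 0) (x y : G) :
    x * y = h.ιA (h.pA x * h.pA y) + h.ιM (h.aL (h.pA x) (h.pM y) + h.aR (h.pB y) (h.pM x))
      + h.ιB (h.pB x * h.pB y) := by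
  conv_lhs => rw [h.dec3 hN x, h.dec3 hN y]
  simp only [add_mul, mul_add, h.mul_AA, h.mul_BB, h.mul_AB, h.mul_BA, h.mul_MA, h.mul_BM, h.mul_MM,
    map_add, ι_aL, ι_aR]
  abel

theorem pA_mul (h : GMA R A B M N G) (hN : ∀ n : N, n = 0) (x y : G) :
    h.pA (x * y) = h.pA x * h.pA y := by
  rw [h.mul3 hN]; simp only [map_add h.pA, h.pA_ιA, h.pA_ιM, h.pA_ιB, add_zero]

theorem pB_mul (h : GMA R A B M N G) (hN : ∀ n : N, n = 0) (x y : G) :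
    h.pB (x * y) = h.pB x * h.pB y := by
  rw [h.mul3 hN]; simp only [map_add h.pB, h.pB_ιA, h.pB_ιM, h.pB_ιB, zero_add]

theorem pM_mul (h : GMA R A B M N G) (hN : ∀ n : N, n = 0) (x y : G) :
    h.pM (x * y) = h.aL (h.pA x) (h.pM y) + h.aR (h.pB y) (h.pM x) := by
  rw [h.mul3 hN]; simp only [map_add h.pM, h.pM_ιA, h.pM_ιM, h.pM_ιB, zero_add, add_zero]

abbrev modL (h : GMA R A B M N G) : Module A M where
  smul := h.aL
  one_smul m := h.ιM_inj (by change h.ιM (h.aL 1 m) = _; rw [ι_aL, one_M])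
  mul_smul a b m := h.ιM_inj (by
    change h.ιM (h.aL (a * b) m) = h.ιM (h.aL a (h.aL b m))
    rw [ι_aL, ι_aL, ι_aL, ← mul_assoc, h.mul_AA])
  smul_zero a := by change h.aL a 0 = 0; simp [aL]
  smul_add a m n := by change h.aL a (m + n) = h.aL a m + h.aL a n; simp [aL, mul_add]
  add_smul a b m := by change h.aL (a + b) m = h.aL a m + h.aL b m; simp [aL, add_mul]
  zero_smul m := by change h.aL 0 m = 0; simp [aL]

abbrev modR (h : GMA R A B M N G) : Module Bᵐᵒᵖ M where
  smul b m := h.aR b.unop m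
  one_smul m := h.ιM_inj (by change h.ιM (h.aR 1 m) = _; rw [ι_aR, M_one])
  mul_smul a b m := h.ιM_inj (by
    change h.ιM (h.aR (b.unop * a.unop) m) = h.ιM (h.aR a.unop (h.aR b.unop m))
    rw [ι_aR, ι_aR, ι_aR, mul_assoc, h.mul_BB])
  smul_zero a := by change h.aR a.unop 0 = 0; simp [aR]
  smul_add a m n := by
    change h.aR a.unop (m + n) = h.aR a.unop m + h.aR a.unop n; simp [aR, add_mul]
  add_smul a b m := by
    change h.aR (a.unop + b.unop) m = h.aR a.unop m + h.aR b.unop m; simp [aR, mul_add]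
  zero_smul m := by change h.aR 0 m = 0; simp [aR]

theorem cen (h : GMA R A B M N G) (hN : ∀ n : N, n = 0) {a : A} {b : B}
    (ha : a ∈ Subring.center A) (hb : b ∈ Subring.center B) (hab : ∀ m, h.aL a m = h.aR b m) :
    h.ιA a + h.ιB b ∈ Subring.center G := by
  rw [Subring.mem_center_iff]
  intro x
  have z1 : ∀ a, h.aL a 0 = 0 := fun a => by simp [aL]
  have z2 : ∀ a, h.aR a 0 = 0 := fun a => by simp [aR]
  apply h.ext3 hN <;>
  simp only [h.pA_mul hN, h.pM_mul hN, h.pB_mul hN, map_add, h.pA_ιA, h.pA_ιB, h.pM_ιA, h.pM_ιB,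
    h.pB_ιA, h.pB_ιB, add_zero, zero_add, Subring.mem_center_iff.1 ha, Subring.mem_center_iff.1 hb,
    z1, z2, hab]

theorem cenM (h : GMA R A B M N G) (hN : ∀ n : N, n = 0) {t : G} (ht : t ∈ Subring.center G)
    (m : M) : h.aL (h.pA t) m = h.aR (h.pB t) m := by
  have z1 : ∀ a, h.aL a 0 = 0 := fun a => by simp [aL]
  have z2 : ∀ a, h.aR a 0 = 0 := fun a => by simp [aR]
  have z3 : ∀ m, h.aL 0 m = 0 := fun a => by simp [aL]
  have z4 : ∀ m, h.aR 0 m = 0 := fun a => by simp [aR]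
  have := congrArg h.pM (Subring.mem_center_iff.1 ht (h.ιM m))
  simp only [h.pM_mul hN, h.pA_ιM, h.pM_ιM, h.pB_ιM, z3, z4, zero_add, add_zero] at this
  exact this.symm

theorem trace [Invertible (2 : R)] (h : GMA R A B M N G) (hN : ∀ n : N, n = 0)
    (h1 : (∀ f : A →ₗ[R] A, (∀ a, f a * a = a * f a) →
            ∃ z ∈ Subring.center A, ∃ η : A →ₗ[R] A,
              (∀ a, η a ∈ Subring.center A) ∧ ∀ a, f a = z * a + η a) ∨
          (∀ f : B →ₗ[R] B, (∀ b, f b * b = b * f b) →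
            ∃ z ∈ Subring.center B, ∃ η : B →ₗ[R] B,
              (∀ b, η b ∈ Subring.center B) ∧ ∀ b, f b = z * b + η b))
    (h2A : h.pA '' (Subring.center G : Set G) = (Subring.center A : Set A))
    (h2A' : (Subring.center A : Set A) ≠ Set.univ)
    (h2B : h.pB '' (Subring.center G : Set G) = (Subring.center B : Set B))
    (h2B' : (Subring.center B : Set B) ≠ Set.univ)
    (h4 : ∀ (a : A) (b : B),
            (∀ m : M, h.ιA a * h.ιM m * h.ιB b = 0) → a = 0 ∨ b = 0)
    (β : G →ₗ[R] G →ₗ[R] G) (hs : ∀ x y, β x y = β y x)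
    (hb1 : ∀ x, β x x * x = x * β x x)
    (hb3 : ∀ x y w, (β x y * w - w * β x y) + (β y w * x - x * β y w)
      + (β w x * y - y * β w x) = 0) :
    ∃ z ∈ Subring.center G, ∃ μ : G →ₗ[R] G, (∀ x, μ x ∈ Subring.center G) ∧
      ∀ x, ∃ ν ∈ Subring.center G, β x x = z * x * x + μ x * x + ν := by
  let _ := h.modL
  let _ := h.modR
  have sL : ∀ (a : A) (m : M), a • m = h.aL a m := fun _ _ => rfl
  have sR : ∀ (b : Bᵐᵒᵖ) (m : M), b • m = h.aR b.unop m := fun _ _ => rfl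
  have sR' : ∀ (b : B) (m : M), (MulOpposite.op b) • m = h.aR b m := fun _ _ => rfl
  let o : B ≃ₗ[R] Bᵐᵒᵖ := MulOpposite.opLinearEquiv R
  have ho : ∀ b, o b = MulOpposite.op b := fun _ => rfl
  have cop : ∀ b : Bᵐᵒᵖ, b ∈ Subring.center Bᵐᵒᵖ ↔ b.unop ∈ Subring.center B := by
    intro b
    rw [Subring.mem_center_iff, Subring.mem_center_iff]
    constructor
    · intro hh x
      have := congrArg MulOpposite.unop (hh (MulOpposite.op x))
      simpa using this.symm
    · intro hh x
      apply MulOpposite.unop_injective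
      simpa using (hh x.unop).symm
  have tr : ∀ a b, (∃ t ∈ Subring.center G, h.pA t = a ∧ h.pB t = b) →
      a ∈ Subring.center A ∧ MulOpposite.op b ∈ Subring.center Bᵐᵒᵖ ∧
        ∀ m : M, a • m = (MulOpposite.op b) • m := by
    rintro a b ⟨t, ht, rfl, rfl⟩
    refine ⟨?_, ?_, fun m => h.cenM hN ht m⟩
    · have : h.pA t ∈ h.pA '' (Subring.center G : Set G) := ⟨t, ht, rfl⟩
      rw [h2A] at this
      exact this
    · rw [cop]
      have : h.pB t ∈ h.pB '' (Subring.center G : Set G) := ⟨t, ht, rfl⟩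
      rw [h2B] at this
      exact this
  let S : Tri R A Bᵐᵒᵖ M G :=
    { iA := h.ιA
      iM := h.ιM
      iC := h.ιB ∘ₗ o.symm.toLinearMap
      pA := h.pA
      pM := h.pM
      pC := o.toLinearMap ∘ₗ h.pB
      AA := h.pA_ιA
      AM := h.pA_ιM
      AC := fun c => h.pA_ιB _
      MA := h.pM_ιA
      MM := h.pM_ιM
      MC := fun c => h.pM_ιB _
      CA := fun c => by simp [h.pB_ιA]
      CM := fun c => by simp [h.pB_ιM]
      CC := fun c => by simp [h.pB_ιB]
      dec := fun x => by simpa using h.dec3 hN x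
      f := β.compr₂ h.pA
      g := β.compr₂ h.pM
      k := β.compr₂ (o.toLinearMap ∘ₗ h.pB)
      fs := fun x y => by simp [hs x y]
      gs := fun x y => by simp [hs x y]
      ks := fun x y => by simp [hs x y]
      P1A := fun x => by
        have := congrArg h.pA (hb1 x)
        simpa [h.pA_mul hN] using this
      P1M := fun x => by
        have := congrArg h.pM (hb1 x)
        simpa [h.pM_mul hN, sL, sR, ho] using this
      P1C := fun x => by
        have := congrArg h.pB (hb1 x)
        simp only [h.pB_mul hN] at this
        apply MulOpposite.unop_injective
        simpa [ho] using this.symm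
      P3A := fun x y w => by
        have := congrArg h.pA (hb3 x y w)
        simpa [h.pA_mul hN] using this
      P3M := fun x y w => by
        have := congrArg h.pM (hb3 x y w)
        simp only [map_add, map_sub, map_zero, h.pM_mul hN] at this
        simp only [sL, sR, ho, LinearMap.compr₂_apply, LinearMap.comp_apply,
          LinearEquiv.coe_coe, MulOpposite.unop_op]
        rw [← this]; abel
      P3C := fun x y w => by
        have := congrArg h.pB (hb3 x y w)
        simp only [map_add, map_sub, map_zero, h.pB_mul hN] at this
        apply MulOpposite.unop_injective
        simp only [ho, LinearMap.compr₂_apply, LinearMap.comp_apply,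
          LinearEquiv.coe_coe, MulOpposite.unop_op, MulOpposite.unop_add, MulOpposite.unop_sub,
          MulOpposite.unop_mul, MulOpposite.unop_zero]
        rw [← neg_eq_zero, ← this]; abel
      rA := fun r a m => by simp [sL, aL]
      rC := fun r a m => by simp [sR, aR]
      com := fun a c m => h.ιM_inj (by rw [sL, sR, sR, sL, ι_aL, ι_aR, ι_aR, ι_aL, mul_assoc])
      loy := fun a c hh => by
        have := h4 a c.unop (fun m => by
          have := congrArg h.ιM (hh m)
          rw [sL, sR, ι_aL, ι_aR, map_zero, ← mul_assoc] at this
          exact this)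
        simpa using this
      fA := fun a hh => h.faithful_left a (fun m => by rw [← ι_aL, ← sL, hh, map_zero])
      fC := fun a hh => by
        have := h.faithful_right a.unop (fun m => by rw [← ι_aR, ← sR, hh, map_zero])
        simpa using this
      tAC := fun a ha => by
        have : a ∈ h.pA '' (Subring.center G : Set G) := by rw [h2A]; exact ha
        obtain ⟨t, ht, rfl⟩ := this
        exact ⟨_, (tr _ _ ⟨t, ht, rfl, rfl⟩).2⟩
      tCA := fun c hc => by
        have : c.unop ∈ h.pB '' (Subring.center G : Set G) := by rw [h2B]; exact (cop c).1 hc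
        obtain ⟨t, ht, e⟩ := this
        have := (tr _ _ ⟨t, ht, rfl, rfl⟩)
        rw [e] at this
        exact ⟨_, this.1, this.2.2⟩
      nA := by
        by_contra! hh
        exact h2A' (Set.eq_univ_of_forall fun x => Subring.mem_center_iff.2 fun y => hh y x)
      nC := by
        by_contra! hh
        refine h2B' (Set.eq_univ_of_forall fun x => Subring.mem_center_iff.2 fun y => ?_)
        exact congrArg MulOpposite.unop (hh (MulOpposite.op x) (MulOpposite.op y)) }
  have main : ∃ z ∈ Subring.center A, ∃ z' ∈ Subring.center Bᵐᵒᵖ, (∀ m : M, z • m = z' • m) ∧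
    ∃ μ : G →ₗ[R] A, ∃ μ' : G →ₗ[R] Bᵐᵒᵖ,
    (∀ a, μ a ∈ Subring.center A) ∧ (∀ a, μ' a ∈ Subring.center Bᵐᵒᵖ) ∧
    (∀ x (m : M), μ x • m = μ' x • m) ∧ ∀ x, ∃ ν ∈ Subring.center A, ∃ ν' ∈ Subring.center Bᵐᵒᵖ,
      (∀ m : M, ν • m = ν' • m) ∧
      S.f x x = z * S.pA x * S.pA x + μ x * S.pA x + ν ∧
      S.k x x = z' * S.pC x * S.pC x + μ' x * S.pC x + ν' ∧
      S.g x x = z • S.pA x • S.pM x + z' • S.pC x • S.pM x + μ x • S.pM x := by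
    rcases h1 with h1 | h1
    · exact S.core h1
    · refine S.core' fun f hf => ?_
      obtain ⟨z, hz, η, hη, he⟩ := h1 (o.symm.toLinearMap ∘ₗ f ∘ₗ o.toLinearMap) (fun b => by
        have := congrArg MulOpposite.unop (hf (MulOpposite.op b))
        exact this.symm)
      refine ⟨MulOpposite.op z, (cop _).2 hz, o.toLinearMap ∘ₗ η ∘ₗ o.symm.toLinearMap,
        fun b => (cop _).2 (hη _), fun b => ?_⟩
      apply MulOpposite.unop_injective
      have := he b.unop
      rw [← Subring.mem_center_iff.1 hz] at this
      exact this
  obtain ⟨z, hz, z', hz', hzz, μ, μ', hμ, hμ', hμμ, hx⟩ := main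
  refine ⟨h.ιA z + h.ιB z'.unop, h.cen hN hz ((cop _).1 hz') hzz,
    h.ιA ∘ₗ μ + h.ιB ∘ₗ o.symm.toLinearMap ∘ₗ μ', fun x => h.cen hN (hμ x) ((cop _).1 (hμ' x)) (hμμ x),
    fun x => ?_⟩
  obtain ⟨ν, hν, ν', hν', e1, e2, e3, e4⟩ := hx x
  have e3' := congrArg MulOpposite.unop e3
  change h.pA (β x x) = z * h.pA x * h.pA x + μ x * h.pA x + ν at e2
  change h.pB (β x x) = h.pB x * (h.pB x * z'.unop) + h.pB x * (μ' x).unop + ν'.unop at e3'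
  change h.pM (β x x) = z • h.pA x • h.pM x + z' • (o (h.pB x)) • h.pM x + μ x • h.pM x at e4
  have z1 : ∀ a, h.aL a 0 = 0 := fun a => by simp [aL]
  have z2 : ∀ a, h.aR a 0 = 0 := fun a => by simp [aR]
  have q1 := Subring.mem_center_iff.1 ((cop _).1 hz')
  have q2 := Subring.mem_center_iff.1 ((cop _).1 (hμ' x))
  have ho' : ∀ b : Bᵐᵒᵖ, o.symm b = b.unop := fun _ => rfl
  refine ⟨_, h.cen hN hν ((cop _).1 hν') e1, ?_⟩
  apply h.ext3 hN
  · rw [e2]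
    simp only [h.pA_mul hN, map_add, h.pA_ιA, h.pA_ιB, add_zero, LinearMap.add_apply,
      LinearMap.comp_apply]
  · rw [e4]
    simp only [h.pM_mul hN, h.pA_mul hN, h.pB_mul hN, map_add, h.pA_ιA, h.pA_ιB, h.pM_ιA, h.pM_ιB,
      h.pB_ιA, h.pB_ιB, add_zero, zero_add, LinearMap.add_apply, z2,
      LinearMap.comp_apply, ← sL, ← sR', ← ho, smul_zero, mul_smul]
    congr 2
    rw [← hzz, S.com z]
  · rw [e3']
    simp only [h.pB_mul hN, map_add, h.pB_ιA, h.pB_ιB, add_zero, zero_add, LinearMap.add_apply,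
      LinearMap.comp_apply, LinearEquiv.coe_coe, ho']
    rw [q1, q2, ← mul_assoc, q1]

end GMA

section stage2
variable {R T T' : Type*} [CommRing R] [Invertible (2 : R)] [Ring T] [Algebra R T]
  [Ring T'] [Algebra R T']

theorem cen_smul (r : R) {x : T'} (hx : x ∈ Subring.center T') : r • x ∈ Subring.center T' := by
  rw [Subring.mem_center_iff] at hx ⊢
  intro y
  rw [mul_smul_comm, hx, smul_mul_assoc]

theorem cen_half (R : Type*) [CommRing R] [Invertible (2 : R)] [Algebra R T'] {x : T'}
    (hx : x + x ∈ Subring.center T') : x ∈ Subring.center T' := by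
  have := cen_smul (⅟2 : R) hx
  rwa [smul_add, ← add_smul, invOf_two_add_invOf_two, one_smul] at this

structure Good (T' : Type*) [Ring T'] where
  P : T'
  P2 : T'
  Q : T'
  Q2 : T'
  e : T'
  dom : ∀ z ∈ Subring.center T', ∀ w ∈ Subring.center T', z * w = 0 → z = 0 ∨ w = 0
  hP : ∀ z ∈ Subring.center T', z * (P * P2 - P2 * P) = 0 → z = 0
  hQ : ∀ z ∈ Subring.center T', z * (Q * Q2 - Q2 * Q) = 0 → z = 0
  QP : Q * P2 = P2 * Q
  PQ : P * Q2 = Q2 * P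
  eP : e * P = P * e
  eP2 : e * P2 = P2 * e
  hW : ∀ t ∈ Subring.center T', (∀ W, t * (e * (W * (P * P2 - P2 * P) - (P * P2 - P2 * P) * W)
    - (W * (P * P2 - P2 * P) - (P * P2 - P2 * P) * W) * e) = 0) → t = 0

theorem two_terms {c d X Y Y2 : T'} (hc : c ∈ Subring.center T') (hd : d ∈ Subring.center T')
    (h : c * X - d * Y ∈ Subring.center T') (hY : Y * Y2 = Y2 * Y) :
    c * (X * Y2 - Y2 * X) = 0 := by
  have h1 := Subring.mem_center_iff.1 h Y2
  have h2 := Subring.mem_center_iff.1 hc Y2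
  have h3 := Subring.mem_center_iff.1 hd Y2
  linear_combination (norm := noncomm_ring) (-1 : ℤ) • h1 + h2 * X - h3 * Y + d * hY

theorem IV (H : Good T') (l : T ≃ₗ[R] T') (c d : T → T → T')
    (hc : ∀ x y, c x y ∈ Subring.center T') (hd : ∀ x y, d x y ∈ Subring.center T')
    (h : ∀ x y w, c x w * l y - d w y * l x ∈ Subring.center T') (x w : T) : c x w = 0 := by
  have h1 : ∀ w, d w (l.symm H.P) = 0 := by
    intro w
    have := h (l.symm H.Q) (l.symm H.P) w
    rw [l.apply_symm_apply, l.apply_symm_apply, ← neg_mem_iff, neg_sub] at this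
    exact H.hQ _ (hd _ _) (two_terms (hd _ _) (hc _ _) this H.PQ)
  have := h x (l.symm H.P) w
  rw [h1, zero_mul, l.apply_symm_apply, ← zero_mul (1 : T')] at this
  exact H.hP _ (hc _ _) (two_terms (hc _ _) (zero_mem _) this (by simp))

theorem stage3 (H : Good T') (l : T ≃ₗ[R] T')
    (hLie : ∀ x y : T, l (x * y - y * x) = l x * l y - l y * l x)
    (hI : ∀ x : T, (∀ y, x * y ∈ Subring.center T) → x = 0) (hnt : (1 : T) ≠ 0)
    (κ : T →ₗ[R] T') (hκ : ∀ x, κ x ∈ Subring.center T')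
    (m : T →ₗ[R] T') (hm : ∀ x, m x = l x + κ x)
    (hJ : (∀ x y, m (x * y + y * x) = m x * m y + m y * m x) ∨
      (∀ x y, m (x * y + y * x) = -(m x * m y + m y * m x))) :
    ∃ m : T →ₗ[R] T', ∃ nm : T →ₗ[R] T',
      (∀ x : T, l x = m x + nm x) ∧
      Function.Injective m ∧
      ((∀ x y : T, m (x * y) = m x * m y) ∨ (∀ x y : T, m (x * y) = -(m y * m x))) ∧
      (∀ x : T, nm x ∈ Subring.center T') ∧
      (∀ x y : T, nm (x * y - y * x) = 0) ∧
      ((Subring.center T' : Set T') = Set.range (algebraMap R T') →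
        Function.Surjective m) := by
  have mem := @Subring.mem_center_iff T' _
  have hcm : ∀ x y, m x * m y - m y * m x = l (x * y - y * x) := by
    intro x y
    rw [hLie, hm, hm]
    have h1 := mem.1 (hκ x) (l y)
    have h2 := mem.1 (hκ y) (l x)
    have h3 := mem.1 (hκ y) (κ x)
    linear_combination (norm := noncomm_ring) h2 - h1 + h3
  have lc : ∀ u, l u ∈ Subring.center T' → u ∈ Subring.center T := by
    intro u hu
    rw [Subring.mem_center_iff]
    intro v
    rw [← sub_eq_zero, ← l.map_eq_zero_iff, hLie, mem.1 hu, sub_self]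
  have main : ((∀ x y : T, m (x * y) = m x * m y) ∨ (∀ x y : T, m (x * y) = -(m y * m x))) ∧
      ∀ x y, κ (x * y - y * x) = 0 := by
    rcases hJ with hJ | hJ
    · have hc2 : ∀ x y, (m (x * y) - m x * m y) + (m (x * y) - m x * m y) = κ (x * y - y * x) := by
        intro x y
        have h1 := hJ x y
        have h2 := hcm x y
        have h3 := hm (x * y - y * x)
        rw [← h2] at h3
        simp only [map_add, map_sub] at h1 h3 ⊢
        linear_combination (norm := noncomm_ring) h1 + h3
      have hcc : ∀ x y, m (x * y) - m x * m y ∈ Subring.center T' := fun x y =>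
        cen_half R (by rw [hc2]; exact hκ _)
      have hz := IV H l (fun x y => m (x * y) - m x * m y) (fun x y => m (x * y) - m x * m y)
        hcc hcc (fun x y w => by
          have e1 := mem.1 (hcc w y) (m x)
          have key : (m (x * w) - m x * m w) * l y - (m (w * y) - m w * m y) * l x =
              (m (x * (w * y)) - m x * m (w * y)) - (m (x * w * y) - m (x * w) * m y)
              - (m (x * w) - m x * m w) * κ y + (m (w * y) - m w * m y) * κ x := by
            have ly : l y = m y - κ y := by rw [hm]; abel
            have lx : l x = m x - κ x := by rw [hm]; abel
            rw [ly, lx, mul_assoc x w y]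
            linear_combination (norm := noncomm_ring) e1
          simp only [key]
          exact add_mem (sub_mem (sub_mem (hcc _ _) (hcc _ _)) (mul_mem (hcc _ _) (hκ _)))
            (mul_mem (hcc _ _) (hκ _)))
      refine ⟨Or.inl fun x y => sub_eq_zero.1 (hz x y), fun x y => ?_⟩
      have := hz x y
      rw [← hc2]
      rw [this, add_zero]
    · have hc2 : ∀ x y, (m (x * y) + m y * m x) + (m (x * y) + m y * m x) = κ (x * y - y * x) := by
        intro x y
        have h1 := hJ x y
        have h2 := hcm x y
        have h3 := hm (x * y - y * x)
        rw [← h2] at h3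
        simp only [map_add, map_sub] at h1 h3 ⊢
        linear_combination (norm := noncomm_ring) h1 + h3
      have hcc : ∀ x y, m (x * y) + m y * m x ∈ Subring.center T' := fun x y =>
        cen_half R (by rw [hc2]; exact hκ _)
      have hz := IV H l (fun x y => m (x * y) + m y * m x) (fun x y => m (x * y) + m y * m x)
        hcc hcc (fun x y w => by
          have e1 := mem.1 (hcc x w) (m y)
          have key : (m (x * w) + m w * m x) * l y - (m (w * y) + m y * m w) * l x =
              (m (x * w * y) + m y * m (x * w)) - (m (x * (w * y)) + m (w * y) * m x)
              - (m (x * w) + m w * m x) * κ y + (m (w * y) + m y * m w) * κ x := by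
            have ly : l y = m y - κ y := by rw [hm]; abel
            have lx : l x = m x - κ x := by rw [hm]; abel
            rw [ly, lx, mul_assoc x w y]
            linear_combination (norm := noncomm_ring) (-1 : ℤ) • e1
          simp only [key]
          exact add_mem (sub_mem (sub_mem (hcc _ _) (hcc _ _)) (mul_mem (hcc _ _) (hκ _)))
            (mul_mem (hcc _ _) (hκ _)))
      refine ⟨Or.inr fun x y => eq_neg_of_add_eq_zero_left (hz x y), fun x y => ?_⟩
      have := hz x y
      rw [← hc2]
      rw [this, add_zero]
  obtain ⟨hom, hk⟩ := main
  have inj : Function.Injective m := by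
    rw [injective_iff_map_eq_zero]
    intro x hx
    refine hI x fun y => lc _ ?_
    have : m (x * y) = 0 := by
      rcases hom with hom | hom
      · rw [hom, hx, zero_mul]
      · rw [hom, hx, mul_zero, neg_zero]
    rw [hm, add_eq_zero_iff_eq_neg] at this
    rw [this]
    exact neg_mem (hκ _)
  refine ⟨m, -κ, fun x => by simp [hm], inj, hom, fun x => neg_mem (hκ x),
    fun x y => by simp only [LinearMap.neg_apply, hk, neg_zero], ?_⟩
  intro hcen t
  have l1 : l 1 ∈ Subring.center T' := by
    rw [mem]
    intro g
    have := hLie 1 (l.symm g)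
    rw [one_mul, mul_one, sub_self, map_zero, l.apply_symm_apply] at this
    exact (sub_eq_zero.1 this.symm).symm
  have m1 : m 1 ∈ Subring.center T' := by rw [hm]; exact add_mem l1 (hκ _)
  have m10 : m 1 ≠ 0 := fun hh => hnt (inj (by rw [hh, map_zero]))
  obtain ⟨s, hs⟩ : ∃ s : R, m (s • 1) = 1 := by
    rcases hom with hom | hom
    · have e1 := hom 1 1
      rw [one_mul] at e1
      rcases H.dom (m 1) m1 (m 1 - 1) (sub_mem m1 (one_mem _))
        (by rw [mul_sub, ← e1, mul_one, sub_self]) with e | e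
      · exact absurd e m10
      · exact ⟨1, by rw [one_smul]; exact sub_eq_zero.1 e⟩
    · have e1 := hom 1 1
      rw [one_mul] at e1
      rcases H.dom (m 1) m1 (m 1 + 1) (add_mem m1 (one_mem _))
        (by rw [mul_add, mul_one]; nth_rw 3 [e1]; simp) with e | e
      · exact absurd e m10
      · exact ⟨-1, by rw [map_smul, eq_neg_of_add_eq_zero_left e]; simp⟩
  obtain ⟨r, hr⟩ : ∃ r, algebraMap R T' r = κ (l.symm t) := by
    have : κ (l.symm t) ∈ (Subring.center T' : Set T') := hκ _
    rwa [hcen] at this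
  refine ⟨l.symm t - r • (s • 1), ?_⟩
  rw [map_sub, map_smul, hs, hm, l.apply_symm_apply, ← hr, Algebra.algebraMap_eq_smul_one]
  abel

end stage2

section stage2b
variable {R T T' : Type*} [CommRing R] [Invertible (2 : R)] [Ring T] [Algebra R T]
  [Ring T'] [Algebra R T']

theorem brk {z z' k k' X Y : T'} (hz : z ∈ Subring.center T') (hz' : z' ∈ Subring.center T')
    (hk : k ∈ Subring.center T') (hk' : k' ∈ Subring.center T') :
    (z * X + k) * (z' * Y + k') - (z' * Y + k') * (z * X + k) = z * z' * (X * Y - Y * X) := by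
  have e1 := Subring.mem_center_iff.1 hz' (z * X)
  have e2 := Subring.mem_center_iff.1 hz (z' * Y)
  have e3 := Subring.mem_center_iff.1 hz z'
  have e4 := Subring.mem_center_iff.1 hk (z' * Y + k')
  have e5 := Subring.mem_center_iff.1 hk' (z * X)
  linear_combination (norm := noncomm_ring) e1 * Y - e2 * X + e3 * (X * Y) - e4 + e5

theorem stage2 (H : Good T') (l : T ≃ₗ[R] T')
    (hLie : ∀ x y : T, l (x * y - y * x) = l x * l y - l y * l x)
    (hI : ∀ x : T, (∀ y, x * y ∈ Subring.center T) → x = 0) (hnt : (1 : T) ≠ 0)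
    (hT : ∃ x y : T, (y * y * x - x * (y * y)) * (y * x - x * y)
      - (y * x - x * y) * (y * y * x - x * (y * y)) ≠ 0)
    (z : T') (hz : z ∈ Subring.center T')
    (κ : T →ₗ[R] T') (hκ : ∀ x, κ x ∈ Subring.center T')
    (htr : ∀ y, ∃ ν ∈ Subring.center T', l (y * y) = z * l y * l y + (κ y + κ y) * l y + ν) :
    ∃ m : T →ₗ[R] T', ∃ nm : T →ₗ[R] T',
      (∀ x : T, l x = m x + nm x) ∧
      Function.Injective m ∧
      ((∀ x y : T, m (x * y) = m x * m y) ∨ (∀ x y : T, m (x * y) = -(m y * m x))) ∧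
      (∀ x : T, nm x ∈ Subring.center T') ∧
      (∀ x y : T, nm (x * y - y * x) = 0) ∧
      ((Subring.center T' : Set T') = Set.range (algebraMap R T') →
        Function.Surjective m) := by
  have mem := @Subring.mem_center_iff T' _
  let M0 : T →ₗ[R] T' := (LinearMap.mulLeft R z) ∘ₗ (l : T →ₗ[R] T') + κ
  have hM : ∀ x, M0 x = z * l x + κ x := fun x => rfl
  clear_value M0
  have J : ∀ y, M0 (y * y) - M0 y * M0 y ∈ Subring.center T' := by
    intro y
    obtain ⟨ν, hν, e⟩ := htr y
    have : M0 (y * y) - M0 y * M0 y = z * ν + κ (y * y) - κ y * κ y := by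
      rw [hM, hM, e]
      have e1 := mem.1 hz (l y)
      have e2 := mem.1 (hκ y) (l y)
      have e3 := mem.1 (hκ y) z
      linear_combination (norm := noncomm_ring) (-z) * e1 * l y - z * e2 + e3 * l y
    rw [this]
    exact sub_mem (add_mem (mul_mem hz hν) (hκ _)) (mul_mem (hκ _) (hκ _))
  let ε : T → T → T' := fun x y => M0 (x * y + y * x) - (M0 x * M0 y + M0 y * M0 x)
  have hε : ∀ x y, M0 (x * y + y * x) = ε x y + (M0 x * M0 y + M0 y * M0 x) := by
    intro x y
    simp only [ε]; abel
  have εc : ∀ x y, ε x y ∈ Subring.center T' := by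
    intro x y
    have : ε x y = (M0 ((x + y) * (x + y)) - M0 (x + y) * M0 (x + y)) - (M0 (x * x) - M0 x * M0 x)
        - (M0 (y * y) - M0 y * M0 y) := by
      simp only [ε, add_mul, mul_add, map_add]
      abel
    rw [this]
    exact sub_mem (sub_mem (J _) (J _)) (J _)
  clear_value ε
  have key : ∀ x y w, (z - z * (z * z)) * (l w * (l x * l y - l y * l x) -
      (l x * l y - l y * l x) * l w) - (ε x w * M0 y + ε x w * M0 y)
      + (ε w y * M0 x + ε w y * M0 x) ∈ Subring.center T' := by
    intro x y w
    have a1 := hε (x * w + w * x) y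
    have a2 := hε x (w * y + y * w)
    rw [hε x w] at a1
    rw [hε w y] at a2
    have a3 : M0 ((x * w + w * x) * y + y * (x * w + w * x)) -
        M0 (x * (w * y + y * w) + (w * y + y * w) * x) =
        z * (l w * (l x * l y - l y * l x) - (l x * l y - l y * l x) * l w) +
        κ (w * (x * y - y * x) - (x * y - y * x) * w) := by
      rw [← map_sub, ← hLie, ← hLie, ← hM]
      congr 1
      noncomm_ring
    have b1 : M0 x * M0 y - M0 y * M0 x = z * z * (l x * l y - l y * l x) := by
      rw [hM, hM]; exact brk hz hz (hκ _) (hκ _)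
    have b2 := brk (X := l w) (Y := l x * l y - l y * l x) hz (mul_mem hz hz) (hκ w) (zero_mem _)
    rw [add_zero, ← b1, ← hM, b1] at b2
    have c1 := mem.1 (εc x w) (M0 y)
    have c2 := mem.1 (εc w y) (M0 x)
    have fin : (z - z * (z * z)) * (l w * (l x * l y - l y * l x) -
      (l x * l y - l y * l x) * l w) - (ε x w * M0 y + ε x w * M0 y)
      + (ε w y * M0 x + ε w y * M0 x) = ε (x * w + w * x) y - ε x (w * y + y * w)
        - κ (w * (x * y - y * x) - (x * y - y * x) * w) := by
      rw [← b1] at b2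
      rw [a1, a2] at a3
      rw [sub_mul, ← b2]
      linear_combination (norm := noncomm_ring) (-1 : ℤ) • a3 + c1 - c2
    rw [fin]
    exact sub_mem (sub_mem (εc _ _) (εc _ _)) (hκ _)
  have ht : z - z * (z * z) = 0 := by
    have tc : z - z * (z * z) ∈ Subring.center T' := sub_mem hz (mul_mem hz (mul_mem hz hz))
    refine H.hW _ tc fun W => ?_
    have k1 := key (l.symm H.P) (l.symm H.P2) (l.symm W)
    rw [hM (l.symm H.P), hM (l.symm H.P2), l.apply_symm_apply, l.apply_symm_apply,
      l.apply_symm_apply] at k1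
    have k2 := mem.1 k1 H.e
    set u := ε (l.symm H.P) (l.symm W) with hu
    set v := ε (l.symm W) (l.symm H.P2) with hv
    have hec : ∀ u ∈ Subring.center T', ∀ k ∈ Subring.center T', ∀ X, H.e * X = X * H.e →
        H.e * (u * (z * X + k)) = (u * (z * X + k)) * H.e := by
      intro u hu k hk X hX
      have d1 := mem.1 hu H.e
      have d2 := mem.1 hz H.e
      have d3 := mem.1 hk H.e
      linear_combination (norm := noncomm_ring) d1 * (z * X + k) + u * d2 * X + u * z * hX + u * d3
    have d1 := hec u (εc _ _) _ (hκ (l.symm H.P2)) _ H.eP2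
    have d2 := hec v (εc _ _) _ (hκ (l.symm H.P)) _ H.eP
    have d3 := mem.1 tc H.e
    generalize z - z * (z * z) = t at *
    generalize H.P * H.P2 - H.P2 * H.P = D at *
    linear_combination (norm := noncomm_ring) k2 - d3 * (W * D - D * W) + 2 * d1 - 2 * d2
  have z0 : z ≠ 0 := by
    rintro rfl
    obtain ⟨x, y, hxy⟩ := hT
    apply hxy
    obtain ⟨ν, hν, e⟩ := htr y
    rw [← l.map_eq_zero_iff, hLie, hLie (y * y), hLie y, e]
    have f1 := mem.1 hν (l x)
    have f2 := mem.1 (hκ y) (l x)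
    have f3 := mem.1 (hκ y) (l y * l x - l x * l y)
    have f4 : (0 * l y * l y + (κ y + κ y) * l y + ν) * l x -
        l x * (0 * l y * l y + (κ y + κ y) * l y + ν) = (κ y + κ y) * (l y * l x - l x * l y) := by
      linear_combination (norm := noncomm_ring) -f1 - 2 * f2 * l y
    rw [f4]
    linear_combination (norm := noncomm_ring) -2 * f3 * (l y * l x - l x * l y)
  have hz1 : z = 1 ∨ z = -1 := by
    have : z * ((1 - z) * (1 + z)) = 0 := by
      rw [← ht]; noncomm_ring
    have c1 : 1 - z ∈ Subring.center T' := sub_mem (one_mem _) hz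
    have c2 : 1 + z ∈ Subring.center T' := add_mem (one_mem _) hz
    rcases H.dom _ hz _ (mul_mem c1 c2) this with h | h
    · exact absurd h z0
    · rcases H.dom _ c1 _ c2 h with h | h
      · exact Or.inl (sub_eq_zero.1 h).symm
      · exact Or.inr (eq_neg_of_add_eq_zero_right h)
  have hzero : ∀ x w, ε x w = 0 := by
    intro x w
    have := IV H l (fun x y => ε x y * z) (fun x y => ε x y * z) (fun x y => mul_mem (εc _ _) hz)
      (fun x y => mul_mem (εc _ _) hz) (fun x y w => by
        have k := key x y w
        rw [ht, zero_mul, zero_sub] at k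
        have k' : (ε x w * M0 y - ε w y * M0 x) + (ε x w * M0 y - ε w y * M0 x)
          ∈ Subring.center T' := by
          rw [← neg_mem_iff]
          convert k using 1
          abel
        have k2 := cen_half R k'
        have : (ε x w * z) * l y - (ε w y * z) * l x =
          (ε x w * M0 y - ε w y * M0 x) - ε x w * κ y + ε w y * κ x := by
          rw [hM, hM]; noncomm_ring
        simp only [this]
        exact add_mem (sub_mem k2 (mul_mem (εc _ _) (hκ _))) (mul_mem (εc _ _) (hκ _))) x w
    rcases H.dom _ (εc _ _) _ hz this with h | h
    · exact h
    · exact absurd h z0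
  rcases hz1 with h1 | h1
  · refine stage3 H l hLie hI hnt κ hκ M0 (fun x => by rw [hM, h1, one_mul]) (Or.inl fun x y => ?_)
    rw [hε, hzero, zero_add]
  · refine stage3 H l hLie hI hnt (-κ) (fun x => neg_mem (hκ x)) (-M0)
      (fun x => by simp [hM, h1]; try abel) (Or.inr fun x y => ?_)
    rw [LinearMap.neg_apply, hε, hzero, zero_add]
    simp

end stage2b

namespace GMA
variable {R A B M N G : Type*} [CommRing R]
    [Ring A] [Algebra R A] [Ring B] [Algebra R B]
    [AddCommGroup M] [Module R M] [AddCommGroup N] [Module R N]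
    [Ring G] [Algebra R G]

theorem fL (h : GMA R A B M N G) {a : A} (ha : ∀ m, h.aL a m = 0) : a = 0 :=
  h.faithful_left a fun m => by rw [← ι_aL, ha, map_zero]

theorem fR (h : GMA R A B M N G) {b : B} (hb : ∀ m, h.aR b m = 0) : b = 0 :=
  h.faithful_right b fun m => by rw [← ι_aR, hb, map_zero]

theorem cpM (h : GMA R A B M N G) (hN : ∀ n : N, n = 0) {t : G} (ht : t ∈ Subring.center G) :
    h.pM t = 0 := by
  have e := congrArg h.pM (Subring.mem_center_iff.1 ht (h.ιA 1))
  rw [h.pM_mul hN, h.pM_mul hN, h.pA_ιA, h.pM_ιA, h.pB_ιA] at e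
  have : h.aL 1 (h.pM t) = h.pM t := h.ιM_inj (by rw [ι_aL, one_M])
  rw [this] at e
  simpa [aL, aR] using e

theorem cA0 (h : GMA R A B M N G) (hN : ∀ n : N, n = 0) {t : G} (ht : t ∈ Subring.center G)
    (h0 : h.pA t = 0) : t = 0 := by
  have e : h.pB t = 0 := h.fR fun m => by rw [← h.cenM hN ht, h0]; simp [aL]
  rw [h.dec3 hN t, h0, e, h.cpM hN ht]; simp

theorem cB0 (h : GMA R A B M N G) (hN : ∀ n : N, n = 0) {t : G} (ht : t ∈ Subring.center G)
    (h0 : h.pB t = 0) : t = 0 := by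
  have e : h.pA t = 0 := h.fL fun m => by rw [h.cenM hN ht, h0]; simp [aR]
  exact h.cA0 hN ht e

theorem tA (h : GMA R A B M N G) (hN : ∀ n : N, n = 0)
    (h4 : ∀ (a : A) (b : B),
            (∀ m : M, h.ιA a * h.ιM m * h.ιB b = 0) → a = 0 ∨ b = 0)
    {t : G} (ht : t ∈ Subring.center G) {d : A} (hd : d ≠ 0) (e : t * h.ιA d = 0) : t = 0 := by
  rcases h4 d (h.pB t) (fun m => by
    have c := h.cenM hN ht (h.aL d m)
    rw [← ι_aL, ← ι_aR, ← c, ι_aL, ι_aL, ← mul_assoc, h.mul_AA]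
    have := congrArg h.pA e
    rw [h.pA_mul hN, h.pA_ιA, map_zero] at this
    rw [this]; simp) with e1 | e1
  · exact absurd e1 hd
  · exact h.cB0 hN ht e1

theorem tB (h : GMA R A B M N G) (hN : ∀ n : N, n = 0)
    (h4 : ∀ (a : A) (b : B),
            (∀ m : M, h.ιA a * h.ιM m * h.ιB b = 0) → a = 0 ∨ b = 0)
    {t : G} (ht : t ∈ Subring.center G) {d : B} (hd : d ≠ 0) (e : t * h.ιB d = 0) : t = 0 := by
  rcases h4 (h.pA t) d (fun m => by
    rw [← ι_aL, h.cenM hN ht, ι_aR, mul_assoc, h.mul_BB]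
    have := congrArg h.pB e
    rw [h.pB_mul hN, h.pB_ιB, map_zero] at this
    rw [this]; simp) with e1 | e1
  · exact h.cA0 hN ht e1
  · exact absurd e1 hd

theorem good (h : GMA R A B M N G) (hN : ∀ n : N, n = 0)
    (h2A' : (Subring.center A : Set A) ≠ Set.univ)
    (h2B' : (Subring.center B : Set B) ≠ Set.univ)
    (h4 : ∀ (a : A) (b : B),
            (∀ m : M, h.ιA a * h.ιM m * h.ιB b = 0) → a = 0 ∨ b = 0) : Nonempty (Good G) := by
  rw [Set.ne_univ_iff_exists_notMem] at h2A' h2B'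
  obtain ⟨a, ha⟩ := h2A'
  obtain ⟨b, hb⟩ := h2B'
  rw [SetLike.mem_coe, Subring.mem_center_iff] at ha hb
  push Not at ha hb
  obtain ⟨a2, ha⟩ := ha
  obtain ⟨b2, hb⟩ := hb
  have cA : ∀ a a2, h.ιA a * h.ιA a2 - h.ιA a2 * h.ιA a = h.ιA (a * a2 - a2 * a) := by
    intro a a2; rw [h.mul_AA, h.mul_AA, map_sub]
  have cB : ∀ a a2, h.ιB a * h.ιB a2 - h.ιB a2 * h.ιB a = h.ιB (a * a2 - a2 * a) := by
    intro a a2; rw [h.mul_BB, h.mul_BB, map_sub]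
  have hd : a * a2 - a2 * a ≠ 0 := fun e => ha (sub_eq_zero.1 e).symm
  have hd' : b * b2 - b2 * b ≠ 0 := fun e => hb (sub_eq_zero.1 e).symm
  refine ⟨⟨h.ιA a, h.ιA a2, h.ιB b, h.ιB b2, h.ιA 1, ?_, ?_, ?_, ?_, ?_, ?_, ?_, ?_⟩⟩
  · intro z hz w hw e
    have e1 := congrArg h.pA e
    rw [h.pA_mul hN, map_zero] at e1
    by_cases hA : h.pA w = 0
    · exact Or.inr (h.cA0 hN hw hA)
    · left
      rcases h4 (h.pA w) (h.pB z) (fun m => by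
        have c := h.cenM hN hz (h.aL (h.pA w) m)
        rw [← ι_aL, ← ι_aR, ← c, ι_aL, ι_aL, ← mul_assoc, h.mul_AA, e1]; simp) with q | q
      · exact absurd q hA
      · exact h.cB0 hN hz q
  · intro z hz e
    rw [cA] at e
    exact h.tA hN h4 hz hd e
  · intro z hz e
    rw [cB] at e
    exact h.tB hN h4 hz hd' e
  · rw [h.mul_AB, h.mul_BA]
  · rw [h.mul_AB, h.mul_BA]
  · rw [h.mul_AA, h.mul_AA, one_mul, mul_one]
  · rw [h.mul_AA, h.mul_AA, one_mul, mul_one]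
  · intro t ht hW
    refine h.tA hN h4 ht hd ?_
    have q : h.pA t * (a * a2 - a2 * a) = 0 := h.fL fun m => h.ιM_inj (by
      have := hW (h.ιM m)
      rw [cA, h.mul_MA, zero_sub, mul_neg, neg_mul, ← ι_aL, h.mul_MA, one_M, neg_zero, sub_zero,
        mul_neg, neg_eq_zero] at this
      have e2 := congrArg h.pM this
      rw [h.pM_mul hN, h.pM_ιM, h.pB_ιM, map_zero] at e2
      rw [ι_aL, ← h.mul_AA, mul_assoc, ← ι_aL, ← ι_aL, map_zero]
      have e3 : h.aR 0 (h.pM t) = 0 := by simp [aR]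
      rw [e3, add_zero] at e2
      rw [e2, map_zero])
    apply h.ext3 hN
    · rw [h.pA_mul hN, h.pA_ιA, q, map_zero]
    · rw [h.pM_mul hN, h.pM_ιA, h.pB_ιA, map_zero]; simp [aL, aR]
    · rw [h.pB_mul hN, h.pB_ιA, mul_zero, map_zero]

theorem hI (h : GMA R A B M N G) (hN : ∀ n : N, n = 0) (x : G)
    (hx : ∀ y, x * y ∈ Subring.center G) : x = 0 := by
  have xc : x ∈ Subring.center G := by simpa using hx 1
  refine h.cA0 hN xc (h.fL fun m => ?_)
  have := h.cpM hN (hx (h.ιM m))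
  rw [h.pM_mul hN, h.pM_ιM, h.pB_ιM] at this
  simpa [aR] using this

/-- if `a * [a, a'] * a = 0` for all `a` then `[a, a'] = 0`. -/
theorem nilp (R : Type*) {A : Type*} [CommRing R] [Invertible (2 : R)] [Ring A] [Algebra R A]
    (a' : A) (H : ∀ a : A, a * (a * a' - a' * a) * a = 0) (a : A) : a * a' - a' * a = 0 := by
  have e1 := H (a + 1)
  have e2 := H (a - 1)
  have e0 := H a
  apply half_zero R
  linear_combination (norm := noncomm_ring) e1 + e2 - 2 * e0

theorem idL {U V m : G} (mU : m * U = 0) (mV : m * V = 0) (mm : m * m = 0)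
    (hc : ∀ x y : G, (y * y * x - x * (y * y)) * (y * x - x * y)
      - (y * x - x * y) * (y * y * x - x * (y * y)) = 0) : U * (U * V - V * U) * U * m = 0 := by
  have e := hc (V + m) U
  have e' := hc V U
  have mU' : ∀ x, m * (U * x) = 0 := fun x => by rw [← mul_assoc, mU, zero_mul]
  have mV' : ∀ x, m * (V * x) = 0 := fun x => by rw [← mul_assoc, mV, zero_mul]
  have mm' : ∀ x, m * (m * x) = 0 := fun x => by rw [← mul_assoc, mm, zero_mul]
  have key : U * (U * V - V * U) * U * m =
    ((U * U * (V + m) - (V + m) * (U * U)) * (U * (V + m) - (V + m) * U)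
      - (U * (V + m) - (V + m) * U) * (U * U * (V + m) - (V + m) * (U * U))) -
    ((U * U * V - V * (U * U)) * (U * V - V * U)
      - (U * V - V * U) * (U * U * V - V * (U * U))) := by
    simp only [mul_add, add_mul, mul_sub, sub_mul, mul_assoc, mU, mV, mm, mU', mV', mm', mul_zero,
      sub_zero, zero_sub, add_zero, zero_add]
    abel
  rw [key, e, e', sub_zero]

theorem idR {U V m : G} (mU : U * m = 0) (mV : V * m = 0) (mm : m * m = 0)
    (hc : ∀ x y : G, (y * y * x - x * (y * y)) * (y * x - x * y)
      - (y * x - x * y) * (y * y * x - x * (y * y)) = 0) : m * (U * (U * V - V * U) * U) = 0 := by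
  have e := hc (V + m) U
  have e' := hc V U
  have mU' : ∀ x, U * (m * x) = 0 := fun x => by rw [← mul_assoc, mU, zero_mul]
  have mV' : ∀ x, V * (m * x) = 0 := fun x => by rw [← mul_assoc, mV, zero_mul]
  have mm' : ∀ x, m * (m * x) = 0 := fun x => by rw [← mul_assoc, mm, zero_mul]
  have key : m * (U * (U * V - V * U) * U) =
    ((U * U * (V + m) - (V + m) * (U * U)) * (U * (V + m) - (V + m) * U)
      - (U * (V + m) - (V + m) * U) * (U * U * (V + m) - (V + m) * (U * U))) -
    ((U * U * V - V * (U * U)) * (U * V - V * U)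
      - (U * V - V * U) * (U * U * V - V * (U * U))) := by
    simp only [mul_add, add_mul, mul_sub, sub_mul, mul_assoc, mU, mV, mm, mU', mV', mm', mul_zero,
      sub_zero, zero_sub, add_zero, zero_add]
    abel
  rw [key, e, e', sub_zero]

theorem hT [Invertible (2 : R)] (h : GMA R A B M N G) (hN : ∀ n : N, n = 0)
    (h3 : (∃ a a' : A, a * a' ≠ a' * a) ∨ (∃ b b' : B, b * b' ≠ b' * b)) :
    ∃ x y : G, (y * y * x - x * (y * y)) * (y * x - x * y)
      - (y * x - x * y) * (y * y * x - x * (y * y)) ≠ 0 := by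
  by_contra! hc
  rcases h3 with ⟨a, a', hne⟩ | ⟨b, b', hne⟩
  · apply hne
    refine sub_eq_zero.1 (nilp R a' (fun a => h.faithful_left _ fun m => ?_) a)
    have := idL (h.mul_MA m a) (h.mul_MA m a') (h.mul_MM m m) hc
    simpa only [h.mul_AA, ← map_sub] using this
  · apply hne
    refine sub_eq_zero.1 (nilp R b' (fun b => h.faithful_right _ fun m => ?_) b)
    have := idR (h.mul_BM b m) (h.mul_BM b' m) (h.mul_MM m m) hc
    simpa only [h.mul_BB, ← map_sub] using this

end GMA

/-- **Corollary 4.4 (Benkovič–Eremita).**  Let `T = [A M; O B]` and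
`T' = [A' M'; O B']` be triangular algebras over a commutative ring `R` with
`1/2 ∈ R` (generalized matrix algebras whose `N`-corners are zero) and let
`l : T → T'` be a Lie isomorphism.  If
(1) every commuting `R`-linear map on `A'` or on `B'` is proper,
(2) `π_{A'}(Z(T')) = Z(A') ≠ A'` and `π_{B'}(Z(T')) = Z(B') ≠ B'`,
(3) at least one of `A`, `B` is noncommutative, and
(4) `M'` is loyal,
then `l = m + n`, where `m : T → T'` is an injective homomorphism or the negative of
an injective anti-homomorphism and `n : T → Z(T')` is a linear map vanishing on each
commutator.  Moreover, if `T'` is central over `R`, then `m` is surjective. -/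
theorem stmt15 (R A B M N T A' B' M' N' T' : Type*) [CommRing R]
    [Invertible (2 : R)]
    [Ring A] [Algebra R A] [Ring B] [Algebra R B]
    [AddCommGroup M] [Module R M] [AddCommGroup N] [Module R N]
    [Ring T] [Algebra R T]
    [Ring A'] [Algebra R A'] [Ring B'] [Algebra R B']
    [AddCommGroup M'] [Module R M'] [AddCommGroup N'] [Module R N']
    [Ring T'] [Algebra R T']
    (h : GMA R A B M N T) (h' : GMA R A' B' M' N' T')
    (hN : ∀ n : N, n = 0) (hN' : ∀ n : N', n = 0)
    (l : T ≃ₗ[R] T')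
    (hLie : ∀ x y : T, l (x * y - y * x) = l x * l y - l y * l x)
    (h1 : (∀ f : A' →ₗ[R] A', (∀ a, f a * a = a * f a) →
            ∃ z ∈ Subring.center A', ∃ η : A' →ₗ[R] A',
              (∀ a, η a ∈ Subring.center A') ∧ ∀ a, f a = z * a + η a) ∨
          (∀ f : B' →ₗ[R] B', (∀ b, f b * b = b * f b) →
            ∃ z ∈ Subring.center B', ∃ η : B' →ₗ[R] B',
              (∀ b, η b ∈ Subring.center B') ∧ ∀ b, f b = z * b + η b))
    (h2A : h'.pA '' (Subring.center T' : Set T') = (Subring.center A' : Set A'))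
    (h2A' : (Subring.center A' : Set A') ≠ Set.univ)
    (h2B : h'.pB '' (Subring.center T' : Set T') = (Subring.center B' : Set B'))
    (h2B' : (Subring.center B' : Set B') ≠ Set.univ)
    (h3 : (∃ a a' : A, a * a' ≠ a' * a) ∨ (∃ b b' : B, b * b' ≠ b' * b))
    (h4 : ∀ (a : A') (b : B'),
            (∀ m : M', h'.ιA a * h'.ιM m * h'.ιB b = 0) → a = 0 ∨ b = 0) :
    ∃ m : T →ₗ[R] T', ∃ nm : T →ₗ[R] T',
      (∀ x : T, l x = m x + nm x) ∧
      Function.Injective m ∧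
      ((∀ x y : T, m (x * y) = m x * m y) ∨ (∀ x y : T, m (x * y) = -(m y * m x))) ∧
      (∀ x : T, nm x ∈ Subring.center T') ∧
      (∀ x y : T, nm (x * y - y * x) = 0) ∧
      ((Subring.center T' : Set T') = Set.range (algebraMap R T') →
        Function.Surjective m) := by
  obtain ⟨H⟩ := h'.good hN' h2A' h2B' h4
  have hTT := h.hT hN h3
  have hnt : (1 : T) ≠ 0 := by
    intro e
    obtain ⟨x, y, hxy⟩ := hTT
    exact hxy (by rw [← mul_one (_ - _), e, mul_zero])
  let s : T' →ₗ[R] T := (l.symm : T' →ₗ[R] T)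
  have ls : ∀ u, l (s u) = u := fun u => l.apply_symm_apply u
  let β : T' →ₗ[R] T' →ₗ[R] T' := LinearMap.mk₂ R (fun x y => l (s x * s y + s y * s x))
    (fun x y w => by simp only [map_add, add_mul, mul_add]; abel)
    (fun c x y => by simp only [map_smul, smul_mul_assoc, mul_smul_comm, smul_add, map_add])
    (fun x y w => by simp only [map_add, add_mul, mul_add]; abel)
    (fun c x y => by simp only [map_smul, smul_mul_assoc, mul_smul_comm, smul_add, map_add])
  have hβ : ∀ x y, β x y = l (s x * s y + s y * s x) := fun _ _ => rfl
  have hcomm : ∀ x w, l x * w - w * l x = l (x * s w - s w * x) := by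
    intro x w
    rw [hLie, ls]
  obtain ⟨zt, hzt, μ, hμ, htr⟩ := h'.trace hN' h1 h2A h2A' h2B h2B' h4 β
    (fun x y => by rw [hβ, hβ, add_comm])
    (fun x => by
      rw [← sub_eq_zero, hβ, hcomm, l.map_eq_zero_iff]
      noncomm_ring)
    (fun x y w => by
      rw [hβ, hβ, hβ, hcomm, hcomm, hcomm, ← map_add, ← map_add, l.map_eq_zero_iff]
      noncomm_ring)
  have half : ∀ v : T', (⅟2 : R) • (v + v) = v := fun v => by
    rw [smul_add, ← add_smul, invOf_two_add_invOf_two, one_smul]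
  refine stage2 H l hLie (h.hI hN) hnt hTT ((⅟2 : R) • zt) (cen_smul _ hzt)
    ((⅟2 : R) • (⅟2 : R) • (μ ∘ₗ (l : T →ₗ[R] T')))
    (fun x => cen_smul _ (cen_smul _ (hμ _))) (fun y => ?_)
  obtain ⟨ν, hν, e⟩ := htr (l y)
  have sl : s (l y) = y := l.symm_apply_apply y
  refine ⟨(⅟2 : R) • ν, cen_smul _ hν, ?_⟩
  rw [hβ, sl, map_add] at e
  rw [← half (l (y * y)), e]
  simp only [LinearMap.smul_apply, LinearMap.comp_apply, LinearEquiv.coe_coe]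
  rw [← smul_add, half, smul_add, smul_add, smul_mul_assoc, smul_mul_assoc, smul_mul_assoc]
end
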